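/- arXiv:2305.19816 — 5 statements merged into one kernel-verified Lean document; each statement's English description precedes it below -/
import Mathlib

section
/- Let p be a prime and let G be a finite solvable group such that every normal subgroup of G of order coprime to p is trivial (i.e. O_{p'}(G) = 1). Let P be a Sylow p-subgroup of G and suppose there is an integer a ≥ 1 such that cd(P) = {1, p^a}. Then there exists an irreducible complex character χ of G such that p divides χ(1) and the p-part of χ(1) is at most p^a. -/
open CategoryTheory

/-!
By Clifford theory, an irreducible representation lying over a linear character `μ` of a normal
subgroup has degree divisible by the index of the inertia group of `μ`. On the other hand, every
irreducible representation of a Sylow subgroup `P` lies below one of `G` whose degree is not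
divisible by `p ^ (a + 1)`. So if `G` has no degree of the desired kind and the normal subgroup is
contained in `P`, then the inertia group of `μ` contains a Sylow subgroup.

Passing to quotients, we may assume that every nontrivial normal subgroup contains `P'`. Then
`O_{p'}(G) = 1`, so `N = O_p(G)` contains its centralizer; moreover `N` is abelian, for otherwise
`N'` would be a normal subgroup of `G` inside `P'`, and `p` divides the degree of every irreducible
representation on which such a subgroup acts nontrivially. Since `P` is not abelian, some linear
character of `N` has an inertia group `T` that does not contain `P`. It contains another Sylow
subgroup, so in `G / N`, whose Sylow subgroup `Q` is abelian, the centralizer of `B = T ∩ Q` in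
`L = O_{p'}(G / N)` does not centralize `Q`. Transfer then yields a linear character of
`B M`, for a suitable normal subgroup `M ≤ L`, whose restriction to `M` is not invariant under any
Sylow subgroup above `B`. Since `p ^ (a + 1)` does not divide the index of `B`, some representation
over it has the desired degree.
-/

open Module Representation
open scoped commutatorElement

universe u

section Irreducible

variable {k G V W : Type*} [Field k] [Group G] [AddCommGroup V] [Module k V]
  [AddCommGroup W] [Module k W] {ρ : Representation k G V} {σ : Representation k G W}

lemma nontrivial_of_isIrreducible (hρ : ρ.IsIrreducible) : Nontrivial V := by
  by_contra! hV
  obtain ⟨A, B, hAB⟩ := exists_pair_ne (Subrepresentation ρ)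
  exact hAB (Subrepresentation.toSubmodule_injective (Subsingleton.elim _ _))

lemma eq_top_of_isIrreducible (hρ : ρ.IsIrreducible) {A : Submodule k V}
    (hA : ∀ g, ∀ v ∈ A, ρ g v ∈ A) (hne : A ≠ ⊥) : A = ⊤ := by
  rcases hρ.eq_bot_or_eq_top ⟨A, fun g v hv ↦ hA g v hv⟩ with h | h
  · exact absurd (congrArg Subrepresentation.toSubmodule h) hne
  · exact congrArg Subrepresentation.toSubmodule h

lemma isIrreducible_comp_of_surjective {H : Type*} [Group H] {φ : H →* G}
    (hφ : Function.Surjective φ) (hρ : ρ.IsIrreducible) :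
    IsIrreducible (ρ.comp φ : Representation k H V) where
  exists_pair_ne := by
    have := nontrivial_of_isIrreducible hρ
    exact ⟨⊥, ⊤, fun h ↦ bot_ne_top (α := Submodule k V)
      (congrArg Subrepresentation.toSubmodule h)⟩
  eq_bot_or_eq_top A := by
    refine or_iff_not_imp_left.mpr fun hA ↦ Subrepresentation.toSubmodule_injective ?_
    refine eq_top_of_isIrreducible hρ (A := A.toSubmodule) (fun g v hv ↦ ?_)
      fun h ↦ hA (Subrepresentation.toSubmodule_injective h)
    obtain ⟨h, rfl⟩ := hφ g
    exact A.apply_mem_toSubmodule h hv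

lemma apply_eq_self_of_invariants_ne_bot (hρ : ρ.IsIrreducible) {K : Subgroup G} [K.Normal]
    (hK : invariants (ρ.comp K.subtype : Representation k K V) ≠ ⊥) {x : G} (hx : x ∈ K) (v : V) :
    ρ x v = v := by
  have htop := eq_top_of_isIrreducible hρ (fun g v hv ↦ le_comap_invariants ρ K g hv) hK
  have hv : v ∈ invariants (ρ.comp K.subtype : Representation k K V) := htop ▸ Submodule.mem_top
  exact hv ⟨x, hx⟩

lemma isCompl_toSubmodule {A B : Subrepresentation ρ} (h : IsCompl A B) :
    IsCompl A.toSubmodule B.toSubmodule where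
  disjoint := disjoint_iff.mpr (congrArg Subrepresentation.toSubmodule h.inf_eq_bot)
  codisjoint := codisjoint_iff.mpr (congrArg Subrepresentation.toSubmodule h.sup_eq_top)

lemma exists_rightInverse_of_surjective [Finite G] [CharZero k] (f : IntertwiningMap ρ σ)
    (hf : Function.Surjective f) : ∃ s : IntertwiningMap σ ρ, ∀ w, f (s w) = w := by
  have : NeZero (Nat.card G : k) := ⟨Nat.cast_ne_zero.mpr Nat.card_pos.ne'⟩
  obtain ⟨s, hs⟩ := IsSemisimpleModule.lifting_property
    (IntertwiningMap.equivLinearMapAsModule ρ σ f) hf LinearMap.id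
  exact ⟨(IntertwiningMap.equivLinearMapAsModule σ ρ).symm s, fun w ↦ LinearMap.congr_fun hs w⟩

end Irreducible

section Constituent

variable {k G V : Type u} [Field k] [CharZero k] [Group G] [Finite G] [AddCommGroup V] [Module k V]
  [FiniteDimensional k V]

lemma exists_subrepresentation_not_dvd_finrank {ρ : Representation k G V} (hρ : ¬ ρ.IsIrreducible)
    {n : ℕ} (hn : ¬ n ∣ finrank k V) :
    ∃ A : Subrepresentation ρ, A ≠ ⊤ ∧ ¬ n ∣ finrank k A.toSubmodule := by
  have : NeZero (Nat.card G : k) := ⟨Nat.cast_ne_zero.mpr Nat.card_pos.ne'⟩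
  have hne : (⊥ : Subrepresentation ρ) ≠ ⊤ := fun h ↦ by
    have : finrank k (⊥ : Submodule k V) = finrank k (⊤ : Submodule k V) :=
      congrArg (fun A : Subrepresentation ρ ↦ finrank k A.toSubmodule) h
    exact hn (by rw [← finrank_top, ← this, finrank_bot]; exact dvd_zero n)
  obtain ⟨A, hA⟩ : ∃ A : Subrepresentation ρ, ¬ (A = ⊥ ∨ A = ⊤) := by
    by_contra! h
    exact hρ { exists_pair_ne := ⟨⊥, ⊤, hne⟩, eq_bot_or_eq_top := h }
  rw [not_or] at hA
  obtain ⟨B, hAB⟩ := exists_isCompl A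
  rw [← Submodule.finrank_add_eq_of_isCompl (isCompl_toSubmodule hAB)] at hn
  by_cases hnA : n ∣ finrank k A.toSubmodule
  · refine ⟨B, fun hB ↦ hA.1 ?_, fun hnB ↦ hn (dvd_add hnA hnB)⟩
    rw [← inf_top_eq A, ← hB, hAB.inf_eq_bot]
  · exact ⟨A, hA.2, hnA⟩

lemma exists_isIrreducible_not_dvd_finrank (ρ : Representation k G V) {n : ℕ}
    (hn : ¬ n ∣ finrank k V) :
    ∃ (U : FDRep k G) (f : IntertwiningMap U.ρ ρ),
      IsIrreducible U.ρ ∧ Function.Injective f ∧ ¬ n ∣ finrank k U := by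
  induction hd : finrank k V using Nat.strong_induction_on generalizing V with
  | _ d ih =>
  by_cases hρ : ρ.IsIrreducible
  · exact ⟨.of ρ, .id ρ, hρ, Function.injective_id, hn⟩
  obtain ⟨A, hAtop, hnA⟩ := exists_subrepresentation_not_dvd_finrank hρ hn
  have hlt : finrank k A.toSubmodule < d := hd ▸ Submodule.finrank_lt
    fun h ↦ hAtop (Subrepresentation.toSubmodule_injective h)
  obtain ⟨U, f, hU, hf, hnU⟩ := ih _ hlt A.toRepresentation hnA rfl
  let ι : IntertwiningMap A.toRepresentation ρ := ⟨A.toSubmodule.subtype, fun _ ↦ rfl⟩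
  exact ⟨U, ι.comp f, hU, A.toSubmodule.subtype_injective.comp hf, hnU⟩

end Constituent

section Coinduction

/-- A vector of the representation coinduced from `S` is determined by its values on a set of
representatives of the right cosets of `S`. -/
noncomputable def coindEquivPi {k G V : Type*} [CommRing k] [Group G] [AddCommGroup V] [Module k V]
    (S : Subgroup G) (σ : Representation k S V) :
    coindV S.subtype σ ≃ₗ[k] (Quotient (QuotientGroup.rightRel S) → V) where
  toFun f q := f.1 q.out
  map_add' _ _ := rfl
  map_smul' _ _ := rfl
  invFun v := ⟨fun g ↦ σ ⟨g * (⟦g⟧ : Quotient (QuotientGroup.rightRel S)).out⁻¹,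
      QuotientGroup.rightRel_apply.mp (Quotient.mk_out g)⟩ (v ⟦g⟧), by
    rw [mem_coindV]
    intro s g
    have hq : (⟦s.1 * g⟧ : Quotient (QuotientGroup.rightRel S)) = ⟦g⟧ :=
      Quotient.sound (QuotientGroup.rightRel_apply.mpr (by simp))
    rw [← Module.End.mul_apply, ← map_mul]
    simp only [Subgroup.subtype_apply, hq]
    congr 2
    ext
    simp [mul_assoc]⟩
  left_inv f := by
    ext g
    simp only
    rw [← (mem_coindV _ _ _).mp f.2]
    simp
  right_inv v := by
    ext q
    have hone : (⟨q.out * q.out⁻¹, by simp⟩ : S) = 1 := by ext; simp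
    simp only [Quotient.out_eq, hone, map_one, Module.End.one_apply]

section Finrank

variable {k G V : Type*} [Field k] [Group G] [Finite G] [AddCommGroup V] [Module k V]
  [FiniteDimensional k V] (S : Subgroup G) (σ : Representation k S V)

lemma finiteDimensional_coindV : FiniteDimensional k (coindV S.subtype σ) :=
  Module.Finite.equiv (coindEquivPi S σ).symm

lemma finrank_coindV : finrank k (coindV S.subtype σ) = S.index * finrank k V := by
  have := Fintype.ofFinite (Quotient (QuotientGroup.rightRel S))
  rw [(coindEquivPi S σ).finrank_eq, Module.finrank_pi_fintype, Finset.sum_const, smul_eq_mul,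
    Finset.card_univ, ← Nat.card_eq_fintype_card,
    Nat.card_congr (QuotientGroup.quotientRightRelEquivQuotientLeftRel S), Subgroup.index]

end Finrank

lemma exists_isIrreducible_over {k G V : Type u} [Field k] [CharZero k] [Group G] [Finite G]
    [AddCommGroup V] [Module k V] [FiniteDimensional k V] {S : Subgroup G}
    {σ : Representation k S V} (hσ : σ.IsIrreducible) {n : ℕ}
    (hn : ¬ n ∣ S.index * finrank k V) :
    ∃ (U : FDRep k G) (f : IntertwiningMap σ (U.ρ.comp S.subtype)),
      IsIrreducible U.ρ ∧ Function.Injective f ∧ ¬ n ∣ finrank k U := by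
  have := finiteDimensional_coindV S σ
  obtain ⟨U, j, hU, hj, hnU⟩ :=
    exists_isIrreducible_not_dvd_finrank (coind S.subtype σ) (by rwa [finrank_coindV S σ])
  have hjapply (g : G) (u : U) : (j (U.ρ g u)).1 1 = (j u).1 g := by
    rw [j.isIntertwining]
    exact congrArg (j u).1 (one_mul g)
  let evalOne : IntertwiningMap (U.ρ.comp S.subtype : Representation k S U) σ :=
    (LinearMap.proj 1 ∘ₗ (coindV S.subtype σ).subtype ∘ₗ
      j.toLinearMap).intertwiningMap_of_isIntertwiningMap _ _ fun s u ↦ by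
        have hs := (mem_coindV _ _ _).mp (j u).2 s 1
        rw [mul_one] at hs
        exact (hjapply s u).trans hs
  have hne : evalOne ≠ 0 := by
    intro h0
    have := nontrivial_of_isIrreducible hU
    obtain ⟨u, hu⟩ := exists_ne (0 : U)
    refine hu (hj (Subtype.ext (funext fun g ↦ ?_)))
    rw [map_zero, ← hjapply]
    exact DFunLike.congr_fun h0 (U.ρ g u)
  obtain ⟨s, hs⟩ := exists_rightInverse_of_surjective evalOne
    ((hσ.surjective_or_eq_zero evalOne).resolve_right hne)
  exact ⟨U, s, hU, Function.LeftInverse.injective hs, hnU⟩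

end Coinduction

section WeightSpace

variable {k G V : Type*} [Field k] [Group G] [AddCommGroup V] [Module k V]
  (ρ : Representation k G V)

/-- The subspace on which a subgroup `S` acts through its linear character `μ`. The representation
`ρ` lies over `μ` when this space is nonzero. -/
def weightSpace {S : Subgroup G} (μ : S →* kˣ) : Submodule k V :=
  ⨅ s : S, Module.End.eigenspace (ρ s) (μ s : k)

variable {ρ}

lemma mem_weightSpace {S : Subgroup G} {μ : S →* kˣ} {v : V} :
    v ∈ weightSpace ρ μ ↔ ∀ s : S, ρ s v = (μ s : k) • v := by
  simp only [weightSpace, Submodule.mem_iInf, Module.End.mem_eigenspace_iff]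

lemma weightSpace_le_comp_inclusion {S T : Subgroup G} (hST : S ≤ T) (μ : T →* kˣ) :
    weightSpace ρ μ ≤ weightSpace ρ (μ.comp (Subgroup.inclusion hST)) :=
  fun _ hv ↦ mem_weightSpace.mpr fun s ↦ mem_weightSpace.mp hv ⟨s, hST s.2⟩

lemma weightSpace_ne_bot_of_le {S T : Subgroup G} (hST : S ≤ T) {μ : T →* kˣ}
    (hμ : weightSpace ρ μ ≠ ⊥) : weightSpace ρ (μ.comp (Subgroup.inclusion hST)) ≠ ⊥ :=
  ne_bot_of_le_ne_bot hμ (weightSpace_le_comp_inclusion hST μ)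

lemma iSupIndep_weightSpace (ρ : Representation k G V) (S : Subgroup G) :
    iSupIndep fun μ : S →* kˣ ↦ weightSpace ρ μ := by
  have dedekind : LinearIndependent k fun (μ : S →* kˣ) (s : S) ↦ (μ s : k) :=
    (linearIndependent_monoidHom S k).comp (fun μ : S →* kˣ ↦ (Units.coeHom k).comp μ)
      fun μ ν h ↦ MonoidHom.ext fun s ↦ Units.ext (DFunLike.congr_fun h s)
  rw [iSupIndep_iff_finsetSum_eq_zero_imp_eq_zero]
  intro I v hv hsum μ hμ
  refine (forall_dual_apply_eq_zero_iff k _).mp fun f ↦ ?_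
  refine linearIndependent_iff'.mp dedekind I (fun ν ↦ f (v ν)) (funext fun s ↦ ?_) μ hμ
  have hs : f (ρ s (∑ ν ∈ I, v ν)) = 0 := by rw [hsum, map_zero, map_zero]
  rw [map_sum, map_sum] at hs
  rw [Finset.sum_apply, Pi.zero_apply, ← hs]
  refine Finset.sum_congr rfl fun ν hν ↦ ?_
  rw [mem_weightSpace.mp (hv ν hν) s, map_smul, Pi.smul_apply, smul_eq_mul, smul_eq_mul, mul_comm]

end WeightSpace

section Inertia

variable {G A : Type*} [Group G] [CommGroup A] {M : Subgroup G} [M.Normal]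

/-- The conjugation action of `G` on the linear characters of a normal subgroup:
`(g • μ) m = μ (g⁻¹ * m * g)`. -/
@[reducible]
def conjCharMulAction : MulAction G (M →* A) where
  smul g μ := μ.comp (MulAut.conjNormal g⁻¹).toMonoidHom
  one_smul μ := by
    change μ.comp _ = μ
    ext; simp
  mul_smul g h μ := by
    change μ.comp _ = (μ.comp _).comp _
    ext; simp

attribute [local instance] conjCharMulAction

lemma conjChar_smul_apply (g : G) (μ : M →* A) (m : M) :
    (g • μ) m = μ (MulAut.conjNormal g⁻¹ m) := rfl

/-- The inertia group of a linear character of a normal subgroup. -/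
def inertia (μ : M →* A) : Subgroup G := MulAction.stabilizer G μ

lemma mem_inertia {μ : M →* A} {g : G} :
    g ∈ inertia μ ↔ ∀ m, μ (MulAut.conjNormal g m) = μ m := by
  rw [← inv_mem_iff, inertia, MulAction.mem_stabilizer_iff, DFunLike.ext_iff]
  simp only [conjChar_smul_apply, inv_inv]

lemma le_inertia_comp_inclusion {X : Subgroup G} (hMX : M ≤ X) (l : X →* A) :
    X ≤ inertia (l.comp (Subgroup.inclusion hMX)) := by
  refine fun x hx ↦ mem_inertia.mpr fun m ↦ ?_
  have hconj : Subgroup.inclusion hMX (MulAut.conjNormal x m) =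
      ⟨x, hx⟩ * Subgroup.inclusion hMX m * ⟨x, hx⟩⁻¹ := rfl
  simp only [MonoidHom.comp_apply, hconj, map_mul, map_inv, mul_inv_cancel_comm]

lemma le_inertia (μ : M →* A) : M ≤ inertia μ :=
  le_inertia_comp_inclusion le_rfl μ

variable {k V : Type*} [Field k] [AddCommGroup V] [Module k V] {ρ : Representation k G V}

lemma apply_mem_weightSpace_smul {μ : M →* kˣ} {v : V} (hv : v ∈ weightSpace ρ μ) (g : G) :
    ρ g v ∈ weightSpace ρ (g • μ) := by
  refine mem_weightSpace.mpr fun m ↦ ?_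
  have hcomm : (m : G) * g = g * (MulAut.conjNormal g⁻¹ m : M) := by
    simp [mul_assoc]
  rw [← Module.End.mul_apply, ← map_mul, hcomm, map_mul, Module.End.mul_apply,
    mem_weightSpace.mp hv, map_smul, conjChar_smul_apply]

lemma map_weightSpace (g : G) (μ : M →* kˣ) :
    (weightSpace ρ μ).map (ρ g) = weightSpace ρ (g • μ) := by
  refine le_antisymm (Submodule.map_le_iff_le_comap.mpr
    fun v hv ↦ apply_mem_weightSpace_smul hv g) fun v hv ↦ ⟨ρ g⁻¹ v, ?_, by simp⟩
  simpa using apply_mem_weightSpace_smul hv g⁻¹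

lemma finrank_weightSpace_smul (g : G) (μ : M →* kˣ) :
    finrank k (weightSpace ρ (g • μ)) = finrank k (weightSpace ρ μ) := by
  rw [← map_weightSpace]
  exact (Submodule.equivMapOfInjective (ρ g) (ρ.apply_bijective g).injective _).finrank_eq.symm

lemma iSup_weightSpace_orbit_eq_top (hρ : ρ.IsIrreducible) {μ : M →* kˣ}
    (hμ : weightSpace ρ μ ≠ ⊥) :
    ⨆ ν : MulAction.orbit G μ, weightSpace ρ (ν : M →* kˣ) = ⊤ := by
  refine eq_top_of_isIrreducible hρ (fun g v hv ↦ ?_) (ne_bot_of_le_ne_bot hμ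
    (le_iSup (fun ν : MulAction.orbit G μ ↦ weightSpace ρ (ν : M →* kˣ))
      ⟨μ, MulAction.mem_orbit_self μ⟩))
  have hmap : (⨆ ν : MulAction.orbit G μ, weightSpace ρ (ν : M →* kˣ)).map (ρ g) ≤
      ⨆ ν : MulAction.orbit G μ, weightSpace ρ (ν : M →* kˣ) := by
    rw [Submodule.map_iSup]
    refine iSup_le fun ν ↦ ?_
    rw [map_weightSpace]
    exact le_iSup (fun ν : MulAction.orbit G μ ↦ weightSpace ρ (ν : M →* kˣ)) (g • ν)
  exact hmap ⟨v, hv, rfl⟩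

theorem index_inertia_dvd_finrank [Finite G] [FiniteDimensional k V] (hρ : ρ.IsIrreducible)
    {μ : M →* kˣ} (hμ : weightSpace ρ μ ≠ ⊥) : (inertia μ).index ∣ finrank k V := by
  classical
  have := Fintype.ofFinite (MulAction.orbit G μ)
  have hinternal : DirectSum.IsInternal
      fun ν : MulAction.orbit G μ ↦ weightSpace ρ (ν : M →* kˣ) :=
    DirectSum.isInternal_submodule_of_iSupIndep_of_iSup_eq_top
      ((iSupIndep_weightSpace ρ M).comp Subtype.val_injective)
      (iSup_weightSpace_orbit_eq_top hρ hμ)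
  have hsum : finrank k V = ∑ ν : MulAction.orbit G μ, finrank k (weightSpace ρ (ν : M →* kˣ)) := by
    rw [← (LinearEquiv.ofBijective (DirectSum.coeLinearMap _) hinternal).finrank_eq,
      finrank_directSum]
  have hconst (ν : MulAction.orbit G μ) :
      finrank k (weightSpace ρ (ν : M →* kˣ)) = finrank k (weightSpace ρ μ) := by
    obtain ⟨_, g, rfl⟩ := ν
    exact finrank_weightSpace_smul g μ
  rw [hsum, Finset.sum_congr rfl fun ν _ ↦ hconst ν, Finset.sum_const, Finset.card_univ,
    ← Nat.card_eq_fintype_card, Nat.card_coe_set_eq, ← MulAction.index_stabilizer]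
  exact Dvd.intro _ rfl

end Inertia

section LinearCharacter

lemma exists_monoidHom_units_apply_ne_one (k : Type*) {G : Type*} [Field k] [IsAlgClosed k]
    [CharZero k] [Group G] [Finite G] {g : G} (hg : g ∉ commutator G) :
    ∃ μ : G →* kˣ, μ g ≠ 1 := by
  have hne : Abelianization.of g ≠ 1 := fun h ↦
    hg (by rw [← Abelianization.ker_of]; exact h)
  obtain ⟨φ, hφ⟩ :=
    CommGroup.exists_apply_ne_one_of_hasEnoughRootsOfUnity (Abelianization G) k hne
  exact ⟨φ.comp Abelianization.of, hφ⟩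

lemma exists_monoidHom_units_apply_ne_one_of_isMulCommutative (k : Type*) {G : Type*} [Field k]
    [IsAlgClosed k] [CharZero k] [Group G] [Finite G] [IsMulCommutative G] {g : G} (hg : g ≠ 1) :
    ∃ μ : G →* kˣ, μ g ≠ 1 := by
  open scoped IsMulCommutative in
  exact CommGroup.exists_apply_ne_one_of_hasEnoughRootsOfUnity G k hg

/-- The one-dimensional representation on which `G` acts by the linear character `μ`. -/
def linearCharRep {k G : Type*} [Field k] [Group G] (μ : G →* kˣ) : Representation k G k :=
  (Algebra.lmul k k : k →* Module.End k k).comp ((Units.coeHom k).comp μ)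

lemma isIrreducible_linearCharRep {k G : Type*} [Field k] [Group G] (μ : G →* kˣ) :
    (linearCharRep μ).IsIrreducible where
  exists_pair_ne := ⟨⊥, ⊤, fun h ↦ bot_ne_top (α := Submodule k k)
    (congrArg Subrepresentation.toSubmodule h)⟩
  eq_bot_or_eq_top A := (IsSimpleOrder.eq_bot_or_eq_top (α := Ideal k) A.toSubmodule).imp
    (fun h ↦ Subrepresentation.toSubmodule_injective h)
    fun h ↦ Subrepresentation.toSubmodule_injective h

lemma exists_isIrreducible_weightSpace_ne_bot {k G : Type u} [Field k] [CharZero k] [Group G]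
    [Finite G] {S : Subgroup G} (μ : S →* kˣ) {n : ℕ} (hn : ¬ n ∣ S.index) :
    ∃ U : FDRep k G, IsIrreducible U.ρ ∧ weightSpace U.ρ μ ≠ ⊥ ∧ ¬ n ∣ finrank k U := by
  obtain ⟨U, f, hU, hf, hnU⟩ := exists_isIrreducible_over (isIrreducible_linearCharRep μ)
    (by rwa [finrank_self, mul_one])
  refine ⟨U, hU, Submodule.ne_bot_iff _ |>.mpr ⟨f 1, mem_weightSpace.mpr fun s ↦ ?_, ?_⟩, hnU⟩
  · have hs := f.isIntertwining _ _ s 1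
    rw [← map_smul]
    exact hs.symm
  · exact (map_ne_zero_iff f hf).mpr one_ne_zero

lemma weightSpace_ne_bot_of_injective {k G V W : Type*} [Field k] [Group G] [AddCommGroup V]
    [Module k V] [AddCommGroup W] [Module k W] {ρ : Representation k G V} {S T : Subgroup G}
    (hST : S ≤ T) {σ : Representation k T W} {f : IntertwiningMap σ (ρ.comp T.subtype)}
    (hf : Function.Injective f) {μ : S →* kˣ}
    (hμ : weightSpace σ (μ.comp (Subgroup.subgroupOfEquivOfLe hST).toMonoidHom) ≠ ⊥) :
    weightSpace ρ μ ≠ ⊥ := by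
  obtain ⟨w, hw, hw0⟩ := (Submodule.ne_bot_iff _).mp hμ
  refine (Submodule.ne_bot_iff _).mpr ⟨f w, mem_weightSpace.mpr fun s ↦ ?_,
    (map_ne_zero_iff f hf).mpr hw0⟩
  have hs := mem_weightSpace.mp hw ⟨⟨s, hST s.2⟩, s.2⟩
  rw [← map_smul]
  exact (f.isIntertwining _ _ ⟨s, hST s.2⟩ w).symm.trans (congrArg f hs)

lemma apply_eq_one_of_mem_commutator {k G V : Type*} [Field k] [Group G] [AddCommGroup V]
    [Module k V] {ρ : Representation k G V} (hV : finrank k V = 1) {g : G}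
    (hg : g ∈ commutator G) : ρ g = 1 := by
  have hcomm (x y : G) : Commute (ρ x) (ρ y) := by
    obtain ⟨c, hc, -⟩ := LinearMap.existsUnique_eq_smul_id_of_finrank_eq_one hV (ρ x)
    rw [hc]
    exact (Commute.one_left (ρ y)).smul_left c
  have hker : commutator G ≤ (MonoidHom.toHomUnits ρ).ker := by
    refine Subgroup.commutator_le.mpr fun x _ y _ ↦ ?_
    rw [MonoidHom.mem_ker, map_commutatorElement, commutatorElement_eq_one_iff_commute]
    exact Units.ext (hcomm x y)
  exact congrArg Units.val (MonoidHom.mem_ker.mp (hker hg))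

end LinearCharacter

section CharDegrees

/-- The set `cd(G)` of degrees of the irreducible representations of `G` over `k`. -/
def charDegrees (k G : Type*) [Field k] [Group G] : Set ℕ :=
  {n | ∃ V : FDRep k G, Simple V ∧ finrank k V = n}

lemma isIrreducible_of_simple {k G : Type*} [Field k] [Group G] (V : FDRep k G)
    [Simple V] : IsIrreducible V.ρ where
  exists_pair_ne := by
    refine ⟨⊥, ⊤, fun h ↦ Simple.not_isZero V ?_⟩
    have : Subsingleton V := (Submodule.subsingleton_iff k).mp
      (subsingleton_of_bot_eq_top (congrArg Subrepresentation.toSubmodule h))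
    refine (Limits.IsZero.iff_id_eq_zero V).mpr ?_
    ext x
    exact Subsingleton.elim _ _
  eq_bot_or_eq_top A := by
    let ι : FDRep.of A.toRepresentation ⟶ V :=
      FDRep.forget₂HomLinearEquiv _ _ (Rep.ofHom ⟨A.toSubmodule.subtype, fun _ ↦ rfl⟩)
    have hι : Mono ι := ConcreteCategory.mono_of_injective ι Subtype.val_injective
    refine or_iff_not_imp_left.mpr fun hA ↦ Subrepresentation.toSubmodule_injective ?_
    have hιne : ι ≠ 0 := fun h ↦ hA (Subrepresentation.toSubmodule_injective
      ((Submodule.eq_bot_iff _).mpr fun v hv ↦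
        LinearMap.congr_fun (congrArg (fun f ↦ f.hom.hom.hom) h) ⟨v, hv⟩))
    have := isIso_of_mono_of_nonzero hιne
    refine eq_top_iff.mpr fun v _ ↦ ?_
    obtain ⟨a, rfl⟩ := (FDRep.isoToLinearEquiv (asIso ι)).surjective v
    exact a.2

lemma simple_of_isIrreducible {k G : Type u} [Field k] [IsAlgClosed k] [CharZero k]
    [Group G] [Finite G] {V : FDRep k G} (hV : IsIrreducible V.ρ) : Simple V := by
  have : NeZero (Nat.card G : k) := ⟨Nat.cast_ne_zero.mpr Nat.card_pos.ne'⟩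
  rw [FDRep.simple_iff_end_is_rank_one, ← (FDRep.forget₂HomLinearEquiv V V).finrank_eq,
    (Rep.homLinearEquiv _ _).finrank_eq]
  exact IsIrreducible.finrank_intertwiningMap_self V.ρ

lemma finrank_mem_charDegrees {k G : Type u} [Field k] [IsAlgClosed k] [CharZero k]
    [Group G] [Finite G] {V : FDRep k G} (hV : IsIrreducible V.ρ) :
    finrank k V ∈ charDegrees k G :=
  ⟨V, simple_of_isIrreducible hV, rfl⟩

lemma charDegrees_subset_of_surjective {k G H : Type u} [Field k] [IsAlgClosed k]
    [CharZero k] [Group G] [Finite G] [Group H] {φ : G →* H} (hφ : Function.Surjective φ) :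
    charDegrees k H ⊆ charDegrees k G := by
  rintro _ ⟨V, hV, rfl⟩
  exact finrank_mem_charDegrees (V := FDRep.of (V.ρ.comp φ))
    (isIrreducible_comp_of_surjective hφ (isIrreducible_of_simple V))

lemma exists_mem_charDegrees_relIndex_inertia_dvd {k G : Type u} [Field k] [IsAlgClosed k]
    [CharZero k] [Group G] [Finite G] {N P : Subgroup G} [N.Normal] (hNP : N ≤ P)
    (μ : N →* kˣ) : ∃ n ∈ charDegrees k P, (inertia μ).relIndex P ∣ n := by
  let μP := μ.comp (Subgroup.subgroupOfEquivOfLe hNP).toMonoidHom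
  obtain ⟨U, hU, hμ, -⟩ := exists_isIrreducible_weightSpace_ne_bot μP (n := 0)
    (by rw [Nat.zero_dvd]; exact Subgroup.index_ne_zero_of_finite)
  have hinertia : inertia μP = (inertia μ).subgroupOf P := by
    ext x
    rw [Subgroup.mem_subgroupOf, mem_inertia, mem_inertia]
    exact (Subgroup.subgroupOfEquivOfLe hNP).forall_congr_left
  refine ⟨_, finrank_mem_charDegrees hU, ?_⟩
  rw [Subgroup.relIndex, ← hinertia]
  exact index_inertia_dvd_finrank hU hμ

/-- Some irreducible degree of `G` over `k` has `p`-part at least `p` and at most `p ^ a`. -/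
def HasIntermediateDegree (k G : Type*) [Field k] [Group G] (p a : ℕ) : Prop :=
  ∃ n ∈ charDegrees k G, p ∣ n ∧ ¬ p ^ (a + 1) ∣ n

lemma HasIntermediateDegree.of_surjective {k G H : Type u} [Field k] [IsAlgClosed k]
    [CharZero k] [Group G] [Finite G] [Group H] {p a : ℕ} (h : HasIntermediateDegree k H p a)
    {φ : G →* H} (hφ : Function.Surjective φ) : HasIntermediateDegree k G p a :=
  let ⟨n, hn, hpn⟩ := h
  ⟨n, charDegrees_subset_of_surjective hφ hn, hpn⟩

end CharDegrees

section SylowDegrees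

lemma not_pow_succ_dvd_mul {p a i d : ℕ} (hp : p.Prime) (hi : ¬ p ∣ i) (hd : d ∣ p ^ a) :
    ¬ p ^ (a + 1) ∣ i * d := by
  intro h
  have hmul : p * p ^ a ∣ i * p ^ a := by
    rw [← pow_succ']
    exact h.trans (mul_dvd_mul_left i hd)
  exact hi (Nat.dvd_of_mul_dvd_mul_right (pow_pos hp.pos a) hmul)

variable {k G : Type u} [Field k] [IsAlgClosed k] [CharZero k] [Group G] [Finite G] {p a : ℕ}
  [Fact p.Prime]

lemma exists_isIrreducible_weightSpace_ne_bot_of_le_sylow {P : Sylow p G}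
    (hdeg : ∀ n ∈ charDegrees k P, n ∣ p ^ a) {S : Subgroup G} (hSP : S ≤ P) (μ : S →* kˣ) :
    ∃ U : FDRep k G, IsIrreducible U.ρ ∧ weightSpace U.ρ μ ≠ ⊥ ∧ ¬ p ^ (a + 1) ∣ finrank k U := by
  obtain ⟨U, hU, hμ, -⟩ := exists_isIrreducible_weightSpace_ne_bot
    (μ.comp (Subgroup.subgroupOfEquivOfLe hSP).toMonoidHom) (n := 0)
    (by rw [Nat.zero_dvd]; exact Subgroup.index_ne_zero_of_finite)
  have hindex : ¬ p ^ (a + 1) ∣ (P : Subgroup G).index * finrank k U :=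
    not_pow_succ_dvd_mul Fact.out P.not_dvd_index (hdeg _ (finrank_mem_charDegrees hU))
  obtain ⟨W, f, hW, hf, hnW⟩ := exists_isIrreducible_over hU hindex
  exact ⟨W, hW, weightSpace_ne_bot_of_injective hSP hf hμ, hnW⟩

lemma invariants_commutator_ne_bot {P : Subgroup G} (hdeg : ∀ n ∈ charDegrees k P, n ∣ p ^ a)
    {V : FDRep k G} (hV : ¬ p ∣ finrank k V) :
    invariants (V.ρ.comp (⁅P, P⁆ : Subgroup G).subtype : Representation k ↥⁅P, P⁆ V) ≠ ⊥ := by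
  obtain ⟨U, f, hU, hf, hpU⟩ :=
    exists_isIrreducible_not_dvd_finrank (V.ρ.comp P.subtype : Representation k P V) hV
  have hdim : finrank k U = 1 := Nat.eq_one_of_dvd_coprimes
    (((Nat.Prime.coprime_iff_not_dvd Fact.out).mpr hpU).pow_left a)
    (hdeg _ (finrank_mem_charDegrees hU)) dvd_rfl
  have := nontrivial_of_isIrreducible hU
  obtain ⟨u, hu⟩ := exists_ne (0 : U)
  refine (Submodule.ne_bot_iff _).mpr ⟨f u, fun x ↦ ?_, (map_ne_zero_iff f hf).mpr hu⟩
  obtain ⟨y, hy, hyx⟩ : (x : G) ∈ (commutator P).map P.subtype := by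
    rw [Subgroup.map_subtype_commutator]; exact x.2
  have hfy := f.isIntertwining _ _ y u
  rw [apply_eq_one_of_mem_commutator hdim hy, Module.End.one_apply] at hfy
  exact (congrArg (fun g ↦ V.ρ g (f u)) hyx).symm.trans hfy.symm

lemma hasIntermediateDegree_of_normal_le_commutator {P : Sylow p G}
    (hdeg : ∀ n ∈ charDegrees k P, n ∣ p ^ a) {K : Subgroup G} [K.Normal] (hK : K ≠ ⊥)
    (hKP : K ≤ ⁅(P : Subgroup G), (P : Subgroup G)⁆) : HasIntermediateDegree k G p a := by
  obtain ⟨x, hxK, hx⟩ := K.bot_or_exists_ne_one.resolve_left hK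
  obtain ⟨μ, hμ⟩ := exists_monoidHom_units_apply_ne_one_of_isMulCommutative k
    (g := (⟨x, Subgroup.mem_zpowers x⟩ : Subgroup.zpowers x)) (Subtype.coe_ne_coe.mp hx)
  have hxP : Subgroup.zpowers x ≤ P :=
    Subgroup.zpowers_le.mpr (Subgroup.commutator_le_self _ (hKP hxK))
  obtain ⟨U, hU, hweight, hnU⟩ := exists_isIrreducible_weightSpace_ne_bot_of_le_sylow hdeg hxP μ
  refine ⟨_, finrank_mem_charDegrees hU, by_contra fun hpU ↦ ?_, hnU⟩
  obtain ⟨v, hv, hv0⟩ := (Submodule.ne_bot_iff _).mp hweight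
  have hinvariants : invariants (U.ρ.comp K.subtype : Representation k K U) ≠ ⊥ :=
    ne_bot_of_le_ne_bot (invariants_commutator_ne_bot hdeg hpU)
      fun w hw y ↦ hw ⟨y, hKP y.2⟩
  have hfix : (μ ⟨x, Subgroup.mem_zpowers x⟩ : k) • v = v :=
    (mem_weightSpace.mp hv _).symm.trans (apply_eq_self_of_invariants_ne_bot hU hinvariants hxK v)
  exact hμ (Units.ext (smul_left_injective k hv0 (hfix.trans (one_smul k v).symm)))

end SylowDegrees

lemma isMulCommutative_iff_commutator_eq_bot {G : Type*} [Group G] {P : Subgroup G} :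
    IsMulCommutative P ↔ ⁅P, P⁆ = ⊥ := by
  rw [Subgroup.commutator_eq_bot_iff_le_centralizer, Subgroup.le_centralizer_iff_isMulCommutative]

lemma isMulCommutative_map_mk'_iff {G : Type*} [Group G] {P K : Subgroup G} [K.Normal] :
    IsMulCommutative (P.map (QuotientGroup.mk' K)) ↔ ⁅P, P⁆ ≤ K := by
  rw [isMulCommutative_iff_commutator_eq_bot, ← Subgroup.map_commutator, Subgroup.map_eq_bot_iff,
    QuotientGroup.ker_mk']

section Solvable

lemma exists_normal_and_not_commutator {G : Type*} [Group G] [Group.IsSolvable G]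
    {q : Subgroup G → Prop} {L : Subgroup G} [hL : L.Normal] (hqL : q L) (hbot : ¬ q ⊥) :
    ∃ M ≤ L, M.Normal ∧ q M ∧ ¬ q ⁅M, M⁆ := by
  by_contra! hcomm
  have hseries (n : ℕ) : ∃ M ≤ L ⊓ derivedSeries G n, M.Normal ∧ q M := by
    induction n with
    | zero => exact ⟨L, by simp, hL, hqL⟩
    | succ n ih =>
      obtain ⟨M, hM, hMn, hqM⟩ := ih
      obtain ⟨hML, hMn'⟩ := le_inf_iff.mp hM
      refine ⟨⁅M, M⁆, le_inf (M.commutator_le_self.trans hML) ?_, inferInstance,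
        hcomm M hML hMn hqM⟩
      exact Subgroup.commutator_mono hMn' hMn'
  obtain ⟨n, hn⟩ := (Group.isSolvable_def G).mp inferInstance
  obtain ⟨M, hM, -, hqM⟩ := hseries n
  rw [hn, inf_bot_eq, le_bot_iff] at hM
  exact hbot (hM ▸ hqM)

/-- `O_{p'}(G) = 1`: the group `G` has no nontrivial normal subgroup of order prime to `p`. -/
def HasTrivialPrimeToCore (p : ℕ) (G : Type*) [Group G] : Prop :=
  ∀ N : Subgroup G, N.Normal → (Nat.card N).Coprime p → N = ⊥

variable {p : ℕ} {G : Type*} [Group G] [Finite G]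

lemma isPGroup_of_isNilpotent [Fact p.Prime] (hG : HasTrivialPrimeToCore p G) {M : Subgroup G}
    [M.Normal] [Group.IsNilpotent M] : IsPGroup p M := by
  refine IsPGroup.of_card (n := (Nat.card M).primeFactorsList.length)
    (Nat.eq_prime_pow_of_unique_prime_dvd Nat.card_pos.ne' fun {q} hq hqM ↦ by_contra fun hqp ↦ ?_)
  have : Fact q.Prime := ⟨hq⟩
  let Q : Sylow q M := default
  have hQ : Q.Normal :=
    ((Group.isNilpotent_of_finite_tfae (G := M)).out 0 3 rfl rfl).mp inferInstance q this Q
  have := Q.characteristic_of_normal hQ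
  obtain ⟨n, hn⟩ := IsPGroup.iff_card.mp Q.isPGroup'
  have hcard : Nat.card ((Q : Subgroup M).map M.subtype) = q ^ n :=
    (Subgroup.card_map_of_injective M.subtype_injective).trans hn
  have hbot : (Q : Subgroup M).map M.subtype = ⊥ := hG _ inferInstance
    (hcard ▸ ((Nat.coprime_primes hq Fact.out).mpr hqp).pow_left n)
  exact Q.ne_bot_of_dvd_card hqM
    ((Subgroup.map_eq_bot_iff_of_injective _ M.subtype_injective).mp hbot)

lemma centralizer_normalCore_le [Fact p.Prime] [Group.IsSolvable G] (hG : HasTrivialPrimeToCore p G)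
    (P : Sylow p G) :
    Subgroup.centralizer ((P : Subgroup G).normalCore : Set G) ≤ (P : Subgroup G).normalCore := by
  set N := (P : Subgroup G).normalCore
  by_contra hC
  obtain ⟨M, hMC, hM, hMN, hcomm⟩ := exists_normal_and_not_commutator
    (q := fun M ↦ ¬ M ≤ N) (L := Subgroup.centralizer (N : Set G)) hC (not_not.mpr bot_le)
  rw [not_not] at hcomm
  have hnil : Group.IsNilpotent M := by
    refine Subgroup.isNilpotent_of_ker_le_center (Abelianization.of (G := M)) ?_
    rw [Abelianization.ker_of]
    refine fun x hx ↦ Subgroup.mem_center_iff.mpr fun y ↦ Subtype.ext ?_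
    have hxN : (x : G) ∈ N := hcomm (M.map_subtype_commutator ▸ Subgroup.mem_map_of_mem _ hx)
    exact (Subgroup.mem_centralizer_iff.mp (hMC y.2) x hxN).symm
  exact hMN (Subgroup.normal_le_normalCore.mpr
    ((isPGroup_of_isNilpotent hG).le_sylow_of_normal P))

lemma exists_normal_hasTrivialPrimeToCore_quotient (p : ℕ) (G : Type*) [Group G] [Finite G] :
    ∃ (L : Subgroup G) (_ : L.Normal), (Nat.card L).Coprime p ∧
      HasTrivialPrimeToCore p (G ⧸ L) := by
  obtain ⟨L, ⟨hLn, hL⟩, hmax⟩ := Set.Finite.exists_maximal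
    (Set.toFinite {L : Subgroup G | L.Normal ∧ (Nat.card L).Coprime p}) ⟨⊥, by simp⟩
  refine ⟨L, hLn, hL, fun M hM hc ↦ ?_⟩
  have hLM : L ≤ M.comap (QuotientGroup.mk' L) :=
    (QuotientGroup.ker_mk' L).ge.trans (Subgroup.ker_le_comap _ M)
  have hcard : Nat.card (M.comap (QuotientGroup.mk' L)) = Nat.card L * Nat.card M := by
    have hrel := Subgroup.relIndex_ker (K := M.comap (QuotientGroup.mk' L)) (QuotientGroup.mk' L)
    rw [Subgroup.map_comap_eq_self_of_surjective (QuotientGroup.mk'_surjective L),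
      QuotientGroup.ker_mk'] at hrel
    rw [← hrel, ← Subgroup.relIndex_bot_left L,
      Subgroup.relIndex_mul_relIndex _ _ _ bot_le hLM, Subgroup.relIndex_bot_left]
  have hle : M.comap (QuotientGroup.mk' L) ≤ L :=
    hmax ⟨hM.comap _, hcard ▸ hL.mul_left hc⟩ hLM
  rw [← Subgroup.map_comap_eq_self_of_surjective (QuotientGroup.mk'_surjective L) M,
    Subgroup.map_eq_bot_iff, QuotientGroup.ker_mk']
  exact hle

lemma normal_sup_of_isMulCommutative [Fact p.Prime] [Group.IsSolvable G] {L : Subgroup G} [L.Normal]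
    (hL : HasTrivialPrimeToCore p (G ⧸ L)) (Q : Sylow p G) [IsMulCommutative Q] :
    ((Q : Subgroup G) ⊔ L).Normal := by
  let R : Sylow p (G ⧸ L) := Q.mapSurjective (QuotientGroup.mk'_surjective L)
  have hR : (R : Subgroup (G ⧸ L)) = (Q : Subgroup G).map (QuotientGroup.mk' L) := rfl
  have hRcomm : IsMulCommutative R := hR ▸ inferInstance
  have hRcore : (R : Subgroup (G ⧸ L)) ≤ (R : Subgroup (G ⧸ L)).normalCore :=
    ((R : Subgroup (G ⧸ L)).le_centralizer.trans
      (Subgroup.centralizer_le (R : Subgroup (G ⧸ L)).normalCore_le)).trans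
        (centralizer_normalCore_le hL R)
  have hRnormal : (R : Subgroup (G ⧸ L)).Normal := by
    rw [← (R : Subgroup (G ⧸ L)).normalCore_le.antisymm hRcore]
    infer_instance
  have hcomap : (R : Subgroup (G ⧸ L)).comap (QuotientGroup.mk' L) = (Q : Subgroup G) ⊔ L := by
    rw [hR, Subgroup.comap_map_eq, QuotientGroup.ker_mk']
  exact hcomap ▸ hRnormal.comap _

end Solvable

section Sylow

variable {p : ℕ} [Fact p.Prime] {G : Type*} [Group G] [Finite G]

lemma exists_smul_eq_of_normal_sup {Q : Sylow p G} {L : Subgroup G} [L.Normal]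
    (hQL : ((Q : Subgroup G) ⊔ L).Normal) (S : Sylow p G) : ∃ l ∈ L, l • Q = S := by
  obtain ⟨g, rfl⟩ := MulAction.exists_smul_eq G Q S
  have hfrattini : L ⊔ Subgroup.normalizer (Q : Set G) = ⊤ := by
    rw [eq_top_iff, ← Q.normalizer_sup_eq_top' (N := (Q : Subgroup G) ⊔ L) le_sup_left]
    exact sup_le le_sup_right (sup_le (Subgroup.le_normalizer.trans le_sup_right) le_sup_left)
  obtain ⟨l, hl, n, hn, rfl⟩ :=
    Subgroup.mem_sup_of_normal_left.mp (hfrattini ▸ Subgroup.mem_top g)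
  exact ⟨l, hl, by rw [mul_smul, Sylow.smul_eq_iff_mem_normalizer.mpr hn]⟩

lemma exists_sylow_between {B T : Subgroup G} (hB : IsPGroup p B) (hBT : B ≤ T)
    (hT : ¬ p ∣ T.index) : ∃ S : Sylow p G, B ≤ S ∧ S ≤ T := by
  obtain ⟨S, hS⟩ := (hB.of_equiv (Subgroup.subgroupOfEquivOfLe hBT).symm).exists_le_sylow
  have hindex : ¬ p ∣ ((S : Subgroup T).map T.subtype).index := by
    rw [Subgroup.index_map_subtype]
    exact Nat.Prime.not_dvd_mul Fact.out S.not_dvd_index hT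
  exact ⟨(S.isPGroup'.map T.subtype).toSylow hindex,
    fun x hx ↦ ⟨⟨x, hBT hx⟩, hS (Subgroup.mem_subgroupOf.mpr hx), rfl⟩, Subgroup.map_subtype_le _⟩

lemma coprime_natCard_of_isPGroup {S L : Subgroup G} (hS : IsPGroup p S)
    (hL : (Nat.card L).Coprime p) : (Nat.card S).Coprime (Nat.card L) := by
  obtain ⟨n, hn⟩ := IsPGroup.iff_card.mp hS
  exact hn ▸ hL.symm.pow_left n

lemma disjoint_of_isPGroup_of_coprime {S L : Subgroup G} (hS : IsPGroup p S)
    (hL : (Nat.card L).Coprime p) : Disjoint S L :=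
  Subgroup.disjoint_of_coprime_natCard (coprime_natCard_of_isPGroup hS hL)

lemma exists_conj_mem_of_not_dvd_index {Q : Sylow p G} {L : Subgroup G} [hLn : L.Normal]
    (hL : (Nat.card L).Coprime p) (hQL : ((Q : Subgroup G) ⊔ L).Normal) {B T : Subgroup G}
    (hBQ : B ≤ Q) (hBT : B ≤ T) (hT : ¬ p ∣ T.index) :
    ∃ l ∈ L ⊓ Subgroup.centralizer (B : Set G), ∀ x ∈ Q, l * x * l⁻¹ ∈ T := by
  obtain ⟨S, hBS, hST⟩ := exists_sylow_between (Q.isPGroup'.to_le hBQ) hBT hT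
  obtain ⟨l, hl, rfl⟩ := exists_smul_eq_of_normal_sup hQL S
  have hconj {x : G} (hx : x ∈ Q) : l * x * l⁻¹ ∈ l • Q := ⟨x, hx, rfl⟩
  refine ⟨l, ⟨hl, Subgroup.mem_centralizer_iff_commutator_eq_one'.mpr fun b hb ↦ ?_⟩,
    fun x hx ↦ hST (hconj hx)⟩
  have hmemS : ⁅l, b⁆ ∈ l • Q := mul_mem (hconj (hBQ hb)) (inv_mem (hBS hb))
  have hmemL : ⁅l, b⁆ ∈ L := Subgroup.commutator_le_left L ⊤
    (Subgroup.commutator_mem_commutator hl (Subgroup.mem_top b))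
  exact Subgroup.disjoint_def.mp (disjoint_of_isPGroup_of_coprime (l • Q).isPGroup' hL) hmemS hmemL

end Sylow

section Transfer

lemma eq_one_of_mem_commutator {G : Type*} [Group G] [Finite G] {A : Subgroup G}
    [IsMulCommutative A] (hA : (Nat.card A).Coprime A.index) {d : G} (hdA : d ∈ A)
    (hcenter : d ∈ Subgroup.center G) (hcomm : d ∈ commutator G) : d = 1 := by
  open scoped IsMulCommutative in
  have hconj (n : ℕ) (g : G) (_ : g⁻¹ * d ^ n * g ∈ A) : g⁻¹ * d ^ n * g = d ^ n := by
    rw [mul_assoc, ← Subgroup.mem_center_iff.mp (pow_mem hcenter n), inv_mul_cancel_left]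
  have htransfer : (MonoidHom.id A).transfer d = 1 :=
    Abelianization.commutator_subset_ker _ hcomm
  have hpow_index : d ^ A.index = 1 :=
    congrArg Subtype.val (((MonoidHom.id A).transfer_eq_pow d hconj).symm.trans htransfer)
  exact orderOf_eq_one_iff.mp (Nat.eq_one_of_dvd_coprimes hA
    (A.orderOf_dvd_natCard hdA) (orderOf_dvd_of_pow_eq_one hpow_index))

lemma notMem_commutator_of_coprime {G : Type*} [Group G] [Finite G] {B M : Subgroup G} [M.Normal]
    (hBM : B ⊔ M = ⊤) (hcop : (Nat.card M).Coprime (Nat.card B)) {d : G} (hd : d ∈ M)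
    (hdB : d ∈ Subgroup.centralizer (B : Set G)) (hdM : d ∉ ⁅M, M⁆) : d ∉ commutator G := by
  let π := QuotientGroup.mk' ⁅M, M⁆
  have hπ : Function.Surjective π := QuotientGroup.mk'_surjective _
  have hAcomm : IsMulCommutative (M.map π) := isMulCommutative_map_mk'_iff.mpr le_rfl
  have hindex : M.index ∣ Nat.card B := by
    rw [← Subgroup.relIndex_top_right, ← hBM, Subgroup.relIndex_sup_right]
    exact M.relIndex_dvd_card B
  have hcenter : π d ∈ Subgroup.center (G ⧸ ⁅M, M⁆) := by
    have hπB : π d ∈ Subgroup.centralizer (B.map π : Set (G ⧸ ⁅M, M⁆)) :=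
      Subgroup.map_centralizer_le_centralizer_image _ π (Subgroup.mem_map_of_mem π hdB)
    have hπM : π d ∈ Subgroup.centralizer (M.map π : Set (G ⧸ ⁅M, M⁆)) :=
      (M.map π).le_centralizer (Subgroup.mem_map_of_mem π hd)
    rw [← SetLike.mem_coe, ← Set.singleton_subset_iff, ← Subgroup.centralizer_eq_top_iff_subset,
      eq_top_iff, ← Subgroup.map_top_of_surjective π hπ, ← hBM, Subgroup.map_sup]
    refine sup_le (fun x hx ↦ ?_) fun x hx ↦ ?_
    · exact Subgroup.mem_centralizer_singleton_iff.mpr (hπB x hx)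
    · exact Subgroup.mem_centralizer_singleton_iff.mpr (hπM x hx)
  refine fun hcomm ↦ hdM ((QuotientGroup.eq_one_iff d).mp
    (eq_one_of_mem_commutator (A := M.map π) ?_ (Subgroup.mem_map_of_mem π hd) hcenter ?_))
  · exact (hcop.coprime_dvd_left (M.card_map_dvd π)).coprime_dvd_right
      ((M.index_map_dvd hπ).trans hindex)
  · have hmem := Subgroup.mem_map_of_mem π hcomm
    rwa [map_commutator_eq, MonoidHom.range_eq_top.mpr hπ] at hmem

lemma exists_monoidHom_sup_apply_ne_one (k : Type*) {G : Type*} [Field k] [IsAlgClosed k]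
    [CharZero k] [Group G] [Finite G] {B M : Subgroup G} [M.Normal]
    (hcop : (Nat.card M).Coprime (Nat.card B)) {d : G} (hd : d ∈ M)
    (hdB : d ∈ Subgroup.centralizer (B : Set G)) (hdM : d ∉ ⁅M, M⁆) :
    ∃ μ : ↥(B ⊔ M) →* kˣ, μ ⟨d, Subgroup.mem_sup_right hd⟩ ≠ 1 := by
  have hB : B ≤ B ⊔ M := le_sup_left
  have hM : M ≤ B ⊔ M := le_sup_right
  refine exists_monoidHom_units_apply_ne_one k (notMem_commutator_of_coprime
    (B := B.subgroupOf (B ⊔ M)) (M := M.subgroupOf (B ⊔ M)) ?_ ?_ hd ?_ ?_)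
  · rw [← Subgroup.subgroupOf_sup hB hM, Subgroup.subgroupOf_self]
  · rwa [Nat.card_congr (Subgroup.subgroupOfEquivOfLe hB).toEquiv,
      Nat.card_congr (Subgroup.subgroupOfEquivOfLe hM).toEquiv]
  · exact fun b hb ↦ Subtype.ext (hdB b hb)
  · intro hd'
    have := Subgroup.mem_map_of_mem (B ⊔ M).subtype hd'
    rw [Subgroup.map_commutator, Subgroup.map_subgroupOf_eq_of_le hM] at this
    exact hdM this

end Transfer

section InertiaCommutator

variable {G A : Type*} [Group G] [CommGroup A] {M : Subgroup G} [M.Normal]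

lemma apply_commutatorElement_eq_one_of_mem_inertia {μ : M →* A} {g : G} (hg : g ∈ inertia μ)
    (m : M) (h : ⁅g, (m : G)⁆ ∈ M) : μ ⟨⁅g, (m : G)⁆, h⟩ = 1 := by
  have hmul : (⟨⁅g, (m : G)⁆, h⟩ : M) = MulAut.conjNormal g m * m⁻¹ := rfl
  rw [hmul, map_mul, mem_inertia.mp hg, map_inv, mul_inv_cancel]

lemma apply_commutatorElement_eq_one_of_coprime {Q : Subgroup G}
    (hcop : (Nat.card Q).Coprime (Nat.card M)) {μ : M →* A} (hQ : Q ≤ inertia μ) {c : G}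
    (hc : ∀ y ∈ Q, ⁅c, y⁆ ∈ M) {y : G} (hy : y ∈ Q) : μ ⟨⁅c, y⁆, hc y hy⟩ = 1 := by
  let ψ : Q →* A := MonoidHom.mk' (fun y ↦ μ ⟨⁅c, (y : G)⁆, hc y y.2⟩) fun y z ↦ by
    have hmul : (⟨⁅c, ((y * z : Q) : G)⁆, hc _ (y * z).2⟩ : M) =
        ⟨⁅c, (y : G)⁆, hc y y.2⟩ * MulAut.conjNormal (y : G) ⟨⁅c, (z : G)⁆, hc z z.2⟩ := by
      ext
      simp [commutatorElement_def, mul_assoc]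
    rw [hmul, map_mul, mem_inertia.mp (hQ y.2)]
  have hψ : ψ ⟨y, hy⟩ ^ Nat.card Q = 1 := by rw [← map_pow, pow_card_eq_one', map_one]
  have hμ : ψ ⟨y, hy⟩ ^ Nat.card M = 1 :=
    (map_pow μ _ _).symm.trans (by rw [pow_card_eq_one', map_one])
  exact orderOf_eq_one_iff.mp (Nat.eq_one_of_dvd_coprimes hcop
    (orderOf_dvd_of_pow_eq_one hψ) (orderOf_dvd_of_pow_eq_one hμ))

lemma exists_not_le_inertia (k : Type*) [Field k] [IsAlgClosed k] [CharZero k] [Finite G]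
    [IsMulCommutative M] {P : Subgroup G} (hP : ¬ P ≤ Subgroup.centralizer (M : Set G)) :
    ∃ μ : M →* kˣ, ¬ P ≤ inertia μ := by
  obtain ⟨x, hxP, hx⟩ := SetLike.not_le_iff_exists.mp hP
  rw [Subgroup.mem_centralizer_iff_commutator_eq_one'] at hx
  push Not at hx
  obtain ⟨m, hm, hxm⟩ := hx
  have hmem : ⁅x, m⁆ ∈ M := mul_mem (‹M.Normal›.conj_mem m hm x) (inv_mem hm)
  obtain ⟨μ, hμ⟩ := exists_monoidHom_units_apply_ne_one_of_isMulCommutative k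
    (g := (⟨⁅x, m⁆, hmem⟩ : M)) (Subtype.coe_ne_coe.mp hxm)
  exact ⟨μ, fun h ↦ hμ (apply_commutatorElement_eq_one_of_mem_inertia (h hxP) ⟨m, hm⟩ hmem)⟩

end InertiaCommutator

section IntermediateDegree

variable {k G : Type u} [Field k] [IsAlgClosed k] [CharZero k] [Group G] [Finite G]
  [Group.IsSolvable G] {p a : ℕ} [Fact p.Prime]

lemma hasIntermediateDegree_of_commutator_ne_bot {Q : Sylow p G} {L : Subgroup G} [L.Normal]
    (hL : (Nat.card L).Coprime p) (hQL : ((Q : Subgroup G) ⊔ L).Normal) {B : Subgroup G}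
    (hBQ : B ≤ Q) (hQB : Q ≤ Subgroup.centralizer (B : Set G)) (hB : ¬ p ^ (a + 1) ∣ B.index)
    (hcomm : ⁅L ⊓ Subgroup.centralizer (B : Set G), (Q : Subgroup G)⁆ ≠ ⊥) :
    HasIntermediateDegree k G p a := by
  obtain ⟨M, hML, hM, hmem, hnot⟩ := exists_normal_and_not_commutator
    (q := fun M ↦ ⁅L ⊓ Subgroup.centralizer (B : Set G), (Q : Subgroup G)⁆ ≤ M) (L := L)
    ((Subgroup.commutator_mono inf_le_left le_rfl).trans (Subgroup.commutator_le_left L Q))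
    (mt le_bot_iff.mp hcomm)
  rw [Subgroup.commutator_le] at hmem hnot
  push Not at hnot
  obtain ⟨c, hc, y, hy, hd⟩ := hnot
  have hMp : (Nat.card M).Coprime p := hL.coprime_dvd_left (Subgroup.card_dvd_of_le hML)
  have hdB : ⁅c, y⁆ ∈ Subgroup.centralizer (B : Set G) :=
    mul_mem (mul_mem (mul_mem hc.2 (hQB hy)) (inv_mem hc.2)) (inv_mem (hQB hy))
  obtain ⟨lam, hlam⟩ := exists_monoidHom_sup_apply_ne_one k
    (coprime_natCard_of_isPGroup (Q.isPGroup'.to_le hBQ) hMp).symm (hmem c hc y hy) hdB hd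
  obtain ⟨U, hU, hweight, hnU⟩ := exists_isIrreducible_weightSpace_ne_bot lam
    (mt (·.trans (Subgroup.index_dvd_of_le le_sup_left)) hB)
  refine ⟨_, finrank_mem_charDegrees hU, by_contra fun hpU ↦ hlam ?_, hnU⟩
  have hMX : M ≤ B ⊔ M := le_sup_right
  set T := inertia (lam.comp (Subgroup.inclusion hMX))
  have hT : ¬ p ∣ T.index := fun h ↦
    hpU (h.trans (index_inertia_dvd_finrank hU (weightSpace_ne_bot_of_le hMX hweight)))
  have hXT : B ⊔ M ≤ T := le_inertia_comp_inclusion hMX lam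
  obtain ⟨l, hl, hlQ⟩ := exists_conj_mem_of_not_dvd_index hL hQL hBQ (le_sup_left.trans hXT) hT
  have hQT : (Q : Subgroup G) ≤ T := fun x hx ↦ by
    have hx' := mul_mem (inv_mem (hXT (hMX (hmem l hl x hx)))) (hlQ x hx)
    rwa [commutatorElement_def, mul_inv_rev, inv_inv, inv_mul_cancel_right] at hx'
  exact apply_commutatorElement_eq_one_of_coprime (coprime_natCard_of_isPGroup Q.isPGroup' hMp) hQT
    (hmem c hc) hy

lemma hasIntermediateDegree_of_not_sylow_le {Q : Sylow p G} [IsMulCommutative Q] {T : Subgroup G}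
    (hT : ¬ p ∣ T.index) (hTQ : ¬ p ^ (a + 1) ∣ (T ⊓ Q).index) (hQT : ¬ Q ≤ T) :
    HasIntermediateDegree k G p a := by
  obtain ⟨L, hLn, hL, hquot⟩ := exists_normal_hasTrivialPrimeToCore_quotient p G
  have hQL := normal_sup_of_isMulCommutative hquot Q
  obtain ⟨l, hl, hlQ⟩ :=
    exists_conj_mem_of_not_dvd_index hL hQL (B := T ⊓ Q) inf_le_right inf_le_left hT
  refine hasIntermediateDegree_of_commutator_ne_bot hL hQL inf_le_right
    ((Q : Subgroup G).le_centralizer.trans (Subgroup.centralizer_le inf_le_right)) hTQ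
    fun hbot ↦ hQT fun x hx ↦ ?_
  have hlx : l * x * l⁻¹ = x := by
    rw [mul_inv_eq_iff_eq_mul]
    exact (Subgroup.mem_centralizer_iff.mp
      (Subgroup.commutator_eq_bot_iff_le_centralizer.mp hbot hl) x hx).symm
  exact hlx ▸ hlQ x hx

lemma hasIntermediateDegree_of_isMulCommutative_normalCore {P : Sylow p G}
    (hdeg : ∀ n ∈ charDegrees k P, n ∣ p ^ a) (hP : ¬ IsMulCommutative P)
    [IsMulCommutative (P : Subgroup G).normalCore]
    (hC : Subgroup.centralizer ((P : Subgroup G).normalCore : Set G) ≤ (P : Subgroup G).normalCore)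
    (hcomm : ⁅(P : Subgroup G), (P : Subgroup G)⁆ ≤ (P : Subgroup G).normalCore) :
    HasIntermediateDegree k G p a := by
  set N := (P : Subgroup G).normalCore
  have hNP : N ≤ P := (P : Subgroup G).normalCore_le
  obtain ⟨μ, hμ⟩ := exists_not_le_inertia k (M := N) fun hPC ↦ hP <|
    Subgroup.le_centralizer_iff_isMulCommutative.mp
      (hPC.trans (Subgroup.centralizer_le (hPC.trans hC)))
  obtain ⟨U, hU, hweight, hnU⟩ := exists_isIrreducible_weightSpace_ne_bot_of_le_sylow hdeg hNP μ
  by_cases hpU : p ∣ finrank k U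
  · exact ⟨_, finrank_mem_charDegrees hU, hpU, hnU⟩
  have hT : ¬ p ∣ (inertia μ).index := fun h ↦ hpU (h.trans (index_inertia_dvd_finrank hU hweight))
  have hTP : ¬ p ^ (a + 1) ∣ (inertia μ ⊓ P).index := by
    obtain ⟨n, hn, hdvd⟩ := exists_mem_charDegrees_relIndex_inertia_dvd hNP μ
    rw [← Subgroup.relIndex_mul_index inf_le_right, Subgroup.inf_relIndex_right, mul_comm]
    exact not_pow_succ_dvd_mul Fact.out P.not_dvd_index (hdvd.trans (hdeg n hn))
  have hπ := QuotientGroup.mk'_surjective N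
  let Q : Sylow p (G ⧸ N) := P.mapSurjective hπ
  have : IsMulCommutative Q := isMulCommutative_map_mk'_iff.mpr hcomm
  refine HasIntermediateDegree.of_surjective (hasIntermediateDegree_of_not_sylow_le
    (Q := Q) (T := (inertia μ).map (QuotientGroup.mk' N)) ?_ ?_ ?_) hπ
  · exact fun h ↦ hT (h.trans (Subgroup.index_map_dvd _ hπ))
  · refine fun h ↦ hTP ((h.trans (Subgroup.index_dvd_of_le ?_)).trans (Subgroup.index_map_dvd _ hπ))
    exact Subgroup.map_inf_le _ _ _
  · intro h
    refine hμ (((Subgroup.map_le_iff_le_comap.mp h)).trans ?_)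
    rw [Subgroup.comap_map_eq, QuotientGroup.ker_mk', sup_eq_left.mpr (le_inertia μ)]

theorem hasIntermediateDegree_of_isSolvable (P : Sylow p G) (hP : ¬ IsMulCommutative P)
    (hdeg : ∀ n ∈ charDegrees k P, n ∣ p ^ a) : HasIntermediateDegree k G p a := by
  induction hG : Nat.card G using Nat.strong_induction_on generalizing G with
  | _ n ih =>
  by_contra hnot
  have hresidual (K : Subgroup G) [K.Normal] (hK : K ≠ ⊥) :
      ⁅(P : Subgroup G), (P : Subgroup G)⁆ ≤ K := by
    by_contra hPK
    have hπ := QuotientGroup.mk'_surjective K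
    have hlt : Nat.card (G ⧸ K) < n := by
      rw [← hG, Subgroup.card_eq_card_quotient_mul_card_subgroup K]
      exact lt_mul_of_one_lt_right Nat.card_pos (K.one_lt_card_iff_ne_bot.mpr hK)
    refine hnot ((ih _ hlt (P.mapSurjective hπ) (mt isMulCommutative_map_mk'_iff.mp hPK)
      (fun m hm ↦ hdeg m ?_) rfl).of_surjective hπ)
    exact charDegrees_subset_of_surjective
      ((QuotientGroup.mk' K).subgroupMap_surjective (P : Subgroup G)) hm
  have hnontrivial : ⁅(P : Subgroup G), (P : Subgroup G)⁆ ≠ ⊥ := fun h ↦ hP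
    (isMulCommutative_iff_commutator_eq_bot.mpr h)
  have hcore : HasTrivialPrimeToCore p G := fun K _ hK ↦ by_contra fun hne ↦ hnontrivial <|
    le_bot_iff.mp (disjoint_of_isPGroup_of_coprime P.isPGroup' hK
      (Subgroup.commutator_le_self _) (hresidual K hne))
  set N := (P : Subgroup G).normalCore
  have hC : Subgroup.centralizer (N : Set G) ≤ N := centralizer_normalCore_le hcore P
  have hcommN : ⁅N, N⁆ = ⊥ := by_contra fun h ↦ hnot <|
    hasIntermediateDegree_of_normal_le_commutator hdeg h
      (Subgroup.commutator_mono (P : Subgroup G).normalCore_le (P : Subgroup G).normalCore_le)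
  have : IsMulCommutative N := isMulCommutative_iff_commutator_eq_bot.mpr hcommN
  have hNne : N ≠ ⊥ := fun hbot ↦ hnontrivial <| by
    have htop : Subgroup.centralizer (N : Set G) = ⊤ :=
      Subgroup.centralizer_eq_top_iff_subset.mpr (SetLike.coe_subset_coe.mpr (hbot ▸ bot_le))
    have hPbot : (P : Subgroup G) = ⊥ := le_bot_iff.mp (le_top.trans (htop ▸ hC |>.trans hbot.le))
    rw [hPbot, Subgroup.commutator_bot_left]
  exact hnot (hasIntermediateDegree_of_isMulCommutative_normalCore hdeg hP hC (hresidual N hNne))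

theorem solvable_case_general (P : Sylow p G)
    (hdeg : ∀ V : FDRep k P, Simple V → finrank k V ∣ p ^ a)
    (hne : ∃ V : FDRep k P, Simple V ∧ finrank k V ≠ 1) :
    ∃ W : FDRep k G, Simple W ∧ p ∣ finrank k W ∧
      p ^ (finrank k W).factorization p ≤ p ^ a := by
  have hp : p.Prime := Fact.out
  obtain ⟨V, hV, hVne⟩ := hne
  have hirr := isIrreducible_of_simple V
  have hP : ¬ IsMulCommutative P := fun _ ↦ hVne
    (IsIrreducible.finrank_eq_one_of_isMulCommutative V.ρ)
  obtain ⟨_, ⟨W, hW, rfl⟩, hpW, hnW⟩ : HasIntermediateDegree k G p a :=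
    hasIntermediateDegree_of_isSolvable P hP (by rintro _ ⟨V, hV, rfl⟩; exact hdeg V hV)
  refine ⟨W, hW, hpW, Nat.pow_le_pow_right hp.pos ?_⟩
  have hW0 : finrank k W ≠ 0 := fun h ↦ hnW (h ▸ dvd_zero _)
  rwa [hp.pow_dvd_iff_le_factorization hW0, not_le, Nat.lt_succ_iff] at hnW

end IntermediateDegree

/-- The solvable case (Theorem 3.4) of the paper, stated without blocks: if `G` is a
finite solvable group with `O_{p'}(G) = 1` (every normal subgroup of order coprime to
`p` is trivial) whose Sylow `p`-subgroup has character degree set `{1, p^a}` with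
`a ≥ 1`, then `G` has an irreducible complex character of degree divisible by `p`
with `p`-part at most `p^a`. -/
theorem solvable_case (p : ℕ) (hp : p.Prime) (G : Type) [Group G] [Finite G]
    (hsolv : IsSolvable G)
    (hOp' : ∀ N : Subgroup G, N.Normal → (Nat.card N).Coprime p → N = ⊥)
    (P : Sylow p G) (a : ℕ) (ha : 1 ≤ a)
    (hdeg : ∀ V : FDRep ℂ ↥(P : Subgroup G), Simple V →
      Module.finrank ℂ V = 1 ∨ Module.finrank ℂ V = p ^ a)
    (hex : ∃ V : FDRep ℂ ↥(P : Subgroup G), Simple V ∧ Module.finrank ℂ V = p ^ a) :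
    ∃ W : FDRep ℂ G, Simple W ∧ p ∣ Module.finrank ℂ W ∧
      p ^ ((Module.finrank ℂ W).factorization p) ≤ p ^ a := by
  have : Fact p.Prime := ⟨hp⟩
  have : Group.IsSolvable G := hsolv
  obtain ⟨V, hV, hVdeg⟩ := hex
  exact solvable_case_general P (fun V hV ↦ (hdeg V hV).elim (· ▸ one_dvd _) (·.dvd))
    ⟨V, hV, hVdeg ▸ (Nat.one_lt_pow (by omega) hp.one_lt).ne'⟩
end

section
/- Let p be a prime and let the finite group G act transitively but not primitively on a finite set Ω with |Ω| = n ≥ 2. Let Δ ⊊ Ω be a block for the action of maximal cardinality among the proper blocks. Then: (a) the G-translates Δ_1, …, Δ_r of Δ form a partition of Ω into sets of equal size |Δ|; (b) setting L = ⋂_{i=1}^r Stab_G(Δ_i), the induced action of G/L on {Δ_1, …, Δ_r} is primitive; (c) if every G-orbit on the power set of Ω has size coprime to p, then every orbit of G/L on the power set of {Δ_1, …, Δ_r} has size coprime to p. -/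
open Pointwise MulAction

/-- An action of `G` on `X` is primitive if it is transitive and its only blocks are
the trivial ones (the subsingletons and the whole set). -/
def IsPrimitiveAction (G X : Type*) [Group G] [MulAction G X] : Prop :=
  MulAction.IsPretransitive G X ∧
    ∀ B : Set X, MulAction.IsBlock G B → MulAction.IsTrivialBlock B

/-!
Sending each point to the translate of `Δ` that contains it is an equivariant surjection `π` from
`Ω` onto the set of translates. Pulling back along `π` is injective on subsets and commutes with
`G`. It turns a block of translates containing `Δ` into a block of `Ω` containing `Δ`, which by
maximality is `Δ` or `Ω`; and it turns a set of translates into a subset of `Ω` with the same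
stabilizer, hence with an orbit of the same size.
-/

/-- A block of the action of `G` on `X` that is maximal, with respect to inclusion, among the blocks
different from `X`. Maximality by inclusion, unlike maximality by cardinality, is meaningful for
infinite `X`. -/
def IsMaximalProperBlock (G : Type*) {X : Type*} [Group G] [MulAction G X] (B : Set X) : Prop :=
  Maximal (fun C : Set X ↦ IsBlock G C ∧ C ≠ Set.univ) B

section MaximalProperBlock

variable {G X : Type*} [Group G] [MulAction G X]

theorem IsMaximalProperBlock.of_forall_ncard_le [Finite X] {B : Set X} (hB : IsBlock G B)
    (hproper : B ≠ Set.univ)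
    (hmax : ∀ C : Set X, IsBlock G C → C ≠ Set.univ → C.ncard ≤ B.ncard) :
    IsMaximalProperBlock G B :=
  ⟨⟨hB, hproper⟩, fun C hC hBC ↦ (Set.eq_of_subset_of_ncard_le hBC (hmax C hC.1 hC.2)).ge⟩

theorem IsMaximalProperBlock.nonempty [Nontrivial X] {B : Set X}
    (hB : IsMaximalProperBlock G B) : B.Nonempty := by
  rw [Set.nonempty_iff_ne_empty]
  rintro rfl
  obtain ⟨x⟩ := ‹Nontrivial X›.to_nonempty
  exact hB.le_of_ge ⟨IsBlock.singleton, Set.singleton_ne_univ x⟩ (Set.empty_subset _)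
    (Set.mem_singleton x)

end MaximalProperBlock

section EquivariantSurjection

variable {G X Y : Type*} [Group G] [MulAction G X] [MulAction G Y]

theorem isPreprimitive_of_isMaximalProperBlock_fiber [IsPretransitive G X] {f : X →[G] Y}
    (hf : Function.Surjective f) {y : Y} (hy : IsMaximalProperBlock G (f ⁻¹' {y})) :
    IsPreprimitive G Y := by
  have : IsPretransitive G Y := IsPretransitive.of_surjective_map hf inferInstance
  refine IsPreprimitive.of_isTrivialBlock_base y fun {B} hyB hB ↦ ?_
  by_cases hB_univ : f ⁻¹' B = Set.univ
  · exact .inr (hf.preimage_injective (hB_univ.trans Set.preimage_univ.symm))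
  · have hfiber : f ⁻¹' {y} ⊆ f ⁻¹' B := Set.preimage_mono (Set.singleton_subset_iff.mpr hyB)
    have hB_fiber : f ⁻¹' B ⊆ f ⁻¹' {y} := hy.le_of_ge ⟨hB.preimage f, hB_univ⟩ hfiber
    exact .inl (Set.subsingleton_singleton.anti (hf.preimage_subset_preimage_iff.mp hB_fiber))

theorem stabilizer_preimage_of_surjective {f : X →[G] Y} (hf : Function.Surjective f)
    (T : Set Y) : stabilizer G (f ⁻¹' T) = stabilizer G T := by
  ext g
  rw [mem_stabilizer_iff, mem_stabilizer_iff, ← Group.preimage_smul_set,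
    hf.preimage_injective.eq_iff]

theorem natCard_orbit_eq_of_stabilizer_eq {x : X} {y : Y}
    (h : stabilizer G x = stabilizer G y) : Nat.card (orbit G x) = Nat.card (orbit G y) := by
  rw [Nat.card_coe_set_eq, Nat.card_coe_set_eq, ← index_stabilizer, ← index_stabilizer, h]

end EquivariantSurjection

section Translates

variable {G Ω : Type*} [Group G] [MulAction G Ω] [IsPretransitive G Ω] {Δ : Set Ω}

theorem existsUnique_mem_translate (hΔ : IsBlock G Δ) (hne : Δ.Nonempty) (x : Ω) :
    ∃! t : orbit G Δ, x ∈ (t : Set Ω) := by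
  obtain ⟨t, ⟨ht, hxt⟩, huniq⟩ := (hΔ.isBlockSystem hne).1.2 x
  exact ⟨⟨t, ht⟩, hxt, fun s hxs ↦ Subtype.ext (huniq s ⟨s.2, hxs⟩)⟩

/-- The projection of `Ω` onto the set of translates of a nonempty block `Δ` of a transitive action:
the equivariant map sending a point to the unique translate of `Δ` that contains it. -/
noncomputable def translateMap (hΔ : IsBlock G Δ) (hne : Δ.Nonempty) : Ω →[G] orbit G Δ where
  toFun x := (existsUnique_mem_translate hΔ hne x).choose
  map_smul' g x := ((existsUnique_mem_translate hΔ hne (g • x)).choose_spec.2 _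
    (Set.smul_mem_smul_set (existsUnique_mem_translate hΔ hne x).choose_spec.1)).symm

theorem translateMap_eq_iff (hΔ : IsBlock G Δ) (hne : Δ.Nonempty) {x : Ω} {t : orbit G Δ} :
    translateMap hΔ hne x = t ↔ x ∈ (t : Set Ω) := by
  have hspec := (existsUnique_mem_translate hΔ hne x).choose_spec
  exact ⟨fun h ↦ h ▸ hspec.1, fun hx ↦ (hspec.2 t hx).symm⟩

theorem translateMap_surjective (hΔ : IsBlock G Δ) (hne : Δ.Nonempty) :
    Function.Surjective (translateMap hΔ hne) := by
  rintro ⟨_, g, rfl⟩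
  obtain ⟨x, hx⟩ := hne.smul_set (a := g)
  exact ⟨x, (translateMap_eq_iff hΔ hne).mpr hx⟩

theorem preimage_translateMap (hΔ : IsBlock G Δ) (hne : Δ.Nonempty) (T : Set (orbit G Δ)) :
    translateMap hΔ hne ⁻¹' T = ⋃ t ∈ T, (t : Set Ω) := by
  ext x
  simp only [Set.mem_preimage, Set.mem_iUnion₂, ← translateMap_eq_iff hΔ hne, exists_prop,
    exists_eq_right']

theorem IsMaximalProperBlock.isPreprimitive_orbit [Nontrivial Ω]
    (hΔ : IsMaximalProperBlock G Δ) : IsPreprimitive G (orbit G Δ) := by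
  refine isPreprimitive_of_isMaximalProperBlock_fiber
    (translateMap_surjective hΔ.prop.1 hΔ.nonempty) (y := ⟨Δ, mem_orbit_self Δ⟩) ?_
  rwa [preimage_translateMap, Set.biUnion_singleton]

theorem stabilizer_biUnion_translates (hΔ : IsBlock G Δ) (hne : Δ.Nonempty)
    (T : Set (orbit G Δ)) : stabilizer G (⋃ t ∈ T, (t : Set Ω)) = stabilizer G T := by
  rw [← preimage_translateMap hΔ hne,
    stabilizer_preimage_of_surjective (translateMap_surjective hΔ hne)]

end Translates

theorem block_lemma_general {G Ω : Type*} [Group G] [MulAction G Ω] [IsPretransitive G Ω]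
    [Nontrivial Ω] {Δ : Set Ω} (hΔ : IsMaximalProperBlock G Δ) :
    ((∀ g : G, (g • Δ).encard = Δ.encard) ∧
      (∀ g h : G, g • Δ = h • Δ ∨ Disjoint (g • Δ) (h • Δ)) ∧
      (⋃ g : G, g • Δ) = Set.univ) ∧
    IsPrimitiveAction G (orbit G Δ) ∧
    ∀ T : Set (orbit G Δ), stabilizer G (⋃ t ∈ T, (t : Set Ω)) = stabilizer G T := by
  have hblock : IsBlock G Δ := hΔ.prop.1
  have hprim : IsPreprimitive G (orbit G Δ) := hΔ.isPreprimitive_orbit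
  refine ⟨⟨fun g ↦ Set.encard_smul_set g Δ, isBlock_iff_smul_eq_smul_or_disjoint.mp hblock, ?_⟩,
    ⟨inferInstance, fun _ hB ↦ hprim.isTrivialBlock_of_isBlock hB⟩,
    stabilizer_biUnion_translates hblock hΔ.nonempty⟩
  rw [← Set.sUnion_range, (hblock.isBlockSystem hΔ.nonempty).1.sUnion_eq_univ]

/-- Lemma 2.4 of the paper. Let `G` act transitively but not primitively on a finite
set `Ω` with at least two points, and let `Δ` be a proper block of maximal cardinality.
Then (a) the translates of `Δ` have equal size, are pairwise equal or disjoint, and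
cover `Ω`; (b) the induced action of `G` on the set of translates (on which the
subgroup `L`, the intersection of the stabilizers of the translates, acts trivially,
so this is the action of `G/L`) is primitive; and (c) if every `G`-orbit on the power
set of `Ω` has size coprime to `p`, then every orbit on the power set of the set of
translates has size coprime to `p`. -/
theorem block_lemma (p : ℕ) (hp : p.Prime) (G : Type*) [Group G]
    (Ω : Type*) [Finite Ω] (hcard : 2 ≤ Nat.card Ω) [MulAction G Ω]
    (htrans : MulAction.IsPretransitive G Ω) (hnotprim : ¬ IsPrimitiveAction G Ω)
    (Δ : Set Ω) (hblock : MulAction.IsBlock G Δ) (hproper : Δ ≠ Set.univ)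
    (hmax : ∀ Δ' : Set Ω, MulAction.IsBlock G Δ' → Δ' ≠ Set.univ → Δ'.ncard ≤ Δ.ncard) :
    -- (a) the translates of `Δ` form a partition of `Ω` into sets of size `|Δ|`
    ((∀ g : G, (g • Δ).ncard = Δ.ncard) ∧
      (∀ g h : G, g • Δ = h • Δ ∨ Disjoint (g • Δ) (h • Δ)) ∧
      (⋃ g : G, g • Δ) = Set.univ) ∧
    -- (b) the induced action on the set `{Δ_1, …, Δ_r}` of translates is primitive
    IsPrimitiveAction G ↥(MulAction.orbit G Δ) ∧
    -- (c) if the action on `Ω` is `p`-concealed, so is the induced action on the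
    -- set of translates
    ((∀ s : Set Ω, (Nat.card (MulAction.orbit G s)).Coprime p) →
      ∀ T : Set ↥(MulAction.orbit G Δ), (Nat.card (MulAction.orbit G T)).Coprime p) := by
  have : Nontrivial Ω := Finite.one_lt_card_iff_nontrivial.mp hcard
  obtain ⟨⟨hsize, hpartition⟩, hprim, hstab⟩ :=
    block_lemma_general (IsMaximalProperBlock.of_forall_ncard_le hblock hproper hmax)
  exact ⟨⟨fun g ↦ congrArg ENat.toNat (hsize g), hpartition⟩, hprim,
    fun hcoprime T ↦ natCard_orbit_eq_of_stabilizer_eq (hstab T) ▸ hcoprime _⟩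
end

section
/- Let p be a prime, Ω a finite set, and P a p-subgroup of the symmetric group on Ω. If p is odd, then there exists a subset Λ ⊆ Ω whose setwise stabilizer in P is trivial. If p = 2, then there exist pairwise disjoint subsets Λ_1, Λ_2, Λ_3 of Ω with Λ_1 ∪ Λ_2 ∪ Λ_3 = Ω such that the only element g ∈ P satisfying gΛ_i = Λ_i for i = 1, 2, 3 is the identity. -/
open Pointwise

/-!
Call a colouring distinguishing if only the elements acting trivially preserve it. A `p`-group `G`
acting with finite orbits has a distinguishing colouring with `k` colours whenever `k ≥ 2` is
coprime to `p`; the theorem is the case `k = 2` for odd `p` and `k = 3` for `p = 2`.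

Orbits can be coloured independently, so consider a single orbit `G x` and induct on its size. If
`x` is not fixed, the stabilizer of `x` lies in a proper normal subgroup `N`, and `G` permutes the
smaller `N`-orbits inside `G x`. Colour each of these by induction. Its size is a power of `p`,
hence not divisible by `k`, so some colour is rare (used at most `|N x| / k` times) and some is
not. Permuting the colours within each `N`-orbit, we can arrange that a fixed colour `c`
is rare on the orbit `N x` and on no other. Then an element preserving the colouring maps `N x` to
itself, so it lies in `N`, and we are done by the choice of the colouring on each `N`-orbit.
-/

open MulAction Set

section Rare

variable {X C : Type*}

/-- The colour `c` is rare on the finite set `S` under the colouring `f`: it is used at most as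
often as in an equidistributed colouring, rounding down. -/
def IsRare (c : C) (f : X → C) (S : Set X) : Prop :=
  {y ∈ S | f y = c}.ncard ≤ S.ncard / Nat.card C

theorem IsRare.congr {c : C} {f f' : X → C} {S : Set X} (hff' : EqOn f f' S) (hf : IsRare c f S) :
    IsRare c f' S := by
  have hfiber : {y ∈ S | f' y = c} = {y ∈ S | f y = c} :=
    sep_ext_iff.2 fun y hy => by rw [hff' hy]
  rwa [IsRare, hfiber]

theorem isRare_perm_comp_iff (σ : Equiv.Perm C) {c : C} {f : X → C} {S : Set X} :
    IsRare (σ c) (σ ∘ f) S ↔ IsRare c f S := by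
  simp only [IsRare, Function.comp_apply, σ.injective.eq_iff]

theorem isRare_smul_set_iff {G : Type*} [Group G] [MulAction G X] {g : G} {c : C} {f : X → C}
    {S : Set X} (hg : ∀ y ∈ S, f (g • y) = f y) : IsRare c f (g • S) ↔ IsRare c f S := by
  have hfiber : {y ∈ g • S | f y = c} = g • {y ∈ S | f y = c} := by
    ext y
    constructor
    · rintro ⟨⟨z, hz, rfl⟩, hc⟩
      exact ⟨z, ⟨hz, (hg z hz).symm.trans hc⟩, rfl⟩
    · rintro ⟨z, ⟨hz, hc⟩, rfl⟩
      exact ⟨smul_mem_smul_set hz, (hg z hz).trans hc⟩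
  rw [IsRare, IsRare, hfiber, ncard_smul_set, ncard_smul_set]

variable [Finite C] {S : Set X}

theorem exists_isRare [Nonempty C] (hS : S.Finite) (f : X → C) : ∃ c, IsRare c f S := by
  classical
  have := Fintype.ofFinite C
  lift S to Finset X using hS
  obtain ⟨c, -, hc⟩ := Finset.exists_card_fiber_lt_of_card_lt_mul (f := f)
    (Nat.lt_mul_div_succ S.card (Finset.card_pos.2 (Finset.univ_nonempty (α := C))))
  refine ⟨c, ?_⟩
  rw [IsRare, ncard_coe_finset, Nat.card_eq_fintype_card, ← Finset.card_univ]
  simpa only [← Finset.coe_filter, ncard_coe_finset, Finset.mem_coe] using Nat.lt_succ_iff.1 hc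

theorem exists_not_isRare (hS : S.Finite) (hdvd : ¬ Nat.card C ∣ S.ncard) (f : X → C) :
    ∃ c, ¬ IsRare c f S := by
  classical
  have := Fintype.ofFinite C
  lift S to Finset X using hS
  rw [ncard_coe_finset, Nat.card_eq_fintype_card, ← Finset.card_univ] at hdvd
  have hlt : (Finset.univ : Finset C).card * (S.card / (Finset.univ : Finset C).card) < S.card :=
    (Nat.mul_div_le _ _).lt_of_ne fun h => hdvd ⟨_, h.symm⟩
  obtain ⟨c, -, hc⟩ := Finset.exists_lt_card_fiber_of_mul_lt_card_of_maps_to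
    (fun y _ => Finset.mem_univ (f y)) hlt
  refine ⟨c, ?_⟩
  rw [IsRare, ncard_coe_finset, Nat.card_eq_fintype_card, ← Finset.card_univ, not_le]
  simpa only [← Finset.coe_filter, ncard_coe_finset, Finset.mem_coe] using hc

theorem exists_perm_isRare_comp_iff (hS : S.Finite) (hdvd : ¬ Nat.card C ∣ S.ncard) (c : C)
    (f : X → C) (q : Prop) : ∃ σ : Equiv.Perm C, IsRare c (σ ∘ f) S ↔ q := by
  classical
  have : Nonempty C := ⟨c⟩
  obtain ⟨d, hd⟩ : ∃ d, IsRare d f S ↔ q := by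
    by_cases hq : q
    · simpa only [hq, iff_true] using exists_isRare hS f
    · simpa only [hq, iff_false] using exists_not_isRare hS hdvd f
  refine ⟨Equiv.swap d c, ?_⟩
  rw [← hd, ← isRare_perm_comp_iff (Equiv.swap d c) (c := d), Equiv.swap_apply_left]

end Rare

section Orbit

variable {G X : Type*} [Group G] [MulAction G X]

theorem mem_of_smul_mem_orbit_of_stabilizer_le {N : Subgroup G} {x : X}
    (hN : stabilizer G x ≤ N) {g : G} (hg : g • x ∈ orbit N x) : g ∈ N := by
  obtain ⟨n, hn⟩ := hg
  have hmem : (n : G)⁻¹ * g ∈ N :=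
    hN (by rw [mem_stabilizer_iff, mul_smul, inv_smul_eq_iff]; exact hn.symm)
  simpa only [mul_inv_cancel_left] using N.mul_mem n.2 hmem

theorem orbit_subgroup_subset_orbit_of_mem (N : Subgroup G) {x y : X} (hy : y ∈ orbit G x) :
    orbit N y ⊆ orbit G x :=
  orbit_eq_iff.2 hy ▸ orbit_subgroup_subset N y

theorem orbit_subgroup_ssubset_orbit {N : Subgroup G} {x y : X} (hN : stabilizer G x ≤ N)
    (hN_top : N ≠ ⊤) (hy : y ∈ orbit G x) : orbit N y ⊂ orbit G x := by
  refine (orbit_subgroup_subset_orbit_of_mem N hy).ssubset_of_ne fun heq =>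
    hN_top ((Subgroup.eq_top_iff' N).2 fun g => ?_)
  have hxy : orbit N x = orbit G x :=
    (orbit_eq_iff.2 (heq ▸ mem_orbit_self x)).trans heq
  exact mem_of_smul_mem_orbit_of_stabilizer_le hN (hxy ▸ mem_orbit x g)

theorem exists_forall_orbit_of_forall_exists {C : Type*} [Nonempty C]
    {Q : Set X → (X → C) → Prop} {S : Set X}
    (hQ : ∀ y f f', EqOn f f' (orbit G y) → Q (orbit G y) f → Q (orbit G y) f')
    (h : ∀ y ∈ S, ∃ f, Q (orbit G y) f) : ∃ f, ∀ y ∈ S, Q (orbit G y) f := by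
  have hchoice : ∀ T : Set X, ∃ f, (∃ y ∈ S, orbit G y = T) → Q T f := by
    intro T
    by_cases hT : ∃ y ∈ S, orbit G y = T
    · obtain ⟨y, hy, rfl⟩ := hT
      exact (h y hy).imp fun f hf _ => hf
    · exact ⟨fun _ => Classical.arbitrary C, fun hT' => absurd hT' hT⟩
  choose F hF using hchoice
  refine ⟨fun y => F (orbit G y) y, fun y hy => hQ y _ _ (fun z hz => ?_) (hF _ ⟨y, hy, rfl⟩)⟩
  exact congrArg (F · z) (orbit_eq_iff.2 hz).symm

end Orbit

section Distinguishing

variable {G X C : Type*}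

/-- `f` is a distinguishing colouring of `S` for the action of `G`: the elements of `G` preserving
the colours of the points of `S` fix `S` pointwise. It is meant for `G`-invariant sets `S`. -/
def IsDistinguishingOn (G : Type*) {X C : Type*} [SMul G X] (f : X → C) (S : Set X) : Prop :=
  ∀ g : G, (∀ y ∈ S, f (g • y) = f y) → ∀ y ∈ S, g • y = y

theorem IsDistinguishingOn.comp_injective {D : Type*} [SMul G X] {f : X → C} {S : Set X}
    (hf : IsDistinguishingOn G f S) {φ : C → D} (hφ : φ.Injective) :
    IsDistinguishingOn G (φ ∘ f) S :=
  fun g hg => hf g fun y hy => hφ (hg y hy)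

variable [Group G] [MulAction G X]

theorem IsDistinguishingOn.congr_orbit {f f' : X → C} {x : X} (hff' : EqOn f f' (orbit G x))
    (hf : IsDistinguishingOn G f (orbit G x)) : IsDistinguishingOn G f' (orbit G x) :=
  fun g hg => hf g fun y hy => by
    rw [hff' hy, hff' (mapsTo_smul_orbit g x hy), hg y hy]

theorem isDistinguishingOn_orbit_of_isRare_iff {N : Subgroup G} [N.Normal] {x : X}
    (hN : stabilizer G x ≤ N) {c : C} {f : X → C}
    (hdist : ∀ y ∈ orbit G x, IsDistinguishingOn N f (orbit N y))
    (hrare : ∀ y ∈ orbit G x, (IsRare c f (orbit N y) ↔ orbit N y = orbit N x)) :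
    IsDistinguishingOn G f (orbit G x) := by
  intro g hg
  have hx : x ∈ orbit G x := mem_orbit_self x
  have hg_orbit : ∀ y ∈ orbit G x, ∀ z ∈ orbit N y, f (g • z) = f z := fun y hy z hz =>
    hg z (orbit_subgroup_subset_orbit_of_mem N hy hz)
  have hgx : IsRare c f (orbit N (g • x)) := by
    rw [← smul_orbit_eq_orbit_smul, isRare_smul_set_iff (hg_orbit x hx)]
    exact (hrare x hx).2 rfl
  have hgN : g ∈ N := mem_of_smul_mem_orbit_of_stabilizer_le hN
    (orbit_eq_iff.1 ((hrare _ (mem_orbit x g)).1 hgx))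
  exact fun y hy => hdist y hy ⟨g, hgN⟩ (hg_orbit y hy) y (mem_orbit_self y)

end Distinguishing

section PGroup

variable {p : ℕ} [Fact p.Prime]

theorem exists_normal_ne_top_of_isPGroup {G : Type*} [Group G] (hG : IsPGroup p G)
    {K : Subgroup G} [K.FiniteIndex] (hK : K ≠ ⊤) : ∃ N : Subgroup G, N.Normal ∧ K ≤ N ∧ N ≠ ⊤ := by
  let π := QuotientGroup.mk' K.normalCore
  have hπ : Function.Surjective π := QuotientGroup.mk'_surjective _
  have hker : π.ker ≤ K := (QuotientGroup.ker_mk' _).trans_le K.normalCore_le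
  have hmap : K.map π ≠ ⊤ := fun h => hK <| by
    rw [← Subgroup.comap_map_eq_self hker, h, Subgroup.comap_top]
  obtain ⟨M, hM, hKM⟩ := (eq_top_or_exists_le_coatom (K.map π)).resolve_left hmap
  have := (hG.to_quotient K.normalCore).isNilpotent
  have hM_normal : M.Normal := Subgroup.NormalizerCondition.normal_of_coatom M
    Group.normalizerCondition_of_isNilpotent hM
  refine ⟨M.comap π, hM_normal.comap π, Subgroup.map_le_iff_le_comap.1 hKM, fun h => hM.1 ?_⟩
  exact Subgroup.comap_injective hπ (h.trans (Subgroup.comap_top π).symm)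

variable {C : Type*} [Finite C] [Nontrivial C]

theorem not_card_dvd_ncard_orbit_of_isPGroup {G X : Type*} [Group G] [MulAction G X]
    (hG : IsPGroup p G) (hC : (Nat.card C).Coprime p) {x : X} (hx : (orbit G x).Finite) :
    ¬ Nat.card C ∣ (orbit G x).ncard := by
  have := hx.to_subtype
  obtain ⟨k, hk⟩ := hG.card_orbit x
  rw [← Nat.card_coe_set_eq, hk]
  exact fun hdvd => Finite.one_lt_card.ne' ((hC.pow_right k).eq_one_of_dvd hdvd)

variable {X : Type*}

theorem exists_isDistinguishingOn_orbit (hC : (Nat.card C).Coprime p) {G : Type*} [Group G]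
    [MulAction G X] (hG : IsPGroup p G) {x : X} (hx : (orbit G x).Finite) :
    ∃ f : X → C, IsDistinguishingOn G f (orbit G x) := by
  induction hn : (orbit G x).ncard using Nat.strong_induction_on generalizing G x with
  | _ n ih =>
  obtain ⟨c⟩ : Nonempty C := inferInstance
  by_cases hfix : stabilizer G x = ⊤
  · have hfixed : ∀ g : G, g • x = x := fun g =>
      mem_stabilizer_iff.1 (hfix ▸ Subgroup.mem_top g)
    refine ⟨fun _ => c, fun g _ y hy => ?_⟩
    obtain ⟨h, rfl⟩ := hy
    simp only [hfixed]
  have : (stabilizer G x).FiniteIndex :=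
    ⟨by simpa only [index_stabilizer] using ((ncard_pos hx).2 (nonempty_orbit x)).ne'⟩
  obtain ⟨N, hN_normal, hN, hN_top⟩ := exists_normal_ne_top_of_isPGroup hG hfix
  have hNp : IsPGroup p N := hG.to_subgroup N
  obtain ⟨f, hf⟩ : ∃ f : X → C, ∀ y ∈ orbit G x, IsDistinguishingOn N f (orbit N y) ∧
      (IsRare c f (orbit N y) ↔ orbit N y = orbit N x) := by
    refine exists_forall_orbit_of_forall_exists
      (Q := fun T f => IsDistinguishingOn N f T ∧ (IsRare c f T ↔ T = orbit N x))
      (fun y f f' hff' => And.imp (.congr_orbit hff')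
        (Iff.trans ⟨.congr hff'.symm, .congr hff'⟩)) fun y hy => ?_
    have hlt := orbit_subgroup_ssubset_orbit hN hN_top hy
    have hfin : (orbit N y).Finite := hx.subset hlt.subset
    obtain ⟨f, hf⟩ := ih _ (hn ▸ ncard_lt_ncard hlt hx) hNp hfin rfl
    obtain ⟨σ, hσ⟩ := exists_perm_isRare_comp_iff hfin
      (not_card_dvd_ncard_orbit_of_isPGroup hNp hC hfin) c f (orbit N y = orbit N x)
    exact ⟨σ ∘ f, hf.comp_injective σ.injective, hσ⟩
  exact ⟨f, isDistinguishingOn_orbit_of_isRare_iff hN (fun y hy => (hf y hy).1)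
    fun y hy => (hf y hy).2⟩

theorem exists_isDistinguishingOn_univ (hC : (Nat.card C).Coprime p) {G : Type*} [Group G]
    [MulAction G X] (hG : IsPGroup p G) (hX : ∀ x : X, (orbit G x).Finite) :
    ∃ f : X → C, IsDistinguishingOn G f univ := by
  obtain ⟨f, hf⟩ := exists_forall_orbit_of_forall_exists (G := G) (S := univ)
    (Q := fun T f => IsDistinguishingOn G f T) (fun y f f' => .congr_orbit)
    fun y _ => exists_isDistinguishingOn_orbit (C := C) hC hG (hX y)
  exact ⟨f, fun g hg y hy =>
    hf y hy g (fun z _ => hg z (mem_univ z)) y (mem_orbit_self y)⟩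

theorem exists_coloring_forall_mem_eq_one (hC : (Nat.card C).Coprime p)
    {P : Subgroup (Equiv.Perm X)} (hP : IsPGroup p P) (hX : ∀ x : X, (orbit P x).Finite) :
    ∃ f : X → C, ∀ g ∈ P, (∀ x, f (g • x) = f x) → g = 1 := by
  obtain ⟨f, hf⟩ := exists_isDistinguishingOn_univ (C := C) hC hP hX
  exact ⟨f, fun g hg hfg => Equiv.ext fun x => hf ⟨g, hg⟩ (fun y _ => hfg y) x (mem_univ x)⟩

end PGroup

theorem apply_smul_eq_of_smul_preimage_eq {G X C : Type*} [Group G] [MulAction G X] {g : G}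
    {f : X → C} (h : ∀ c, g • f ⁻¹' {c} = f ⁻¹' {c}) (x : X) : f (g • x) = f x :=
  (mem_stabilizer_set.1 (h (f x)) x).2 rfl

theorem regular_orbit_p_group_general (p : ℕ) (hp : p.Prime) (Ω : Type*)
    (P : Subgroup (Equiv.Perm Ω)) (hP : IsPGroup p P) (hΩ : ∀ x : Ω, (orbit P x).Finite) :
    (Odd p → ∃ Λ : Set Ω, ∀ g ∈ P, g • Λ = Λ → g = 1) ∧
    (p = 2 → ∃ Λ₁ Λ₂ Λ₃ : Set Ω,
      Disjoint Λ₁ Λ₂ ∧ Disjoint Λ₁ Λ₃ ∧ Disjoint Λ₂ Λ₃ ∧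
      Λ₁ ∪ Λ₂ ∪ Λ₃ = Set.univ ∧
      ∀ g ∈ P, g • Λ₁ = Λ₁ → g • Λ₂ = Λ₂ → g • Λ₃ = Λ₃ → g = 1) := by
  have := Fact.mk hp
  constructor
  · intro hodd
    have hcoprime : (Nat.card Prop).Coprime p := by simpa using hodd
    obtain ⟨f, hf⟩ := exists_coloring_forall_mem_eq_one hcoprime hP hΩ
    exact ⟨{x | f x}, fun g hg hΛ => hf g hg fun x => propext (mem_stabilizer_set.1 hΛ x)⟩
  · rintro rfl
    have hcoprime : (Nat.card (Fin 3)).Coprime 2 := by rw [Nat.card_fin]; decide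
    obtain ⟨f, hf⟩ := exists_coloring_forall_mem_eq_one hcoprime hP hΩ
    have hdisj : ∀ i j : Fin 3, i ≠ j → Disjoint (f ⁻¹' {i}) (f ⁻¹' {j}) := fun i j hij =>
      (disjoint_singleton.2 hij).preimage f
    refine ⟨f ⁻¹' {0}, f ⁻¹' {1}, f ⁻¹' {2}, hdisj 0 1 (by decide), hdisj 0 2 (by decide),
      hdisj 1 2 (by decide), ?_, fun g hg h₀ h₁ h₂ => hf g hg ?_⟩
    · ext x
      simp only [mem_union, mem_preimage, mem_singleton_iff, mem_univ, iff_true]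
      omega
    · exact apply_smul_eq_of_smul_preimage_eq fun
        | 0 => h₀
        | 1 => h₁
        | 2 => h₂

/-- Lemma 2.5 of the paper. Let `P` be a `p`-subgroup of the symmetric group on a
finite set `Ω`. If `p` is odd then `P` has a regular orbit on the power set of `Ω`,
i.e. there is a subset whose setwise stabilizer in `P` is trivial. If `p = 2` then
`P` has a regular orbit on ordered partitions of `Ω` into three parts: there are
pairwise disjoint subsets `Λ₁, Λ₂, Λ₃` covering `Ω` whose simultaneous setwise
stabilizer in `P` is trivial. -/
theorem regular_orbit_p_group (p : ℕ) (hp : p.Prime) (Ω : Type*) [Finite Ω]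
    (P : Subgroup (Equiv.Perm Ω)) (hP : IsPGroup p P) :
    (Odd p → ∃ Λ : Set Ω, ∀ g ∈ P, g • Λ = Λ → g = 1) ∧
    (p = 2 → ∃ Λ₁ Λ₂ Λ₃ : Set Ω,
      Disjoint Λ₁ Λ₂ ∧ Disjoint Λ₁ Λ₃ ∧ Disjoint Λ₂ Λ₃ ∧
      Λ₁ ∪ Λ₂ ∪ Λ₃ = Set.univ ∧
      ∀ g ∈ P, g • Λ₁ = Λ₁ → g • Λ₂ = Λ₂ → g • Λ₃ = Λ₃ → g = 1) := by
  exact regular_orbit_p_group_general p hp Ω P hP fun _ => Set.toFinite _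
end

section
/- Let p be a prime and let G be a finite solvable group in which every normal p-subgroup is trivial (i.e. O_p(G) = 1). Let A be an abelian p-subgroup of G. Let F be a finite field of characteristic p and let V be a finite-dimensional F-vector space on which G acts faithfully by F-linear automorphisms. Then there exists v ∈ V whose stabilizer in A is trivial (equivalently, v lies in a regular A-orbit). -/
/-!
In a solvable group `G` there is a nilpotent normal subgroup `N` containing its own centralizer,
and `O_p(G) = 1` makes `N` a `p'`-group. So it suffices to find `v` whose stabilizer in `A`
centralizes `N`: that stabilizer is then a `p`-group inside `N`.

More generally, let the abelian `p`-group `A` act on a nilpotent `p'`-group `K` and compatibly on a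
finite abelian `p`-group `V` on which `K` acts. Some `v ∈ V` has a stabilizer in `A` that
centralizes the action of `K` on `V`, by induction on `|K| + |V|`:
* if `K` does not act faithfully, pass to a quotient of `K`;
* if `0 < W < V` is invariant and the kernel `L` of `K` on `W` moves `V`, then `V` is the direct sum
  of the fixed points of `L` and the kernel of its trace, and the vectors found in the two summands
  add up; if `L` fixes `V`, a vector found in `W` will do;
* if `V` is irreducible, let `M` be a maximal proper invariant subgroup of `K`, and suppose that
  `a ∈ A` centralizes `M` but not `K`. Then `K = M C_K(M)`, so `M` acts faithfully on the
  `M`-submodule `U = [V, a] ∩ C_V(a)`, and by induction some nonzero `a • v - v ∈ U` has a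
  stabilizer that centralizes `M`. An element `b` fixing `v` thus centralizes `M`. By Schur's lemma
  the elements of order `p` of `C_A(M) / C_A(K)`, which acts on the irreducible module `K / M`, lie
  in one cyclic group of order `p`; so if `b` did not centralize `K`, then `a`, chosen of order `p`
  modulo `C_A(K)`, would act on `V` as a power of `b` and fix `v`.
-/

open scoped commutatorElement IsMulCommutative

/-! ### Nilpotent normal subgroups -/

section NilpotentNormal

variable {G : Type*} [Group G]

theorem commutator_sup_self_le {N E : Subgroup G} [N.Normal]
    (hcent : E ≤ Subgroup.centralizer N) (hcomm : ⁅E, E⁆ ≤ N) : ⁅N ⊔ E, N ⊔ E⁆ ≤ N := by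
  rw [Subgroup.commutator_le]
  intro x hx y hy
  obtain ⟨n, hn, e, he, rfl⟩ := Subgroup.mem_sup_of_normal_left.mp hx
  obtain ⟨m, hm, f, hf, rfl⟩ := Subgroup.mem_sup_of_normal_left.mp hy
  have hem : m * e = e * m := hcent he m hm
  have hfn : n⁻¹ * f⁻¹ = f⁻¹ * n⁻¹ := hcent (E.inv_mem hf) n⁻¹ (N.inv_mem hn)
  have hsplit : ⁅n * e, m * f⁆ = n * m * ⁅e, f⁆ * n⁻¹ * m⁻¹ :=
    calc ⁅n * e, m * f⁆ = n * (e * m) * f * e⁻¹ * (n⁻¹ * f⁻¹) * m⁻¹ := by group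
      _ = n * m * ⁅e, f⁆ * n⁻¹ * m⁻¹ := by rw [← hem, hfn]; group
  rw [hsplit]
  have hef : ⁅e, f⁆ ∈ N := hcomm (Subgroup.commutator_mem_commutator he hf)
  exact N.mul_mem (N.mul_mem (N.mul_mem (N.mul_mem hn hm) hef) (N.inv_mem hn)) (N.inv_mem hm)

theorem lowerCentralSeries_sup_succ_le {N E : Subgroup G} [N.Normal]
    (hcent : E ≤ Subgroup.centralizer N) (hcomm : ⁅E, E⁆ ≤ N) (n : ℕ) :
    (N ⊔ E).lowerCentralSeries (n + 1) ≤ N.lowerCentralSeries n := by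
  induction n with
  | zero => exact commutator_sup_self_le hcent hcomm
  | succ n ih =>
    rw [Subgroup.lowerCentralSeries_succ, Subgroup.commutator_le]
    intro x hx y hy
    obtain ⟨m, hm, e, he, rfl⟩ := Subgroup.mem_sup_of_normal_left.mp hy
    have hxN : x ∈ N.lowerCentralSeries n := ih hx
    have hex : x⁻¹ * e = e * x⁻¹ :=
      hcent he x⁻¹ (N.inv_mem (N.lowerCentralSeries_le_self n hxN))
    have hdrop : ⁅x, m * e⁆ = ⁅x, m⁆ :=
      calc ⁅x, m * e⁆ = x * m * (e * x⁻¹) * e⁻¹ * m⁻¹ := by group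
        _ = ⁅x, m⁆ := by rw [← hex]; group
    rw [hdrop]
    exact Subgroup.commutator_mem_commutator hxN hm

theorem isNilpotent_sup_of_le_centralizer {N E : Subgroup G} [N.Normal] [Group.IsNilpotent N]
    (hcent : E ≤ Subgroup.centralizer N) (hcomm : ⁅E, E⁆ ≤ N) :
    Group.IsNilpotent (N ⊔ E : Subgroup G) := by
  obtain ⟨n, hn⟩ := (Subgroup.isNilpotent_iff_lowerCentralSeries N).mp ‹_›
  exact Subgroup.isNilpotent_of_lowerCentralSeries_eq_bot
    (le_bot_iff.mp ((lowerCentralSeries_sup_succ_le hcent hcomm n).trans hn.le))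

theorem exists_normal_isNilpotent_centralizer_le (G : Type*) [Group G] [Finite G]
    [Group.IsSolvable G] :
    ∃ N : Subgroup G, N.Normal ∧ Group.IsNilpotent N ∧ Subgroup.centralizer (N : Set G) ≤ N := by
  obtain ⟨N, hN⟩ := (Set.toFinite {N : Subgroup G | N.Normal ∧ Group.IsNilpotent N}).exists_maximal
    ⟨⊥, inferInstance, inferInstance⟩
  obtain ⟨hNnormal, hNnil⟩ := hN.prop
  refine ⟨N, hNnormal, hNnil, ?_⟩
  by_contra hcent
  obtain ⟨E, hE⟩ := (Set.toFinite {E : Subgroup G |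
    E.Normal ∧ E ≤ Subgroup.centralizer N ∧ ¬ E ≤ N}).exists_minimal
    ⟨_, inferInstance, le_rfl, hcent⟩
  obtain ⟨hEnormal, hEcent, hEN⟩ := hE.prop
  have hlt : ⁅E, E⁆ < E :=
    Group.IsSolvable.commutator_lt_of_ne_bot (by rintro rfl; exact hEN bot_le)
  have hcomm : ⁅E, E⁆ ≤ N := by
    by_contra hle
    exact hE.not_prop_of_lt hlt ⟨inferInstance, hlt.le.trans hEcent, hle⟩
  have hsup : (N ⊔ E).Normal ∧ Group.IsNilpotent (N ⊔ E : Subgroup G) :=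
    ⟨inferInstance, isNilpotent_sup_of_le_centralizer hEcent hcomm⟩
  exact hEN (le_sup_right.trans (hN.le_of_ge hsup le_sup_left))

theorem card_coprime_of_normal_of_isNilpotent [Finite G] {p : ℕ} [Fact p.Prime]
    (hOp : ∀ P : Subgroup G, P.Normal → IsPGroup p P → P = ⊥)
    (N : Subgroup G) [N.Normal] [Group.IsNilpotent N] : (Nat.card N).Coprime p := by
  rw [Nat.coprime_comm, (Fact.out : p.Prime).coprime_iff_not_dvd]
  intro hdvd
  let P : Sylow p N := default
  have : (P : Subgroup N).Characteristic :=
    P.characteristic_of_normal inferInstance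
  refine P.ne_bot_of_dvd_card hdvd ?_
  rw [← Subgroup.map_eq_bot_iff_of_injective _ N.subtype_injective]
  exact hOp _ inferInstance (P.isPGroup'.map N.subtype)

end NilpotentNormal

theorem eq_one_of_pow_eq_one_of_coprime_card {K : Type*} [Group K] {n : ℕ}
    (hn : (Nat.card K).Coprime n) {x : K} (hx : x ^ n = 1) : x = 1 :=
  hn.pow_left_bijective.injective (hx.trans (one_pow n).symm)

theorem exists_pow_pow_notMem_of_isPGroup {A : Type*} [Group A] {p : ℕ} (hA : IsPGroup p A)
    {C : Subgroup A} {a : A} (ha : a ∉ C) :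
    ∃ j, a ^ p ^ j ∉ C ∧ (a ^ p ^ j) ^ p ∈ C := by
  classical
  have hex : ∃ n, a ^ p ^ n ∈ C := (hA a).imp fun n hn ↦ by rw [hn]; exact C.one_mem
  obtain ⟨j, hj⟩ : ∃ j, Nat.find hex = j + 1 :=
    Nat.exists_eq_succ_of_ne_zero fun h ↦ ha (by simpa [h] using Nat.find_spec hex)
  refine ⟨j, Nat.find_min hex (by lia), ?_⟩
  simpa [hj, pow_succ, pow_mul] using Nat.find_spec hex

/-! ### Invariant subgroups and coprime action -/

/-- The subset `s` of a `G`-set is stable under the action of `G`. Stated for an arbitrary bundled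
kind of subset, so that it covers subgroups of a group and of a module alike. -/
def SMulInvariant (G : Type*) {X S : Type*} [SMul G X] [SetLike S X] (s : S) : Prop :=
  ∀ (g : G) ⦃x : X⦄, x ∈ s → g • x ∈ s

namespace SMulInvariant

variable {A K : Type*} [Group A] [Group K] [MulDistribMulAction A K] {H L : Subgroup K}

theorem smul_mem_iff {X S : Type*} [MulAction A X] [SetLike S X] {s : S} (hs : SMulInvariant A s)
    {a : A} {x : X} : a • x ∈ s ↔ x ∈ s :=
  ⟨fun h ↦ by simpa using hs a⁻¹ h, fun h ↦ hs a h⟩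

theorem subgroup {X S : Type*} [MulAction A X] [SetLike S X] {s : S} (hs : SMulInvariant A s)
    (B : Subgroup A) : SMulInvariant B s :=
  fun b _ hx ↦ hs b hx

theorem top {G V : Type*} [AddCommGroup V] [SMul G V] :
    SMulInvariant G (⊤ : AddSubgroup V) :=
  fun _ _ _ ↦ trivial

theorem of_characteristic (H : Subgroup K) [hH : H.Characteristic] : SMulInvariant A H :=
  fun a _ hx ↦ (hH.fixed (MulDistribMulAction.toMulEquiv K a)).ge hx

theorem sup (hH : SMulInvariant A H) (hL : SMulInvariant A L) : SMulInvariant A (H ⊔ L) := by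
  intro a
  suffices H ⊔ L ≤ (H ⊔ L).comap (MulDistribMulAction.toMonoidHom K a) from this
  exact sup_le (fun _ hx ↦ Subgroup.mem_sup_left (hH a hx))
    (fun _ hx ↦ Subgroup.mem_sup_right (hL a hx))

theorem inf (hH : SMulInvariant A H) (hL : SMulInvariant A L) : SMulInvariant A (H ⊓ L) :=
  fun a _ hx ↦ ⟨hH a hx.1, hL a hx.2⟩

theorem normalizer (hH : SMulInvariant A H) :
    SMulInvariant A (Subgroup.normalizer (H : Set K)) := by
  intro a x hx
  rw [Subgroup.mem_normalizer_iff] at hx ⊢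
  intro y
  have hconj : a • x * y * (a • x)⁻¹ = a • (x * a⁻¹ • y * x⁻¹) := by simp
  rw [hconj, hH.smul_mem_iff, ← hx, hH.smul_mem_iff]

theorem centralizer (hH : SMulInvariant A H) :
    SMulInvariant A (Subgroup.centralizer (H : Set K)) := by
  intro a x hx y hy
  simpa using congrArg (a • ·) (hx (a⁻¹ • y) (hH a⁻¹ hy))

/-- The action on an invariant subgroup. -/
abbrev mulDistribMulAction (hH : SMulInvariant A H) : MulDistribMulAction A H :=
  letI : SMul A H := ⟨fun a x ↦ ⟨a • (x : K), hH a x.2⟩⟩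
  Function.Injective.mulDistribMulAction H.subtype H.subtype_injective fun _ _ ↦ rfl

/-- The action on the quotient by an invariant normal subgroup. -/
abbrev mulDistribMulActionQuotient [H.Normal] (hH : SMulInvariant A H) :
    MulDistribMulAction A (K ⧸ H) :=
  letI : SMul A (K ⧸ H) :=
    ⟨fun a ↦ QuotientGroup.map H H (MulDistribMulAction.toMonoidHom K a) fun _ hx ↦ hH a hx⟩
  Function.Surjective.mulDistribMulAction (QuotientGroup.mk' H) (QuotientGroup.mk'_surjective H)
    fun _ _ ↦ rfl

/-- The action on an invariant subgroup of a module. -/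
abbrev distribMulAction {V : Type*} [AddCommGroup V] [DistribMulAction A V] {W : AddSubgroup V}
    (hW : SMulInvariant A W) : DistribMulAction A W :=
  letI : SMul A W := ⟨fun a w ↦ ⟨a • (w : V), hW a w.2⟩⟩
  Function.Injective.distribMulAction W.subtype W.subtype_injective fun _ _ ↦ rfl

end SMulInvariant

section CoprimeAction

variable {A K : Type*} [Group A] [Group K] [MulDistribMulAction A K] {p : ℕ}

theorem smul_eq_self_of_smul_inv_mul_smul (hA : IsPGroup p A) (hK : (Nat.card K).Coprime p)
    {a : A} {k : K} (h : a • (k⁻¹ * a • k) = k⁻¹ * a • k) : a • k = k := by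
  have hpow (n : ℕ) : a ^ n • k = k * (k⁻¹ * a • k) ^ n := by
    induction n with
    | zero => simp
    | succ n ih => rw [pow_succ', mul_smul, ih, smul_mul', smul_pow', h, pow_succ',
        ← mul_assoc, mul_inv_cancel_left]
  obtain ⟨n, hn⟩ := hA a
  have hone : (k⁻¹ * a • k) ^ p ^ n = 1 := by simpa [hn] using hpow (p ^ n)
  exact (inv_mul_eq_one.mp (eq_one_of_pow_eq_one_of_coprime_card (hK.pow_right n) hone)).symm

theorem exists_inv_mul_smul_notMem_of_mem_fixingSubgroup (hA : IsPGroup p A)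
    (hK : (Nat.card K).Coprime p) {M : Subgroup K} {a : A} (ha : a ∈ fixingSubgroup A (M : Set K))
    (ha' : a ∉ fixingSubgroup A (Set.univ : Set K)) : ∃ k : K, k⁻¹ * a • k ∉ M := by
  contrapose! ha'
  exact (mem_fixingSubgroup_iff A).mpr fun k _ ↦
    smul_eq_self_of_smul_inv_mul_smul hA hK ((mem_fixingSubgroup_iff A).mp ha _ (ha' k))

end CoprimeAction

/-! ### Maximal invariant subgroups -/

theorem exists_smul_eq_pow_smul_of_isSimpleModule {R X : Type*} [CommRing R] [AddCommGroup X]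
    [Module R X] [IsSimpleModule R X] {p : ℕ} [Fact p.Prime] {r s : R}
    (hr : ∀ x : X, r ^ p • x = x) (hs : ∀ x : X, s ^ p • x = x) (hs' : ∃ x : X, s • x ≠ x) :
    ∃ i, ∀ x : X, r • x = s ^ i • x := by
  let I := Module.annihilator R X
  have hI : I.IsMaximal := IsSimpleModule.annihilator_isMaximal
  have mk_eq (t u : R) :
      Ideal.Quotient.mk I t = Ideal.Quotient.mk I u ↔ ∀ x : X, t • x = u • x := by
    simp_rw [Ideal.Quotient.eq, I, Module.mem_annihilator, sub_smul, sub_eq_zero]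
  have hprim : IsPrimitiveRoot (Ideal.Quotient.mk I s) p := by
    refine IsPrimitiveRoot.iff_orderOf.mpr (orderOf_eq_prime ?_ ?_)
    · rw [← map_pow, ← map_one (Ideal.Quotient.mk I), mk_eq]; simpa using hs
    · rw [← map_one (Ideal.Quotient.mk I), Ne, mk_eq]; simpa using hs'
  have hroot : Ideal.Quotient.mk I r ^ p = 1 := by
    rw [← map_pow, ← map_one (Ideal.Quotient.mk I), mk_eq]; simpa using hr
  obtain ⟨i, -, hi⟩ := hprim.eq_pow_of_pow_eq_one hroot
  exact ⟨i, fun x ↦ ((mk_eq _ _).mp (by rw [map_pow, hi]) x)⟩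

theorem isSimpleModule_ofMulDistribMulAction {A X : Type*} [Group A] [CommGroup X] [Nontrivial X]
    [MulDistribMulAction A X] (hX : ∀ H : Subgroup X, SMulInvariant A H → H = ⊥ ∨ H = ⊤) :
    IsSimpleModule (MonoidAlgebra ℤ A) (Representation.ofMulDistribMulAction A X).asModule := by
  have : Nontrivial (Representation.ofMulDistribMulAction A X).asModule :=
    inferInstanceAs (Nontrivial X)
  refine (isSimpleModule_iff _ _).mpr ⟨fun W ↦ ?_⟩
  let H : Subgroup X := AddSubgroup.toSubgroup' W.toAddSubgroup
  have hH : SMulInvariant A H := fun a _ hx ↦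
    (Subrepresentation.ofSubmodule' W).apply_mem_toSubmodule a hx
  refine (hX H hH).imp (fun h ↦ ?_) (fun h ↦ ?_) <;>
  exact SetLike.ext fun x ↦ SetLike.ext_iff.mp h x

theorem exists_smul_eq_pow_smul_of_eq_bot_or_eq_top {A X : Type*} [CommGroup A] [CommGroup X]
    [MulDistribMulAction A X] (hX : ∀ H : Subgroup X, SMulInvariant A H → H = ⊥ ∨ H = ⊤)
    {p : ℕ} [Fact p.Prime] {a c : A} (ha : ∀ x : X, a ^ p • x = x) (hc : ∀ x : X, c ^ p • x = x)
    (hc' : ∃ x : X, c • x ≠ x) : ∃ i : ℕ, ∀ x : X, a • x = c ^ i • x := by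
  have : Nontrivial X := hc'.elim fun x hx ↦ nontrivial_of_ne _ _ hx
  have := isSimpleModule_ofMulDistribMulAction hX
  let ρ := Representation.ofMulDistribMulAction A X
  let e : X ≃ ρ.asModule := Additive.ofMul.trans ρ.asModuleEquiv.symm.toEquiv
  have of_smul (b : A) (x : X) : MonoidAlgebra.of ℤ A b • e x = e (b • x) :=
    (ρ.asModuleEquiv_symm_map_rho b (Additive.ofMul x)).symm
  obtain ⟨i, hi⟩ := exists_smul_eq_pow_smul_of_isSimpleModule (X := ρ.asModule) (p := p)
    (r := MonoidAlgebra.of ℤ A a) (s := MonoidAlgebra.of ℤ A c)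
    (e.surjective.forall.mpr fun x ↦ by rw [← map_pow, of_smul, ha])
    (e.surjective.forall.mpr fun x ↦ by rw [← map_pow, of_smul, hc])
    (hc'.imp' e fun x hx ↦ by rwa [of_smul, e.apply_eq_iff_eq.ne])
  exact ⟨i, fun x ↦ e.injective (by rw [← of_smul, ← of_smul, hi, map_pow])⟩

/-- The maximal elements among the proper `A`-invariant subgroups of `K`. -/
def IsMaximalInvariant (A : Type*) {K : Type*} [Group A] [Group K] [MulDistribMulAction A K]
    (M : Subgroup K) : Prop :=
  Maximal (fun H : Subgroup K ↦ SMulInvariant A H ∧ H ≠ ⊤) M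

namespace IsMaximalInvariant

section Group

variable {A K : Type*} [Group A] [Group K] [MulDistribMulAction A K] {M : Subgroup K}

theorem exists_of_nontrivial (A K : Type*) [Group A] [Group K] [MulDistribMulAction A K] [Finite K]
    [Nontrivial K] : ∃ M : Subgroup K, IsMaximalInvariant A M :=
  (Set.toFinite {H : Subgroup K | SMulInvariant A H ∧ H ≠ ⊤}).exists_maximal
    ⟨⊥, .of_characteristic ⊥, bot_ne_top⟩

theorem invariant (hM : IsMaximalInvariant A M) : SMulInvariant A M := hM.prop.1

theorem ne_top (hM : IsMaximalInvariant A M) : M ≠ ⊤ := hM.prop.2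

theorem eq_top_of_lt (hM : IsMaximalInvariant A M) {H : Subgroup K} (hH : SMulInvariant A H)
    (hlt : M < H) : H = ⊤ := by
  by_contra hne
  exact hM.not_prop_of_gt hlt ⟨hH, hne⟩

theorem normal [Group.IsNilpotent K] (hM : IsMaximalInvariant A M) : M.Normal :=
  Subgroup.normalizer_eq_top_iff.mp <| hM.eq_top_of_lt hM.invariant.normalizer <|
    Group.normalizerCondition_of_isNilpotent M hM.ne_top.lt_top

theorem commutator_le [Group.IsNilpotent K] (hM : IsMaximalInvariant A M) : commutator K ≤ M := by
  have := hM.normal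
  by_contra hle
  have hsup : M ⊔ commutator K = ⊤ :=
    hM.eq_top_of_lt (hM.invariant.sup (.of_characteristic _)) (left_lt_sup.mpr hle)
  have hperfect : commutator (K ⧸ M) = ⊤ := by
    have hmap := congrArg (Subgroup.map (QuotientGroup.mk' M)) hsup
    rwa [Subgroup.map_sup, QuotientGroup.map_mk'_self, bot_sup_eq, map_commutator_eq,
      Subgroup.map_top_of_surjective _ (QuotientGroup.mk'_surjective M),
      MonoidHom.range_eq_top.mpr (QuotientGroup.mk'_surjective M)] at hmap
  have : Nontrivial (K ⧸ M) := QuotientGroup.nontrivial_iff.mpr hM.ne_top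
  exact (Group.IsSolvable.commutator_lt_top_of_nontrivial (K ⧸ M)).ne hperfect

theorem sup_centralizer_eq_top [Group.IsNilpotent K] {p : ℕ} (hA : IsPGroup p A)
    (hK : (Nat.card K).Coprime p) (hM : IsMaximalInvariant A M) {a : A}
    (ha : a ∈ fixingSubgroup A (M : Set K)) (ha' : a ∉ fixingSubgroup A (Set.univ : Set K)) :
    M ⊔ Subgroup.centralizer (M : Set K) = ⊤ := by
  obtain ⟨k, hk⟩ := exists_inv_mul_smul_notMem_of_mem_fixingSubgroup hA hK ha ha'
  have hcent : k⁻¹ * a • k ∈ Subgroup.centralizer (M : Set K) := by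
    intro x hx
    have hfix := (mem_fixingSubgroup_iff A).mp ha _ (hM.normal.conj_mem x hx k)
    rw [smul_mul', smul_mul', smul_inv', (mem_fixingSubgroup_iff A).mp ha x hx,
      mul_inv_eq_iff_eq_mul] at hfix
    rw [mul_assoc k⁻¹, hfix]
    group
  exact hM.eq_top_of_lt (hM.invariant.sup hM.invariant.centralizer)
    (left_lt_sup.mpr fun hle ↦ hk (hle hcent))

theorem eq_bot_or_eq_top_of_quotient [M.Normal] (hM : IsMaximalInvariant A M)
    {H : Subgroup (K ⧸ M)}
    (hH : letI := hM.invariant.mulDistribMulActionQuotient; SMulInvariant A H) :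
    H = ⊥ ∨ H = ⊤ := by
  have hinv : SMulInvariant A (H.comap (QuotientGroup.mk' M)) := fun a _ hx ↦ hH a hx
  rcases (QuotientGroup.le_comap_mk' M H).eq_or_lt with heq | hlt
  · left
    rw [← Subgroup.map_comap_eq_self_of_surjective (QuotientGroup.mk'_surjective M) H, ← heq,
      QuotientGroup.map_mk'_self]
  · right
    rw [← Subgroup.map_comap_eq_self_of_surjective (QuotientGroup.mk'_surjective M) H,
      hM.eq_top_of_lt hinv hlt, Subgroup.map_top_of_surjective _ (QuotientGroup.mk'_surjective M)]

end Group

theorem exists_pow_inv_mul_mem_fixingSubgroup {A K : Type*} [CommGroup A] [Group K]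
    [MulDistribMulAction A K] [Group.IsNilpotent K] {p : ℕ} [Fact p.Prime] (hA : IsPGroup p A)
    (hK : (Nat.card K).Coprime p) {M : Subgroup K} (hM : IsMaximalInvariant A M) {a c : A}
    (ha : a ∈ fixingSubgroup A (M : Set K)) (hap : a ^ p ∈ fixingSubgroup A (Set.univ : Set K))
    (hc : c ∈ fixingSubgroup A (M : Set K)) (hcp : c ^ p ∈ fixingSubgroup A (Set.univ : Set K))
    (hc' : c ∉ fixingSubgroup A (Set.univ : Set K)) :
    ∃ i : ℕ, (c ^ i)⁻¹ * a ∈ fixingSubgroup A (Set.univ : Set K) := by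
  have := hM.normal
  have : IsMulCommutative (K ⧸ M) :=
    Subgroup.Normal.quotient_commutative_iff_commutator_le.mpr hM.commutator_le
  let := hM.invariant.mulDistribMulActionQuotient
  have fixes_quotient {b : A} (hb : b ∈ fixingSubgroup A (Set.univ : Set K)) (x : K ⧸ M) :
      b • x = x := by
    obtain ⟨k, rfl⟩ := QuotientGroup.mk_surjective x
    exact congrArg _ ((mem_fixingSubgroup_iff A).mp hb k trivial)
  have moves_quotient : ∃ x : K ⧸ M, c • x ≠ x := by
    obtain ⟨k, hk⟩ := exists_inv_mul_smul_notMem_of_mem_fixingSubgroup hA hK hc hc'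
    exact ⟨k, fun h ↦ hk (QuotientGroup.eq.mp h.symm)⟩
  obtain ⟨i, hi⟩ := exists_smul_eq_pow_smul_of_eq_bot_or_eq_top
    (fun _ ↦ hM.eq_bot_or_eq_top_of_quotient) (fixes_quotient hap) (fixes_quotient hcp)
    moves_quotient
  refine ⟨i, by_contra fun hnot ↦ ?_⟩
  obtain ⟨k, hk⟩ := exists_inv_mul_smul_notMem_of_mem_fixingSubgroup hA hK
    (mul_mem (inv_mem (pow_mem hc i)) ha) hnot
  refine hk (QuotientGroup.eq.mp (Eq.symm ?_))
  change ((c ^ i)⁻¹ * a) • (k : K ⧸ M) = k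
  rw [mul_smul, hi, inv_smul_smul]

end IsMaximalInvariant

/-! ### Fixed points and the trace -/

theorem exists_mem_ne_zero_forall_smul_eq_self {A V : Type*} [Group A] [AddCommGroup V] [Finite V]
    [DistribMulAction A V] {p : ℕ} [Fact p.Prime] (hA : IsPGroup p A)
    (hV : IsPGroup p (Multiplicative V)) {W : AddSubgroup V} (hW : SMulInvariant A W)
    (hW0 : W ≠ ⊥) : ∃ w ∈ W, w ≠ 0 ∧ ∀ a : A, a • w = w := by
  let := hW.distribMulAction
  have hWp : IsPGroup p (Multiplicative W) := hV.to_subgroup (AddSubgroup.toSubgroup W)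
  have : Nontrivial (Multiplicative W) := (AddSubgroup.nontrivial_iff_ne_bot W).mpr hW0
  have hdvd : p ∣ Nat.card W := by
    obtain ⟨n, hn, hcard⟩ := hWp.nontrivial_iff_card.mp this
    exact (dvd_pow_self p hn.ne').trans hcard.symm.dvd
  obtain ⟨w, hfix, hw⟩ := hA.exists_fixed_point_of_prime_dvd_card_of_fixed_point W hdvd
    (a := 0) (fun a ↦ smul_zero a)
  exact ⟨w, w.2, fun h ↦ hw (Subtype.ext h.symm), fun a ↦ congrArg Subtype.val (hfix a)⟩

section CoprimeDecomposition

/-- The trace map `v ↦ ∑ g, g • v` of the action of a finite group, whose kernel is a complement of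
the fixed points when the action is coprime. -/
def traceAddMonoidHom (N V : Type*) [Group N] [Fintype N] [AddCommGroup V]
    [DistribMulAction N V] : V →+ V :=
  ∑ n : N, DistribSMul.toAddMonoidHom V n

variable {N V : Type*} [Group N] [AddCommGroup V] [DistribMulAction N V]

theorem map_mem_fixedPoints_of_semiconj (f : V → V) (e : N ≃ N)
    (hf : ∀ (n : N) (v : V), f (n • v) = e n • f v) {v : V}
    (hv : v ∈ FixedPoints.addSubgroup N V) : f v ∈ FixedPoints.addSubgroup N V := by
  intro n
  rw [← e.apply_symm_apply n, ← hf, hv]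

variable [Fintype N]

theorem traceAddMonoidHom_apply (v : V) : traceAddMonoidHom N V v = ∑ n : N, n • v := by
  simp [traceAddMonoidHom]

theorem traceAddMonoidHom_mem_fixedPoints (v : V) :
    traceAddMonoidHom N V v ∈ FixedPoints.addSubgroup N V := by
  intro n
  simp only [traceAddMonoidHom_apply, Finset.smul_sum, ← mul_smul]
  exact Fintype.sum_equiv (Equiv.mulLeft n) _ _ fun _ ↦ rfl

theorem traceAddMonoidHom_of_mem_fixedPoints {v : V} (hv : v ∈ FixedPoints.addSubgroup N V) :
    traceAddMonoidHom N V v = Nat.card N • v := by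
  have hfix (n : N) : n • v = v := hv n
  simp [traceAddMonoidHom_apply, hfix]

theorem isCompl_fixedPoints_ker_traceAddMonoidHom (hNV : (Nat.card V).Coprime (Nat.card N)) :
    IsCompl (FixedPoints.addSubgroup N V) (traceAddMonoidHom N V).ker := by
  have smul_bij : Function.Bijective (Nat.card N • · : V → V) := (nsmulCoprime hNV).bijective
  refine ⟨AddSubgroup.disjoint_def.mpr fun {v} hv hker ↦ smul_bij.1 ?_,
    codisjoint_iff.mpr <| eq_top_iff.mpr fun v _ ↦ ?_⟩
  · simpa only [smul_zero, ← traceAddMonoidHom_of_mem_fixedPoints hv,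
      AddMonoidHom.mem_ker] using hker
  · obtain ⟨w, hw⟩ := smul_bij.2 (traceAddMonoidHom N V v)
    have hwfix : w ∈ FixedPoints.addSubgroup N V := fun n ↦ smul_bij.1 <| by
      simp only [← smul_comm n, hw, traceAddMonoidHom_mem_fixedPoints v n]
    refine AddSubgroup.mem_sup.mpr ⟨w, hwfix, v - w, ?_, add_sub_cancel w v⟩
    rw [AddMonoidHom.mem_ker, map_sub, traceAddMonoidHom_of_mem_fixedPoints hwfix, sub_eq_zero]
    exact hw.symm

theorem map_mem_ker_traceAddMonoidHom_of_semiconj (f : V →+ V) (e : N ≃ N)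
    (hf : ∀ (n : N) (v : V), f (n • v) = e n • f v) {v : V}
    (hv : v ∈ (traceAddMonoidHom N V).ker) : f v ∈ (traceAddMonoidHom N V).ker := by
  rw [AddMonoidHom.mem_ker, traceAddMonoidHom_apply] at hv ⊢
  rw [← e.sum_comp, ← map_zero f, ← hv, map_sum]
  exact Finset.sum_congr rfl fun n _ ↦ (hf n v).symm

end CoprimeDecomposition

section NormalSubgroup

variable {A K V : Type*} [Group A] [Group K] [MulDistribMulAction A K] [AddCommGroup V]
  [DistribMulAction K V] [DistribMulAction A V] [SMulDistribClass A K V] {N : Subgroup K}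

theorem smulInvariant_fixedPoints_of_normal [N.Normal] :
    SMulInvariant K (FixedPoints.addSubgroup N V) := fun k _ ↦
  map_mem_fixedPoints_of_semiconj (k • ·) (MulAut.conjNormal k).toEquiv
    fun n v ↦ by simp [Subgroup.smul_def, ← mul_smul]

theorem smulInvariant_ker_trace_of_normal [Fintype N] [N.Normal] :
    SMulInvariant K (traceAddMonoidHom N V).ker := fun k _ ↦
  map_mem_ker_traceAddMonoidHom_of_semiconj (DistribSMul.toAddMonoidHom V k)
    (MulAut.conjNormal k).toEquiv fun n v ↦ by simp [Subgroup.smul_def, ← mul_smul]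

theorem SMulInvariant.fixedPoints (hN : SMulInvariant A N) :
    SMulInvariant A (FixedPoints.addSubgroup N V) := fun a _ ↦
  let := hN.mulDistribMulAction
  map_mem_fixedPoints_of_semiconj (a • ·) (MulAction.toPerm a : Equiv.Perm N)
    fun n v ↦ smul_distrib_smul a (n : K) v

theorem SMulInvariant.ker_trace [Fintype N] (hN : SMulInvariant A N) :
    SMulInvariant A (traceAddMonoidHom N V).ker := fun a _ ↦
  let := hN.mulDistribMulAction
  map_mem_ker_traceAddMonoidHom_of_semiconj (DistribSMul.toAddMonoidHom V a)
    (MulAction.toPerm a : Equiv.Perm N) fun n v ↦ smul_distrib_smul a (n : K) v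

theorem SMulInvariant.fixingSubgroup {W : AddSubgroup V} (hW : SMulInvariant A W) :
    SMulInvariant A (fixingSubgroup K (W : Set V)) := by
  intro a k hk
  rw [mem_fixingSubgroup_iff] at hk ⊢
  intro w hw
  rw [← smul_inv_smul a w, ← smul_distrib_smul, hk _ (hW a⁻¹ hw)]

theorem SMulInvariant.normal_fixingSubgroup {W : AddSubgroup V} (hW : SMulInvariant K W) :
    (_root_.fixingSubgroup K (W : Set V)).Normal where
  conj_mem n hn k := by
    rw [mem_fixingSubgroup_iff] at hn ⊢
    intro w hw
    rw [mul_smul, mul_smul, hn _ (hW k⁻¹ hw), smul_inv_smul]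

/-- The action of a quotient by a normal subgroup that acts trivially. -/
abbrev distribMulActionQuotient {K V : Type*} [Group K] [AddCommGroup V] [DistribMulAction K V]
    {N : Subgroup K} [N.Normal] (hN : N ≤ fixingSubgroup K (Set.univ : Set V)) :
    DistribMulAction (K ⧸ N) V :=
  letI : SMul (K ⧸ N) V := ⟨fun q ↦ QuotientGroup.lift N (MulAction.toPermHom K V)
    (fun _ hn ↦ Equiv.ext fun v ↦ (mem_fixingSubgroup_iff K).mp (hN hn) v trivial) q⟩
  Function.Surjective.distribMulActionLeft (QuotientGroup.mk' N) (QuotientGroup.mk'_surjective N)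
    fun _ _ ↦ rfl

end NormalSubgroup

/-! ### Centralizing stabilizers -/

theorem inv_mul_mem_fixingSubgroup_iff {K X : Type*} [Group K] [MulAction K X] {k l : K}
    {s : Set X} : k⁻¹ * l ∈ fixingSubgroup K s ↔ ∀ x ∈ s, l • x = k • x := by
  simp only [mem_fixingSubgroup_iff, mul_smul, inv_smul_eq_iff]

section CentralizingStabilizer

variable {A K V : Type*} [AddCommGroup V]

/-- The subgroup `W` of the `K`-module `V` contains a vector whose stabilizer in `A` centralizes the
action of `H ≤ K` on `W`. -/
def HasCentralizingStabilizer (A : Type*) [Group A] [Group K] [MulDistribMulAction A K]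
    [DistribMulAction K V] [DistribMulAction A V] (H : Subgroup K) (W : AddSubgroup V) : Prop :=
  ∃ w ∈ W, ∀ a : A, a • w = w → ∀ k ∈ H, ∀ x ∈ W, (a • k) • x = k • x

namespace HasCentralizingStabilizer

variable [Group A] [Group K] [MulDistribMulAction A K] [DistribMulAction K V]
  [DistribMulAction A V]

theorem of_subtype {H : Subgroup K} {W : AddSubgroup V}
    (hH : SMulInvariant A H) (hHW : SMulInvariant H W) (hAW : SMulInvariant A W)
    (h : letI := hH.mulDistribMulAction; letI := hHW.distribMulAction
      letI := hAW.distribMulAction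
      HasCentralizingStabilizer A (⊤ : Subgroup H) (⊤ : AddSubgroup W)) :
    HasCentralizingStabilizer A H W := by
  obtain ⟨w, -, hw⟩ := h
  exact ⟨w, w.2, fun a ha k hk x hx ↦ congrArg Subtype.val
    (hw a (Subtype.ext ha) ⟨k, hk⟩ trivial ⟨x, hx⟩ trivial)⟩

theorem of_quotient {N : Subgroup K} [N.Normal] (hN : SMulInvariant A N)
    (hNV : N ≤ fixingSubgroup K (Set.univ : Set V))
    (h : letI := hN.mulDistribMulActionQuotient; letI := distribMulActionQuotient hNV
      HasCentralizingStabilizer A (⊤ : Subgroup (K ⧸ N)) (⊤ : AddSubgroup V)) :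
    HasCentralizingStabilizer A (⊤ : Subgroup K) (⊤ : AddSubgroup V) := by
  obtain ⟨w, -, hw⟩ := h
  exact ⟨w, trivial, fun a ha k _ x _ ↦ hw a ha (k : K ⧸ N) trivial x trivial⟩

theorem sup {H : Subgroup K} {W₁ W₂ : AddSubgroup V}
    (hW₁ : SMulInvariant A W₁) (hW₂ : SMulInvariant A W₂) (hdisj : Disjoint W₁ W₂)
    (h₁ : HasCentralizingStabilizer A H W₁) (h₂ : HasCentralizingStabilizer A H W₂) :
    HasCentralizingStabilizer A H (W₁ ⊔ W₂) := by
  obtain ⟨w₁, hw₁, hstab₁⟩ := h₁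
  obtain ⟨w₂, hw₂, hstab₂⟩ := h₂
  refine ⟨w₁ + w₂, AddSubgroup.add_mem_sup hw₁ hw₂, fun a ha k hk x hx ↦ ?_⟩
  have hsplit := AddSubgroup.add_injective_of_disjoint hdisj
    (a₁ := (⟨a • w₁, hW₁ a hw₁⟩, ⟨a • w₂, hW₂ a hw₂⟩)) (a₂ := (⟨w₁, hw₁⟩, ⟨w₂, hw₂⟩))
    ((smul_add a w₁ w₂).symm.trans ha)
  simp only [Prod.mk.injEq, Subtype.mk.injEq] at hsplit
  obtain ⟨x₁, hx₁, x₂, hx₂, rfl⟩ := AddSubgroup.mem_sup.mp hx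
  rw [smul_add, smul_add, hstab₁ a hsplit.1 k hk x₁ hx₁, hstab₂ a hsplit.2 k hk x₂ hx₂]

theorem top_of_fixingSubgroup_le {W : AddSubgroup V}
    (h : HasCentralizingStabilizer A (⊤ : Subgroup K) W)
    (hW : fixingSubgroup K (W : Set V) ≤ fixingSubgroup K (Set.univ : Set V)) :
    HasCentralizingStabilizer A (⊤ : Subgroup K) (⊤ : AddSubgroup V) := by
  obtain ⟨w, -, hw⟩ := h
  exact ⟨w, trivial, fun a ha k hk ↦
    inv_mul_mem_fixingSubgroup_iff.mp (hW (inv_mul_mem_fixingSubgroup_iff.mpr (hw a ha k hk)))⟩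

theorem exists_mem_forall_mem_fixingSubgroup {H : Subgroup K} {W : AddSubgroup V}
    (hH : SMulInvariant A H) (hHW : H ⊓ fixingSubgroup K (W : Set V) = ⊥)
    (h : HasCentralizingStabilizer A H W) :
    ∃ w ∈ W, ∀ a : A, a • w = w → a ∈ fixingSubgroup A (H : Set K) := by
  obtain ⟨w, hwW, hw⟩ := h
  refine ⟨w, hwW, fun a ha ↦ (mem_fixingSubgroup_iff A).mpr fun k hk ↦ ?_⟩
  have hmem : k⁻¹ * a • k ∈ H ⊓ fixingSubgroup K (W : Set V) :=
    ⟨H.mul_mem (H.inv_mem hk) (hH a hk), inv_mul_mem_fixingSubgroup_iff.mpr (hw a ha k hk)⟩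
  rw [hHW, Subgroup.mem_bot, inv_mul_eq_one] at hmem
  exact hmem.symm

theorem top_of_forall_mem_fixingSubgroup {v : V}
    (hv : ∀ a : A, a • v = v → a ∈ fixingSubgroup A (Set.univ : Set K)) :
    HasCentralizingStabilizer A (⊤ : Subgroup K) (⊤ : AddSubgroup V) :=
  ⟨v, trivial, fun a ha k _ _ _ ↦ by rw [(mem_fixingSubgroup_iff A).mp (hv a ha) k trivial]⟩

theorem top_of_reducible [SMulDistribClass A K V] [Finite K]
    (hVK : (Nat.card V).Coprime (Nat.card K)) {W : AddSubgroup V} (hKW : SMulInvariant K W)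
    (hAW : SMulInvariant A W) (hW_bot : W ≠ ⊥) (hW_top : W ≠ ⊤)
    (hproper : ∀ U : AddSubgroup V, U ≠ ⊤ → SMulInvariant K U → SMulInvariant A U →
      HasCentralizingStabilizer A (⊤ : Subgroup K) U) :
    HasCentralizingStabilizer A (⊤ : Subgroup K) (⊤ : AddSubgroup V) := by
  let N := fixingSubgroup K (W : Set V)
  have hN : N.Normal := hKW.normal_fixingSubgroup
  have hAN : SMulInvariant A N := hAW.fixingSubgroup
  by_cases hfix_top : FixedPoints.addSubgroup N V = ⊤
  · refine (hproper W hW_top hKW hAW).top_of_fixingSubgroup_le fun n hn ↦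
      (mem_fixingSubgroup_iff K).mpr fun v _ ↦ ?_
    exact (hfix_top ▸ trivial : v ∈ FixedPoints.addSubgroup N V) ⟨n, hn⟩
  · have := Fintype.ofFinite N
    have hcompl := isCompl_fixedPoints_ker_traceAddMonoidHom
      (hVK.coprime_dvd_right N.card_subgroup_dvd_card)
    have hker_top : (traceAddMonoidHom N V).ker ≠ ⊤ := by
      intro hker
      have hW_le : W ≤ FixedPoints.addSubgroup N V := fun w hw n ↦
        (mem_fixingSubgroup_iff K).mp n.2 w hw
      rw [hker] at hcompl
      exact hW_bot (le_bot_iff.mp (hW_le.trans (eq_bot_of_isCompl_top hcompl).le))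
    rw [← hcompl.sup_eq_top]
    exact sup hAN.fixedPoints hAN.ker_trace hcompl.disjoint
      (hproper _ hfix_top smulInvariant_fixedPoints_of_normal hAN.fixedPoints)
      (hproper _ hker_top smulInvariant_ker_trace_of_normal hAN.ker_trace)

end HasCentralizingStabilizer

end CentralizingStabilizer

/-! ### The irreducible case -/

section SmulSub

variable {A V : Type*} [Group A] [AddCommGroup V] [DistribMulAction A V]

/-- The endomorphism `v ↦ a • v - v`, which measures how far `a` is from acting trivially. -/
def smulSub (V : Type*) [AddCommGroup V] [DistribMulAction A V] (a : A) : V →+ V :=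
  DistribSMul.toAddMonoidHom V a - AddMonoidHom.id V

theorem smulSub_apply (a : A) (v : V) : smulSub V a v = a • v - v := rfl

theorem mem_ker_smulSub {a : A} {v : V} : v ∈ (smulSub V a).ker ↔ a • v = v := by
  rw [AddMonoidHom.mem_ker, smulSub_apply, sub_eq_zero]

theorem smulSub_smul_of_commute {a b : A} (h : Commute a b) (v : V) :
    smulSub V a (b • v) = b • smulSub V a v := by
  rw [smulSub_apply, smulSub_apply, smul_sub, ← mul_smul, h.eq, mul_smul]

theorem smulSub_smul_of_smul_eq_self {K : Type*} [Group K] [MulDistribMulAction A K]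
    [DistribMulAction K V] [SMulDistribClass A K V] {a : A} {k : K} (h : a • k = k) (v : V) :
    smulSub V a (k • v) = k • smulSub V a v := by
  rw [smulSub_apply, smulSub_apply, smul_sub, smul_distrib_smul, h]

theorem smulInvariant_ker_of_map_smul {f : V →+ V} (hf : ∀ (a : A) (v : V), f (a • v) = a • f v) :
    SMulInvariant A f.ker :=
  fun a v hv ↦ by rw [AddMonoidHom.mem_ker, hf, hv, smul_zero]

theorem smulInvariant_range_of_map_smul {f : V →+ V} (hf : ∀ (a : A) (v : V), f (a • v) = a • f v) :
    SMulInvariant A f.range := by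
  rintro a _ ⟨v, rfl⟩
  exact ⟨a • v, hf a v⟩

theorem range_smulSub_inf_ker_ne_bot {A V : Type*} [CommGroup A] [AddCommGroup V]
    [DistribMulAction A V] [Finite V] {p : ℕ} [Fact p.Prime] (hA : IsPGroup p A)
    (hVp : IsPGroup p (Multiplicative V)) {a : A} {v : V} (hv : a • v ≠ v) :
    (smulSub V a).range ⊓ (smulSub V a).ker ≠ ⊥ := by
  have hrange : (smulSub V a).range ≠ ⊥ := fun h ↦ hv <| by
    have hmem : smulSub V a v ∈ (smulSub V a).range := ⟨v, rfl⟩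
    rwa [h, AddSubgroup.mem_bot, smulSub_apply, sub_eq_zero] at hmem
  obtain ⟨w, hw, hw0, hfix⟩ := exists_mem_ne_zero_forall_smul_eq_self hA hVp
    (smulInvariant_range_of_map_smul fun b : A ↦ smulSub_smul_of_commute (Commute.all a b)) hrange
  exact fun h ↦ hw0 ((AddSubgroup.mem_bot).mp (h ▸ ⟨hw, mem_ker_smulSub.mpr (hfix a)⟩))

end SmulSub

section FaithfulModule

variable {A K V : Type*} [Group A] [Group K] [MulDistribMulAction A K] [AddCommGroup V]
  [DistribMulAction K V] [DistribMulAction A V] [SMulDistribClass A K V]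

theorem normal_inf_fixingSubgroup {M : Subgroup K} [M.Normal]
    (hM : M ⊔ Subgroup.centralizer (M : Set K) = ⊤) {U : AddSubgroup V} (hMU : SMulInvariant M U) :
    (M ⊓ fixingSubgroup K (U : Set V)).Normal where
  conj_mem x hx k := by
    obtain ⟨m, hm, c, hc, rfl⟩ := Subgroup.mem_sup_of_normal_left.mp (hM ▸ Subgroup.mem_top k)
    have hcx : c * x * c⁻¹ = x := by rw [← hc x hx.1, mul_inv_cancel_right]
    have hconj : m * c * x * (m * c)⁻¹ = m * x * m⁻¹ := by
      rw [mul_inv_rev, ← mul_assoc, mul_assoc m c x, mul_assoc m (c * x), hcx]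
    refine ⟨Subgroup.Normal.conj_mem ‹_› x hx.1 _, (mem_fixingSubgroup_iff K).mpr fun u hu ↦ ?_⟩
    have hmu : m⁻¹ • u ∈ U := hMU ⟨m⁻¹, M.inv_mem hm⟩ hu
    rw [hconj, mul_smul, mul_smul, (mem_fixingSubgroup_iff K).mp hx.2 _ hmu, smul_inv_smul]

theorem exists_smul_ne_self_of_notMem_fixingSubgroup
    (hfaithful : fixingSubgroup K (Set.univ : Set V) = ⊥) {a : A}
    (ha : a ∉ fixingSubgroup A (Set.univ : Set K)) : ∃ v : V, a • v ≠ v := by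
  contrapose! ha
  refine (mem_fixingSubgroup_iff A).mpr fun k _ ↦ ?_
  have hmem : k⁻¹ * a • k ∈ fixingSubgroup K (Set.univ : Set V) :=
    inv_mul_mem_fixingSubgroup_iff.mpr fun x _ ↦ by
      rw [← ha x, ← smul_distrib_smul, ha, ha]
  rw [hfaithful, Subgroup.mem_bot, inv_mul_eq_one] at hmem
  exact hmem.symm

end FaithfulModule

/-- The module `V` has no proper nonzero subgroup stable under both `K` and `A`, i.e. it is
irreducible for the semidirect product of `K` and `A`. -/
def IsJointlyIrreducible (A K V : Type*) [AddCommGroup V] [SMul A V] [SMul K V] : Prop :=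
  ∀ W : AddSubgroup V, SMulInvariant K W → SMulInvariant A W → W = ⊥ ∨ W = ⊤

namespace IsJointlyIrreducible

section Group

variable {A K V : Type*} [Group A] [Group K] [MulDistribMulAction A K] [AddCommGroup V]
  [DistribMulAction K V] [DistribMulAction A V] [SMulDistribClass A K V]

theorem inf_fixingSubgroup_eq_bot (hV : IsJointlyIrreducible A K V)
    (hfaithful : fixingSubgroup K (Set.univ : Set V) = ⊥) {M : Subgroup K} [M.Normal]
    (hAM : SMulInvariant A M) (hM : M ⊔ Subgroup.centralizer (M : Set K) = ⊤)
    {U : AddSubgroup V} (hMU : SMulInvariant M U) (hAU : SMulInvariant A U) (hU : U ≠ ⊥) :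
    M ⊓ fixingSubgroup K (U : Set V) = ⊥ := by
  let L := M ⊓ fixingSubgroup K (U : Set V)
  have : L.Normal := normal_inf_fixingSubgroup hM hMU
  have hAL : SMulInvariant A L := hAM.inf hAU.fixingSubgroup
  have hU_le : U ≤ FixedPoints.addSubgroup L V := fun u hu x ↦
    (mem_fixingSubgroup_iff K).mp x.2.2 u hu
  have hfix : FixedPoints.addSubgroup L V = ⊤ :=
    (hV _ smulInvariant_fixedPoints_of_normal hAL.fixedPoints).resolve_left
      (ne_bot_of_le_ne_bot hU hU_le)
  rw [← le_bot_iff, ← hfaithful]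
  exact fun x hx ↦ (mem_fixingSubgroup_iff K).mpr fun v _ ↦
    (hfix ▸ trivial : v ∈ FixedPoints.addSubgroup L V) ⟨x, hx⟩

end Group

variable {A K V : Type*} [CommGroup A] [Group K] [MulDistribMulAction A K] [AddCommGroup V]
  [DistribMulAction K V] [DistribMulAction A V] [SMulDistribClass A K V] [Finite V]
  {p : ℕ} [Fact p.Prime]

theorem smul_eq_self (hV : IsJointlyIrreducible A K V) (hA : IsPGroup p A)
    (hVp : IsPGroup p (Multiplicative V)) {a : A}
    (ha : a ∈ fixingSubgroup A (Set.univ : Set K)) (v : V) : a • v = v := by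
  have hker := hV (smulSub V a).ker
    (smulInvariant_ker_of_map_smul fun k ↦
      smulSub_smul_of_smul_eq_self ((mem_fixingSubgroup_iff A).mp ha k trivial))
    (smulInvariant_ker_of_map_smul fun b ↦ smulSub_smul_of_commute (Commute.all a b))
  rw [← mem_ker_smulSub]
  rcases hker with hbot | htop
  · by_contra hv
    have hne : (⊤ : AddSubgroup V) ≠ ⊥ := fun h ↦ hv (by rw [hbot, ← h]; trivial)
    obtain ⟨w, -, hw, hfix⟩ := exists_mem_ne_zero_forall_smul_eq_self hA hVp
      .top hne
    exact hw (by rw [← AddSubgroup.mem_bot, ← hbot, mem_ker_smulSub, hfix])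
  · exact htop ▸ trivial

theorem exists_smulSub_ne_zero [Group.IsNilpotent K] (hV : IsJointlyIrreducible A K V)
    (hfaithful : fixingSubgroup K (Set.univ : Set V) = ⊥) (hA : IsPGroup p A)
    (hK : (Nat.card K).Coprime p) (hVp : IsPGroup p (Multiplicative V)) {M : Subgroup K}
    (hM : IsMaximalInvariant A M)
    (hMstab : ∀ U : AddSubgroup V, SMulInvariant M U → SMulInvariant A U →
      HasCentralizingStabilizer A M U)
    {a : A} (ha : a ∈ fixingSubgroup A (M : Set K))
    (ha' : a ∉ fixingSubgroup A (Set.univ : Set K)) :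
    ∃ v : V, smulSub V a v ≠ 0 ∧
      ∀ b : A, b • smulSub V a v = smulSub V a v → b ∈ fixingSubgroup A (M : Set K) := by
  let U := (smulSub V a).range ⊓ (smulSub V a).ker
  have hcomm_M (m : M) (v : V) : smulSub V a (m • v) = m • smulSub V a v :=
    smulSub_smul_of_smul_eq_self ((mem_fixingSubgroup_iff A).mp ha m m.2) v
  have hcomm_A (b : A) (v : V) : smulSub V a (b • v) = b • smulSub V a v :=
    smulSub_smul_of_commute (Commute.all a b) v
  have hMU : SMulInvariant M U :=
    fun m _ hu ↦ ⟨smulInvariant_range_of_map_smul hcomm_M m hu.1,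
      smulInvariant_ker_of_map_smul hcomm_M m hu.2⟩
  have hAU : SMulInvariant A U :=
    fun b _ hu ↦ ⟨smulInvariant_range_of_map_smul hcomm_A b hu.1,
      smulInvariant_ker_of_map_smul hcomm_A b hu.2⟩
  have hU : U ≠ ⊥ := by
    obtain ⟨v, hv⟩ := exists_smul_ne_self_of_notMem_fixingSubgroup hfaithful ha'
    exact range_smulSub_inf_ker_ne_bot hA hVp hv
  have := hM.normal
  have hMU_bot : M ⊓ fixingSubgroup K (U : Set V) = ⊥ :=
    hV.inf_fixingSubgroup_eq_bot hfaithful hM.invariant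
      (hM.sup_centralizer_eq_top hA hK ha ha') hMU hAU hU
  obtain ⟨u, ⟨⟨v, rfl⟩, -⟩, hu⟩ :=
    (hMstab U hMU hAU).exists_mem_forall_mem_fixingSubgroup hM.invariant hMU_bot
  by_cases hv : smulSub V a v = 0
  · obtain ⟨_, ⟨⟨v', rfl⟩, -⟩, hv'⟩ := U.bot_or_exists_ne_zero.resolve_left hU
    exact ⟨v', hv', fun b _ ↦ hu b (by simp [hv])⟩
  · exact ⟨v, hv, hu⟩

theorem hasCentralizingStabilizer [Group.IsNilpotent K] (hV : IsJointlyIrreducible A K V)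
    (hfaithful : fixingSubgroup K (Set.univ : Set V) = ⊥) (hA : IsPGroup p A)
    (hK : (Nat.card K).Coprime p) (hVp : IsPGroup p (Multiplicative V)) {M : Subgroup K}
    (hM : IsMaximalInvariant A M)
    (hMstab : ∀ U : AddSubgroup V, SMulInvariant M U → SMulInvariant A U →
      HasCentralizingStabilizer A M U) :
    HasCentralizingStabilizer A (⊤ : Subgroup K) (⊤ : AddSubgroup V) := by
  by_cases hle : fixingSubgroup A (M : Set K) ≤ fixingSubgroup A (Set.univ : Set K)
  · obtain ⟨v, -, hv⟩ := (hMstab ⊤ .top .top).exists_mem_forall_mem_fixingSubgroup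
      hM.invariant (by simp [hfaithful])
    exact .top_of_forall_mem_fixingSubgroup fun a ha ↦ hle (hv a ha)
  obtain ⟨a₀, ha₀, ha₀'⟩ := SetLike.not_le_iff_exists.mp hle
  obtain ⟨n, ha', hap⟩ := exists_pow_pow_notMem_of_isPGroup hA ha₀'
  have ha := pow_mem ha₀ (p ^ n)
  set a := a₀ ^ p ^ n
  obtain ⟨v, hv, hstab⟩ := hV.exists_smulSub_ne_zero hfaithful hA hK hVp hM hMstab ha ha'
  refine .top_of_forall_mem_fixingSubgroup (v := v) fun b hb ↦ by_contra fun hb' ↦ hv ?_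
  have hbM : b ∈ fixingSubgroup A (M : Set K) := hstab b <| by
    rw [← smulSub_smul_of_commute (Commute.all a b), hb]
  obtain ⟨j, hc', hcp⟩ := exists_pow_pow_notMem_of_isPGroup hA hb'
  obtain ⟨i, hi⟩ := hM.exists_pow_inv_mul_mem_fixingSubgroup hA hK ha hap (pow_mem hbM _) hcp hc'
  have hav := hV.smul_eq_self hA hVp hi v
  rw [mul_smul, inv_smul_eq_iff, ← pow_mul] at hav
  rw [smulSub_apply, hav, sub_eq_zero]
  exact pow_mem (MulAction.mem_stabilizer_iff.mpr hb) _

end IsJointlyIrreducible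

/-! ### The induction -/

theorem card_add_card_lt_of_ne_top {K V : Type*} [Group K] [AddGroup V] [Finite K] [Finite V]
    {H : Subgroup K} {U : AddSubgroup V} (h : H ≠ ⊤ ∨ U ≠ ⊤) :
    Nat.card H + Nat.card U < Nat.card K + Nat.card V := by
  have hH := H.card_le_card_group
  have hU := U.card_le_card_addGroup
  rcases h with hne | hne
  · have := (Subgroup.card_eq_iff_eq_top H).not.mpr hne
    lia
  · have := (AddSubgroup.card_eq_iff_eq_top U).not.mpr hne
    lia

theorem card_quotient_lt_card_of_ne_bot {K : Type*} [Group K] [Finite K] {N : Subgroup K}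
    (hN : N ≠ ⊥) : Nat.card (K ⧸ N) < Nat.card K :=
  N.card_eq_card_quotient_mul_card_subgroup ▸
    lt_mul_of_one_lt_right Nat.card_pos (N.one_lt_card_iff_ne_bot.mpr hN)

section Core

variable {A K V : Type*} [CommGroup A] [Group K] [Finite K] [Group.IsNilpotent K]
  [MulDistribMulAction A K] [AddCommGroup V] [Finite V] [DistribMulAction K V]
  [DistribMulAction A V] [SMulDistribClass A K V] {p : ℕ} [Fact p.Prime]

theorem HasCentralizingStabilizer.top_of_forall_ne_top (hA : IsPGroup p A)
    (hK : (Nat.card K).Coprime p) (hV : IsPGroup p (Multiplicative V))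
    (hfaithful : fixingSubgroup K (Set.univ : Set V) = ⊥)
    (hproper : ∀ (H : Subgroup K) (U : AddSubgroup V), H ≠ ⊤ ∨ U ≠ ⊤ → SMulInvariant A H →
      SMulInvariant H U → SMulInvariant A U → HasCentralizingStabilizer A H U) :
    HasCentralizingStabilizer A (⊤ : Subgroup K) (⊤ : AddSubgroup V) := by
  by_cases hirr : IsJointlyIrreducible A K V
  · cases subsingleton_or_nontrivial K with
    | inl hsub => exact .top_of_forall_mem_fixingSubgroup (v := 0) fun a _ ↦
        (mem_fixingSubgroup_iff A).mpr fun k _ ↦ Subsingleton.elim _ _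
    | inr hnontriv =>
      obtain ⟨M, hM⟩ := IsMaximalInvariant.exists_of_nontrivial A K
      exact hirr.hasCentralizingStabilizer hfaithful hA hK hV hM fun U ↦
        hproper M U (.inl hM.ne_top) hM.invariant
  · simp only [IsJointlyIrreducible, not_forall, not_or] at hirr
    obtain ⟨W, hKW, hAW, hW_bot, hW_top⟩ := hirr
    have hcoprime : (Nat.card V).Coprime (Nat.card K) := by
      obtain ⟨m, hm⟩ := IsPGroup.iff_card.mp hV
      exact hm ▸ (hK.pow_right m).symm
    exact .top_of_reducible hcoprime hKW hAW hW_bot hW_top fun U hU hKU hAU ↦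
      hproper ⊤ U (.inr hU) (.of_characteristic ⊤) (hKU.subgroup ⊤) hAU

theorem hasCentralizingStabilizer_of_isNilpotent (hA : IsPGroup p A)
    (hK : (Nat.card K).Coprime p) (hV : IsPGroup p (Multiplicative V)) :
    HasCentralizingStabilizer A (⊤ : Subgroup K) (⊤ : AddSubgroup V) := by
  induction hn : Nat.card K + Nat.card V using Nat.strong_induction_on generalizing K V with
  | _ n ih
  subst hn
  by_cases hfaithful : fixingSubgroup K (Set.univ : Set V) = ⊥
  · refine .top_of_forall_ne_top hA hK hV hfaithful fun H U hHU_top hAH hHU hAU ↦ ?_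
    let := hAH.mulDistribMulAction
    let := hHU.distribMulAction
    let := hAU.distribMulAction
    have : SMulDistribClass A H U :=
      ⟨fun a h u ↦ Subtype.ext (smul_distrib_smul a (h : K) (u : V))⟩
    exact .of_subtype hAH hHU hAU <| ih _ (card_add_card_lt_of_ne_top hHU_top)
      (hK.coprime_dvd_left H.card_subgroup_dvd_card)
      (hV.to_subgroup (AddSubgroup.toSubgroup U)) rfl
  · let N := fixingSubgroup K (Set.univ : Set V)
    have hN : N.Normal := SMulInvariant.top.normal_fixingSubgroup
    have hAN : SMulInvariant A N := SMulInvariant.top.fixingSubgroup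
    let := hAN.mulDistribMulActionQuotient
    let := distribMulActionQuotient (le_refl N)
    have : SMulDistribClass A (K ⧸ N) V :=
      ⟨fun a q v ↦ q.inductionOn fun k ↦ smul_distrib_smul a k v⟩
    exact .of_quotient hAN le_rfl <|
      ih _ (Nat.add_lt_add_right (card_quotient_lt_card_of_ne_bot hfaithful) _)
        (hK.coprime_dvd_left N.card_quotient_dvd_card) hV rfl

end Core

/-! ### Regular orbits -/

theorem isAddTorsion_of_isPGroup_multiplicative {V : Type*} [AddGroup V] {p : ℕ} [Fact p.Prime]
    (hV : IsPGroup p (Multiplicative V)) : IsAddTorsion V := fun v ↦ by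
  obtain ⟨n, hn⟩ := hV (Multiplicative.ofAdd v)
  exact isOfFinAddOrder_iff_nsmul_eq_zero.mpr
    ⟨p ^ n, pow_pos (Fact.out : p.Prime).pos n, Multiplicative.ofAdd.injective hn⟩

theorem isPGroup_multiplicative_of_charP (F V : Type*) [Semiring F] [AddCommGroup V] [Module F V]
    (p : ℕ) [CharP F p] : IsPGroup p (Multiplicative V) := fun v ↦ ⟨1, by
  rw [pow_one, ← ofAdd_toAdd v, ← ofAdd_nsmul, ← Nat.cast_smul_eq_nsmul F, CharP.cast_eq_zero,
    zero_smul, ofAdd_zero]⟩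

section RegularOrbit

variable {G V : Type*} [Group G] [Finite G] [AddCommGroup V] [DistribMulAction G V]
  [FaithfulSMul G V]

theorem exists_finite_smulInvariant_fixingSubgroup_eq_bot (hV : IsAddTorsion V) :
    ∃ W : AddSubgroup V, Finite W ∧ SMulInvariant G W ∧ fixingSubgroup G (W : Set V) = ⊥ := by
  have hmoved (g : G) : ∃ v : V, g • v = v → g = 1 := by
    by_contra! h
    exact (h 0).2 (FaithfulSMul.eq_of_smul_eq_smul fun v ↦ by rw [(h v).1, one_smul])
  choose v hv using hmoved
  let S : Set V := Set.range fun x : G × G ↦ x.1 • v x.2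
  refine ⟨AddSubgroup.closure S, ?_, fun g ↦ ?_, ?_⟩
  · have := AddGroup.closure_finite_fg S
    exact AddCommGroup.finite_of_fg_isAddTorsion _ (hV.addSubgroup _)
  · suffices AddSubgroup.closure S ≤
      (AddSubgroup.closure S).comap (DistribSMul.toAddMonoidHom V g) from this
    rw [AddSubgroup.closure_le]
    rintro _ ⟨⟨h, k⟩, rfl⟩
    exact AddSubgroup.subset_closure ⟨(g * h, k), mul_smul g h (v k)⟩
  · refine (Subgroup.eq_bot_iff_forall _).mpr fun g hg ↦ hv g ?_
    exact (mem_fixingSubgroup_iff G).mp hg _ (AddSubgroup.subset_closure ⟨(1, g), one_smul G _⟩)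

variable [Group.IsSolvable G] {p : ℕ} [Fact p.Prime]

theorem exists_forall_mem_smul_eq_self_imp_eq_one [Finite V]
    (hOp : ∀ N : Subgroup G, N.Normal → IsPGroup p N → N = ⊥) {A : Subgroup G}
    [IsMulCommutative A] (hA : IsPGroup p A) (hV : IsPGroup p (Multiplicative V)) :
    ∃ v : V, ∀ a ∈ A, a • v = v → a = 1 := by
  obtain ⟨N, hN, hnil, hcent⟩ := exists_normal_isNilpotent_centralizer_le G
  have hNp := card_coprime_of_normal_of_isNilpotent hOp N
  let : MulDistribMulAction A N :=
    MulDistribMulAction.compHom N ((MulAut.conjNormal (H := N)).comp A.subtype)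
  have hconj (a : A) (n : N) : ((a • n : N) : G) = a * n * (a : G)⁻¹ := MulAut.conjNormal_apply _ _
  have : SMulDistribClass A N V := ⟨fun a n v ↦ by
    simp only [Subgroup.smul_def, hconj, ← mul_smul, inv_mul_cancel_right]⟩
  have hfaithful : ⊤ ⊓ fixingSubgroup N ((⊤ : AddSubgroup V) : Set V) = ⊥ := by
    refine (Subgroup.eq_bot_iff_forall _).mpr fun n hn ↦ FaithfulSMul.eq_of_smul_eq_smul
      fun v : V ↦ ?_
    rw [(mem_fixingSubgroup_iff N).mp hn.2 v trivial, one_smul]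
  obtain ⟨v, -, hv⟩ := (hasCentralizingStabilizer_of_isNilpotent (V := V) hA hNp hV
    ).exists_mem_forall_mem_fixingSubgroup (.of_characteristic ⊤) hfaithful
  refine ⟨v, fun a ha hav ↦ ?_⟩
  have ha_cent : a ∈ Subgroup.centralizer (N : Set G) := fun n hn ↦ by
    have hfix := (mem_fixingSubgroup_iff A).mp (hv ⟨a, ha⟩ hav) ⟨n, hn⟩ trivial
    exact (mul_inv_eq_iff_eq_mul.mp ((hconj _ _).symm.trans (congrArg Subtype.val hfix))).symm
  obtain ⟨k, hk⟩ := hA ⟨a, ha⟩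
  have hpow : a ^ p ^ k = 1 := congrArg Subtype.val hk
  exact congrArg Subtype.val <| eq_one_of_pow_eq_one_of_coprime_card
    (x := (⟨a, hcent ha_cent⟩ : N)) (hNp.pow_right k) (Subtype.ext hpow)

theorem espuelas_regular_orbit_general
    (hOp : ∀ N : Subgroup G, N.Normal → IsPGroup p N → N = ⊥) {A : Subgroup G}
    [IsMulCommutative A] (hA : IsPGroup p A) (hV : IsPGroup p (Multiplicative V)) :
    ∃ v : V, ∀ a ∈ A, a • v = v → a = 1 := by
  obtain ⟨W, hWfin, hGW, hfix⟩ := 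
    exists_finite_smulInvariant_fixingSubgroup_eq_bot (G := G)
      (isAddTorsion_of_isPGroup_multiplicative hV)
  let := hGW.distribMulAction
  have : FaithfulSMul G W := ⟨fun {g h} hgh ↦ by
    rw [← inv_mul_eq_one, ← Subgroup.mem_bot, ← hfix, inv_mul_mem_fixingSubgroup_iff]
    exact fun x hx ↦ (congrArg Subtype.val (hgh ⟨x, hx⟩)).symm⟩
  obtain ⟨w, hw⟩ := exists_forall_mem_smul_eq_self_imp_eq_one (V := W) hOp hA
    (hV.to_subgroup (AddSubgroup.toSubgroup W))
  exact ⟨w, fun a ha haw ↦ hw a ha (Subtype.ext haw)⟩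

end RegularOrbit

/-- Espuelas' regular orbit theorem (Theorem 3.1 of the paper). Let `G` be a finite
solvable group with `O_p(G) = 1` and `A` an abelian `p`-subgroup of `G`. If `V` is a
finite-dimensional faithful `G`-module over a finite field of characteristic `p`,
then some `v ∈ V` lies in a regular `A`-orbit, i.e. its stabilizer in `A` is trivial. -/
theorem espuelas_regular_orbit (p : ℕ) (hp : p.Prime) (G : Type*) [Group G] [Finite G]
    (hsolv : IsSolvable G)
    (hOp : ∀ N : Subgroup G, N.Normal → IsPGroup p N → N = ⊥)
    (A : Subgroup G) (hAab : ∀ a b : A, a * b = b * a) (hAp : IsPGroup p A)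
    (F : Type*) [Field F] [Finite F] (hchar : CharP F p)
    (V : Type*) [AddCommGroup V] [Module F V] [FiniteDimensional F V]
    (ρ : Representation F G V) (hfaithful : Function.Injective ρ) :
    ∃ v : V, ∀ a : G, a ∈ A → ρ a v = v → a = 1 := by
  have : Group.IsSolvable G := hsolv
  have : Fact p.Prime := ⟨hp⟩
  have : IsMulCommutative A := ⟨⟨hAab⟩⟩
  let : DistribMulAction G V := DistribMulAction.compHom V ρ
  have : FaithfulSMul G V := ⟨fun h ↦ hfaithful (LinearMap.ext h)⟩
  exact espuelas_regular_orbit_general hOp hAp (isPGroup_multiplicative_of_charP F V p)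
end

section
/- Let p be a prime and let G be a finite solvable group of order divisible by p in which every normal p-subgroup is trivial (i.e. O_p(G) = 1). Let F be a finite field of characteristic p and let V be a finite-dimensional F-vector space on which G acts faithfully by F-linear automorphisms, and suppose V is a semisimple (completely reducible) module for this action. Suppose a Sylow p-subgroup P of G is abelian. Then there exists v ∈ V whose P-orbit has size exactly p. -/
/-!
Since `O_p(G) = 1` and `G` is solvable, a maximal normal subgroup `K` of order prime to `p` contains
its centralizer, so `P` acts nontrivially on `K` by conjugation. A finite commutative group acts on
a simple module through a cyclic quotient; together with the lifting of fixed points in coprime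
action this yields `B ≤ P` with `P ⧸ B` cyclic such that some `y ∈ P` does not commute with some
`k ∈ C_K(B)`.

If `y` fixed every vector of `V^B`, so would `t = ⁅y, k⁆ ∈ K`, which commutes with `B`. For `w ∈ V`
with `u = t w - w` nonzero and in `V^B`, the powers of `t` would then translate `w` by the multiples
of `u`, which is impossible as `u` has order `p` and `t` has order prime to `p`. Hence `y` moves
`V^B`. If `x` generates `P` modulo `B`, choose `w ∈ V^B` such that `u = x w - w` is nonzero and
fixed by `P`: then `x ^ n w = w + n u`, and the orbit of `w` is the coset `w + ⟨u⟩`, of size `p`.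
-/

section PrimeToP

variable {G : Type*} [Group G]

theorem exists_normal_le_not_le_commutator_le [Group.IsSolvable G] {C K : Subgroup G} [C.Normal]
    (hCK : ¬ C ≤ K) : ∃ D : Subgroup G, D.Normal ∧ D ≤ C ∧ ¬ D ≤ K ∧ ⁅D, D⁆ ≤ K := by
  by_contra! hcomm
  have hderived (n : ℕ) : ∃ D : Subgroup G, D.Normal ∧ D ≤ C ∧ ¬ D ≤ K ∧ D ≤ derivedSeries G n := by
    induction n with
    | zero => exact ⟨C, inferInstance, le_rfl, hCK, le_top⟩
    | succ n ih =>
      obtain ⟨D, hD, hDC, hDK, hDn⟩ := ih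
      exact ⟨⁅D, D⁆, inferInstance, (Subgroup.commutator_le_left D D).trans hDC,
        hcomm D hD hDC hDK, Subgroup.commutator_mono hDn hDn⟩
  obtain ⟨n, hn⟩ := Group.IsSolvable.solvable (G := G)
  obtain ⟨D, -, -, hDK, hDn⟩ := hderived n
  exact hDK ((hDn.trans hn.le).trans bot_le)

theorem isNilpotent_of_commutator_le_centralizer {D : Subgroup G}
    (hD : ⁅D, D⁆ ≤ Subgroup.centralizer D) : Group.IsNilpotent D := by
  refine Subgroup.isNilpotent_of_ker_le_center (Abelianization.of (G := D)) fun c hc ↦ ?_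
  rw [Abelianization.ker_of] at hc
  have hcD : (c : G) ∈ ⁅D, D⁆ := by
    rw [← Subgroup.map_subtype_commutator]
    exact Subgroup.mem_map_of_mem _ hc
  exact Subgroup.mem_center_iff.mpr fun d ↦ Subtype.ext (hD hcD d d.2)

theorem card_sup_dvd_card_mul_card (H K : Subgroup G) [K.Normal] :
    Nat.card (H ⊔ K : Subgroup G) ∣ Nat.card K * Nat.card H := by
  rw [← Subgroup.relIndex_bot_left, ← Subgroup.relIndex_mul_relIndex ⊥ K _ bot_le le_sup_right,
    Subgroup.relIndex_bot_left, Subgroup.relIndex_sup_right]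
  exact mul_dvd_mul_left _ (Subgroup.relIndex_dvd_card K H)

variable {p : ℕ} [Fact p.Prime] [Finite G]

theorem not_dvd_card_of_isNilpotent (hOp : ∀ N : Subgroup G, N.Normal → IsPGroup p N → N = ⊥)
    (D : Subgroup G) [D.Normal] [Group.IsNilpotent D] : ¬ p ∣ Nat.card D := by
  obtain ⟨Q⟩ : Nonempty (Sylow p D) := inferInstance
  have : (Q : Subgroup D).Characteristic := Q.characteristic_of_normal inferInstance
  have hQ : (Q : Subgroup D) = ⊥ :=
    (Subgroup.map_eq_bot_iff_of_injective _ D.subtype_injective).mp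
      (hOp _ inferInstance (Q.2.map D.subtype))
  exact fun hdvd ↦ Q.ne_bot_of_dvd_card hdvd hQ

theorem exists_normal_not_dvd_card_centralizer_le [Group.IsSolvable G]
    (hOp : ∀ N : Subgroup G, N.Normal → IsPGroup p N → N = ⊥) :
    ∃ K : Subgroup G, K.Normal ∧ ¬ p ∣ Nat.card K ∧ Subgroup.centralizer K ≤ K := by
  have hp : p.Prime := Fact.out
  obtain ⟨K, -, ⟨hKn, hKp⟩, hKmax⟩ :=
    (Set.toFinite {K : Subgroup G | K.Normal ∧ ¬ p ∣ Nat.card K}).exists_le_maximal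
      (a := ⊥) ⟨inferInstance, by simpa using hp.ne_one⟩
  refine ⟨K, hKn, hKp, ?_⟩
  by_contra hCK
  obtain ⟨D, hDn, hDC, hDK, hDD⟩ := exists_normal_le_not_le_commutator_le hCK
  have : Group.IsNilpotent D := isNilpotent_of_commutator_le_centralizer
    (hDD.trans (Subgroup.le_centralizer_iff.mp hDC))
  have hDp : ¬ p ∣ Nat.card D := not_dvd_card_of_isNilpotent hOp D
  have hsup : ¬ p ∣ Nat.card (D ⊔ K : Subgroup G) := fun hdvd ↦
    (hp.dvd_mul.mp (hdvd.trans (card_sup_dvd_card_mul_card D K))).elim hKp hDp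
  exact hDK (le_sup_left.trans (hKmax ⟨inferInstance, hsup⟩ le_sup_right))

end PrimeToP

section CyclicQuotient

variable {P : Type*} [CommGroup P] [Finite P]

theorem exists_isCyclic_quotient_forall_smul_eq {R M : Type*} [CommRing R] [AddCommGroup M]
    [Module R M] [IsSimpleModule R M] (f : P →* R) :
    ∃ B : Subgroup P, IsCyclic (P ⧸ B) ∧ ∀ b ∈ B, ∀ m : M, f b • m = m := by
  have : (Module.annihilator R M).IsMaximal := IsSimpleModule.annihilator_isMaximal
  have := Ideal.Quotient.isDomain (Module.annihilator R M)
  let φ : P →* (R ⧸ Module.annihilator R M)ˣ :=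
    ((Ideal.Quotient.mk (Module.annihilator R M) : R →* _).comp f).toHomUnits
  have : Finite φ.range := .of_surjective _ φ.rangeRestrict_surjective
  refine ⟨φ.ker, (QuotientGroup.quotientKerEquivRange φ).isCyclic.mpr inferInstance,
    fun b hb m ↦ ?_⟩
  have hfb : Ideal.Quotient.mk (Module.annihilator R M) (f b) = Ideal.Quotient.mk _ 1 :=
    congrArg Units.val hb
  have hann := Module.mem_annihilator.mp (Ideal.Quotient.eq.mp hfb) m
  rwa [sub_smul, one_smul, sub_eq_zero] at hann

theorem exists_submodule_ne_top_and_isCyclic_quotient {k A : Type*} [CommRing k]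
    [AddCommGroup A] [Module k A] [Module.Finite k A] [Nontrivial A] (ρ : Representation k P A) :
    ∃ M : Submodule k A, M ≠ ⊤ ∧ (∀ x : P, ∀ a ∈ M, ρ x a ∈ M) ∧
      ∃ B : Subgroup P, IsCyclic (P ⧸ B) ∧ ∀ b ∈ B, ∀ a : A, ρ b a - a ∈ M := by
  have : Nontrivial ρ.asModule := ‹Nontrivial A›
  have : Module.Finite (MonoidAlgebra k P) ρ.asModule := .of_restrictScalars_finite k _ _
  obtain ⟨M, hM⟩ := IsCoatomic.exists_coatom (α := Submodule (MonoidAlgebra k P) ρ.asModule)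
  have : IsSimpleModule (MonoidAlgebra k P) (ρ.asModule ⧸ M) := isSimpleModule_iff_isCoatom.mpr hM
  obtain ⟨B, hcyc, hB⟩ :=
    exists_isCyclic_quotient_forall_smul_eq (M := ρ.asModule ⧸ M) (MonoidAlgebra.of k P)
  have of_smul (x : P) (a : ρ.asModule) : MonoidAlgebra.of k P x • a = ρ x a :=
    (ρ.asModuleEquiv_symm_map_rho x a).symm
  refine ⟨M.restrictScalars k, fun h ↦ hM.1 ((Submodule.restrictScalars_eq_top_iff k _ _).mp h),
    fun x a ha ↦ ?_, B, hcyc, fun b hb a ↦ ?_⟩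
  · exact of_smul x a ▸ M.smul_mem _ ha
  · exact of_smul b a ▸ (Submodule.Quotient.eq M).mp (hB b hb (Submodule.Quotient.mk a))

/-- The action on `Abelianization H` induced by an action on `H` by group automorphisms. -/
abbrev abelianizationMulDistribMulAction {M H : Type*} [Monoid M] [Group H]
    [MulDistribMulAction M H] : MulDistribMulAction M (Abelianization H) where
  smul x := Abelianization.map (MulDistribMulAction.toMonoidHom H x)
  one_smul := QuotientGroup.mk_surjective.forall.mpr fun h ↦
    congrArg Abelianization.of (one_smul M h)
  mul_smul x y := QuotientGroup.mk_surjective.forall.mpr fun h ↦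
    congrArg Abelianization.of (mul_smul x y h)
  smul_one x := map_one (Abelianization.map (MulDistribMulAction.toMonoidHom H x))
  smul_mul x := map_mul (Abelianization.map (MulDistribMulAction.toMonoidHom H x))

theorem exists_subgroup_ne_top_and_isCyclic_quotient {H : Type*} [Group H] [Group.FG H]
    [Nontrivial H] [Group.IsSolvable H] [MulDistribMulAction P H] :
    ∃ N : Subgroup H, N ≠ ⊤ ∧ (∀ x : P, ∀ h ∈ N, x • h ∈ N) ∧
      ∃ B : Subgroup P, IsCyclic (P ⧸ B) ∧ ∀ b ∈ B, ∀ h : H, h⁻¹ * b • h ∈ N := by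
  let _ : MulDistribMulAction P (Abelianization H) := abelianizationMulDistribMulAction
  have : Nontrivial (Abelianization H) :=
    QuotientGroup.nontrivial_iff.mpr (Group.IsSolvable.commutator_lt_top_of_nontrivial H).ne
  have : Group.FG (Abelianization H) := QuotientGroup.fg (commutator H)
  have : Module.Finite ℤ (Additive (Abelianization H)) :=
    Module.Finite.iff_addGroup_fg.mpr inferInstance
  obtain ⟨M, hM, hinv, B, hcyc, hB⟩ := exists_submodule_ne_top_and_isCyclic_quotient
    (Representation.ofMulDistribMulAction P (Abelianization H))
  have of_surjective : Function.Surjective (Abelianization.of (G := H)) :=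
    QuotientGroup.mk_surjective
  refine ⟨(AddSubgroup.toSubgroup' M.toAddSubgroup).comap Abelianization.of, ?_,
    fun x h hh ↦ hinv x _ hh, B, hcyc, fun b hb h ↦ ?_⟩
  · intro htop
    refine hM (eq_top_iff.mpr fun a _ ↦ ?_)
    obtain ⟨h, rfl⟩ := of_surjective a
    exact htop.ge (Subgroup.mem_top h)
  · have hsub := hB b hb (Additive.ofMul (Abelianization.of h))
    rwa [sub_eq_neg_add] at hsub

end CyclicQuotient

section CoprimeAction

variable {p : ℕ} [Fact p.Prime]

theorem exists_mem_forall_smul_mul_eq {B H : Type*} [Group B] [Group H] [MulDistribMulAction B H]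
    (hB : IsPGroup p B) {N : Subgroup H} (hcop : ¬ p ∣ Nat.card N)
    (hN : ∀ b : B, ∀ n ∈ N, b • n ∈ N) {h : H} (hh : ∀ b : B, h⁻¹ * b • h ∈ N) :
    ∃ n ∈ N, ∀ b : B, b • (h * n) = h * n := by
  let coset : SubMulAction B H :=
    { carrier := {g | h⁻¹ * g ∈ N}
      smul_mem' b g hg := by
        simpa [mul_assoc] using N.mul_mem (hh b) (hN b _ hg) }
  have cosetEquiv : coset ≃ N := (Equiv.mulLeft h⁻¹).subtypeEquiv fun _ ↦ Iff.rfl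
  obtain ⟨⟨g, hg⟩, hfix⟩ := hB.nonempty_fixed_point_of_prime_not_dvd_card coset
    (Nat.card_congr cosetEquiv ▸ hcop)
  exact ⟨h⁻¹ * g, hg, fun b ↦ by simpa using congrArg Subtype.val (hfix b)⟩

theorem exists_isCyclic_quotient_and_smul_ne_of_smul_ne {P H : Type*} [CommGroup P] [Finite P]
    [Group H] [Finite H] [Group.IsSolvable H] [MulDistribMulAction P H] (hP : IsPGroup p P)
    (hcop : ¬ p ∣ Nat.card H) {x : P} {h : H} (hx : x • h ≠ h) :
    ∃ B : Subgroup P, IsCyclic (P ⧸ B) ∧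
      ∃ k : H, (∀ b ∈ B, b • k = k) ∧ ∃ y : P, y • k ≠ k := by
  induction hn : Nat.card H using Nat.strong_induction_on generalizing H x with | _ n ih
  subst hn
  have : Nontrivial H := ⟨_, _, hx⟩
  obtain ⟨N, hNtop, hN, B, hcyc, hB⟩ :=
    exists_subgroup_ne_top_and_isCyclic_quotient (P := P) (H := H)
  have hcopN : ¬ p ∣ Nat.card N := fun hdvd ↦ hcop (hdvd.trans N.card_subgroup_dvd_card)
  by_cases hfix : ∀ y : P, ∀ n ∈ N, y • n = n
  · obtain ⟨n, hn, hhn⟩ := exists_mem_forall_smul_mul_eq (hP.to_subgroup B) hcopN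
      (fun b ↦ hN b) (fun b ↦ hB b b.2 h)
    refine ⟨B, hcyc, h * n, fun b hb ↦ hhn ⟨b, hb⟩, x, fun hxn ↦ hx ?_⟩
    rwa [smul_mul', hfix x n hn, mul_left_inj] at hxn
  · push Not at hfix
    obtain ⟨y, n, hn, hyn⟩ := hfix
    let _ : SMul P N := ⟨fun z n ↦ ⟨z • (n : H), hN z n n.2⟩⟩
    let _ : MulDistribMulAction P N :=
      N.subtype_injective.mulDistribMulAction N.subtype fun _ _ ↦ rfl
    have hlt : Nat.card N < Nat.card H :=
      lt_of_not_ge fun hle ↦ hNtop (N.eq_top_of_le_card hle)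
    obtain ⟨B, hcyc, m, hm, z, hz⟩ := ih _ hlt (H := N) hcopN (x := y) (h := ⟨n, hn⟩)
      (fun h ↦ hyn (congrArg Subtype.val h)) rfl
    exact ⟨B, hcyc, m, fun b hb ↦ congrArg Subtype.val (hm b hb), z,
      fun h ↦ hz (Subtype.ext h)⟩

end CoprimeAction

section FixedVectors

variable {p : ℕ} [Fact p.Prime] {V : Type*} [AddCommGroup V]

section PGroup

variable {B : Type*} [Group B] [Finite B] [DistribMulAction B V]

theorem exists_ne_zero_forall_smul_eq (hB : IsPGroup p B) (hV : ∀ v : V, p • v = 0)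
    {W : AddSubgroup V} (hW : ∀ b : B, ∀ w ∈ W, b • w ∈ W) (hne : W ≠ ⊥) :
    ∃ w ∈ W, w ≠ 0 ∧ ∀ b : B, b • w = w := by
  obtain ⟨v, hvW, hv⟩ := W.bot_or_exists_ne_zero.resolve_left hne
  let U : AddSubgroup V := AddSubgroup.closure (MulAction.orbit B v)
  have hvU : v ∈ U := AddSubgroup.subset_closure (MulAction.mem_orbit_self v)
  have hUW : U ≤ W := (AddSubgroup.closure_le W).mpr (by rintro _ ⟨b, rfl⟩; exact hW b v hvW)
  let S : SubMulAction B V :=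
    { carrier := U
      smul_mem' b u hu := by
        have hle : U ≤ U.comap (DistribSMul.toAddMonoidHom V b) :=
          (AddSubgroup.closure_le _).mpr fun w hw ↦
            AddSubgroup.subset_closure (MulAction.mem_orbit_of_mem_orbit b hw)
        exact hle hu }
  have : Finite (MulAction.orbit B v) := (Set.finite_range _).to_subtype
  have : AddGroup.FG U := AddGroup.closure_finite_fg (MulAction.orbit B v)
  have : Finite U := AddCommGroup.finite_of_fg_isAddTorsion U fun u ↦
    isOfFinAddOrder_iff_nsmul_eq_zero.mpr ⟨p, (Fact.out : p.Prime).pos, Subtype.ext (hV u)⟩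
  have hdvd : p ∣ Nat.card U := by
    rw [← addOrderOf_eq_prime (hV v) hv]
    exact U.addOrderOf_dvd_natCard hvU
  obtain ⟨⟨w, hw⟩, hfix, hne⟩ := hB.exists_fixed_point_of_prime_dvd_card_of_fixed_point S hdvd
    (a := ⟨0, U.zero_mem⟩) fun b ↦ Subtype.ext (smul_zero b)
  exact ⟨w, hUW hw, fun h ↦ hne (Subtype.ext h.symm), fun b ↦ congrArg Subtype.val (hfix b)⟩

theorem exists_map_ne_zero_forall_smul_map_eq {V' : Type*} [AddCommGroup V']
    [DistribMulAction B V'] (hB : IsPGroup p B) (hV' : ∀ v : V', p • v = 0) {W : AddSubgroup V}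
    (hW : ∀ b : B, ∀ w ∈ W, b • w ∈ W) {f : V →+ V'} (hf : ∀ (b : B) (v : V), f (b • v) = b • f v)
    {v : V} (hvW : v ∈ W) (hv : f v ≠ 0) :
    ∃ w ∈ W, f w ≠ 0 ∧ ∀ b : B, b • f w = f w := by
  have hinv : ∀ b : B, ∀ u ∈ W.map f, b • u ∈ W.map f := by
    rintro b _ ⟨w, hw, rfl⟩
    exact ⟨b • w, hW b w hw, hf b w⟩
  obtain ⟨_, ⟨w, hw, rfl⟩, hne, hfix⟩ := exists_ne_zero_forall_smul_eq hB hV' hinv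
    fun hbot ↦ hv ((AddSubgroup.mem_bot).mp (hbot ▸ AddSubgroup.mem_map_of_mem f hvW))
  exact ⟨w, hw, hne, hfix⟩

end PGroup

section Group

open scoped commutatorElement

variable {G : Type*} [Group G] [DistribMulAction G V]

theorem zpow_smul_eq_add_zsmul {g : G} {v u : V} (hv : g • v = v + u) (hu : g • u = u) (n : ℤ) :
    g ^ n • v = v + n • u := by
  have hinv : g⁻¹ • v = v - u := by rw [inv_smul_eq_iff, smul_sub, hv, hu, add_sub_cancel_right]
  have hpow (m : ℤ) : g ^ m • u = u := zpow_mem (K := MulAction.stabilizer G u) hu m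
  induction n using Int.induction_on with
  | zero => simp
  | succ n ih => rw [zpow_add_one, mul_smul, hv, smul_add, ih, hpow, add_one_zsmul, add_assoc]
  | pred n ih =>
    rw [zpow_sub_one, mul_smul, hinv, smul_sub, ih, hpow, sub_one_zsmul, add_sub_assoc,
      sub_eq_add_neg]

theorem smul_eq_of_forall_fixed_smul_eq {B : Subgroup G} [Finite B] (hB : IsPGroup p B)
    (hV : ∀ v : V, p • v = 0) {t : G} (htB : t ∈ Subgroup.centralizer B) (ht : ¬ p ∣ orderOf t)
    (hfix : ∀ v : V, (∀ b ∈ B, b • v = v) → t • v = v) (v : V) : t • v = v := by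
  by_contra hv
  have hcomm (b : B) (w : V) : t • b • w = b • t • w := by
    simp only [Subgroup.smul_def, smul_smul, Subgroup.mem_centralizer_iff.mp htB b b.2]
  obtain ⟨w, -, hw, hwB⟩ := exists_map_ne_zero_forall_smul_map_eq hB hV (W := ⊤)
    (fun _ _ _ ↦ AddSubgroup.mem_top _)
    (f := DistribSMul.toAddMonoidHom V t - AddMonoidHom.id V)
    (fun b w ↦ by simp [smul_sub, hcomm]) (AddSubgroup.mem_top v) (by simpa [sub_eq_zero] using hv)
  set u := (DistribSMul.toAddMonoidHom V t - AddMonoidHom.id V) w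
  have htu : t • u = u := hfix u fun b hb ↦ hwB ⟨b, hb⟩
  have htw : t • w = w + u := by simp [u]
  have hord : orderOf t • u = 0 := by
    simpa using zpow_smul_eq_add_zsmul htw htu (orderOf t)
  exact ht (addOrderOf_eq_prime (hV u) hw ▸ addOrderOf_dvd_of_nsmul_eq_zero hord)

theorem exists_forall_smul_eq_and_smul_ne [FaithfulSMul G V] {B : Subgroup G} [Finite B]
    (hB : IsPGroup p B) (hV : ∀ v : V, p • v = 0) {y h : G} (hy : y ∈ Subgroup.centralizer B)
    (hh : h ∈ Subgroup.centralizer B) (hne : ⁅y, h⁆ ≠ 1) (hord : ¬ p ∣ orderOf ⁅y, h⁆) :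
    ∃ v : V, (∀ b ∈ B, b • v = v) ∧ y • v ≠ v := by
  by_contra! hyfix
  refine hne (eq_of_smul_eq_smul (α := V) fun v ↦ ?_)
  rw [one_smul]
  refine smul_eq_of_forall_fixed_smul_eq hB hV
    (mul_mem (mul_mem (mul_mem hy hh) (inv_mem hy)) (inv_mem hh)) hord (fun w hw ↦ ?_) v
  have hhw : ∀ b ∈ B, b • h⁻¹ • w = h⁻¹ • w := fun b hb ↦ by
    rw [smul_smul, Subgroup.mem_centralizer_iff.mp (inv_mem hh) b hb, mul_smul, hw b hb]
  calc ⁅y, h⁆ • w = y • h • y⁻¹ • h⁻¹ • w := by simp only [commutatorElement_def, mul_smul]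
    _ = y • h • h⁻¹ • w := by rw [inv_smul_eq_iff.mpr (hyfix _ hhw).symm]
    _ = w := by rw [smul_inv_smul, hyfix w hw]

theorem orbit_eq_image_zmultiples {B : Subgroup G} [B.Normal] {w u : V}
    (hw : ∀ b ∈ B, b • w = w) {x : G} (hx : ∀ q : G ⧸ B, q ∈ Subgroup.zpowers (x : G ⧸ B))
    (hxw : x • w = w + u) (hxu : x • u = u) :
    MulAction.orbit G w = (w + ·) '' (AddSubgroup.zmultiples u) := by
  have hpow := zpow_smul_eq_add_zsmul hxw hxu
  apply Set.Subset.antisymm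
  · rintro _ ⟨y, rfl⟩
    obtain ⟨n, hn⟩ := Subgroup.mem_zpowers_iff.mp (hx y)
    have hb : (x ^ n)⁻¹ * y ∈ B := QuotientGroup.eq.mp hn
    refine ⟨n • u, ⟨n, rfl⟩, ?_⟩
    change w + n • u = y • w
    rw [← hpow n, eq_comm, ← inv_smul_eq_iff, smul_smul, hw _ hb]
  · rintro _ ⟨_, ⟨n, rfl⟩, rfl⟩
    exact ⟨x ^ n, hpow n⟩

end Group

section CommGroup

variable {P : Type*} [CommGroup P] [DistribMulAction P V]

theorem exists_natCard_orbit_eq_prime [Finite P] (hP : IsPGroup p P) (hV : ∀ v : V, p • v = 0)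
    {B : Subgroup P} [IsCyclic (P ⧸ B)] {v : V} (hvB : ∀ b ∈ B, b • v = v) {y : P}
    (hyv : y • v ≠ v) : ∃ w : V, Nat.card (MulAction.orbit P w) = p := by
  obtain ⟨q, hx⟩ := IsCyclic.exists_generator (α := P ⧸ B)
  obtain ⟨x, rfl⟩ := QuotientGroup.mk_surjective q
  have hxv : x • v ≠ v := fun hxv ↦ by
    have horbit := orbit_eq_image_zmultiples (u := 0) hvB hx (by rw [hxv, add_zero]) (smul_zero x)
    have hyorbit := horbit ▸ MulAction.mem_orbit v y
    exact hyv (by simpa [eq_comm] using hyorbit)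
  obtain ⟨w, hwB, hw, hwP⟩ := exists_map_ne_zero_forall_smul_map_eq hP hV
    (W := FixedPoints.addSubgroup B V)
    (fun z w hw b ↦ by rw [smul_comm, hw b])
    (f := DistribSMul.toAddMonoidHom V x - AddMonoidHom.id V)
    (fun b w ↦ by simp [smul_sub, smul_comm x b]) (fun b ↦ hvB b b.2)
    (by simpa [sub_eq_zero] using hxv)
  set u := (DistribSMul.toAddMonoidHom V x - AddMonoidHom.id V) w
  refine ⟨w, ?_⟩
  rw [orbit_eq_image_zmultiples (u := u) (fun b hb ↦ hwB ⟨b, hb⟩) hx (by simp [u]) (hwP x),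
    Nat.card_image_of_injective (add_right_injective w)]
  exact (Nat.card_zmultiples u).trans (addOrderOf_eq_prime (hV u) hw)

end CommGroup

end FixedVectors

section SmallOrbit

open scoped commutatorElement IsMulCommutative

variable {p : ℕ} [Fact p.Prime] {G : Type*} [Group G]

theorem exists_commutatorElement_ne_one_of_centralizer_le {K P : Subgroup G}
    (hK : ¬ p ∣ Nat.card K) (hKC : Subgroup.centralizer K ≤ K) (hP : IsPGroup p P)
    (hPne : P ≠ ⊥) : ∃ x ∈ P, ∃ h ∈ K, ⁅x, h⁆ ≠ 1 := by
  by_contra! hcomm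
  have hPK : P ≤ K := fun x hx ↦ hKC fun h hh ↦
    (commutatorElement_eq_one_iff_mul_comm.mp (hcomm x hx h hh)).symm
  rcases hP.card_eq_or_dvd with hcard | hdvd
  · exact hPne (Subgroup.eq_bot_of_card_eq P hcard)
  · exact hK (hdvd.trans (Subgroup.card_dvd_of_le hPK))

theorem exists_isCyclic_quotient_and_commutatorElement_ne_one {K P : Subgroup G} [K.Normal]
    [Finite K] [Group.IsSolvable K] [Finite P] [IsMulCommutative P] (hP : IsPGroup p P)
    (hK : ¬ p ∣ Nat.card K) {x h : G} (hx : x ∈ P) (hh : h ∈ K) (hxh : ⁅x, h⁆ ≠ 1) :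
    ∃ B : Subgroup P, IsCyclic (P ⧸ B) ∧
      ∃ k ∈ K, k ∈ Subgroup.centralizer (B.map P.subtype) ∧ ∃ y : P, ⁅(y : G), k⁆ ≠ 1 := by
  let _ : MulDistribMulAction P K := .compHom K ((MulAut.conjNormal (H := K)).comp P.subtype)
  have smul_eq_iff (y : P) (k : K) : y • k = k ↔ ⁅(y : G), (k : G)⁆ = 1 := by
    rw [commutatorElement_def, mul_inv_eq_one]
    exact Subtype.ext_iff
  obtain ⟨B, hcyc, k, hkB, y, hyk⟩ := exists_isCyclic_quotient_and_smul_ne_of_smul_ne hP hK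
    (x := ⟨x, hx⟩) (h := ⟨h, hh⟩) ((smul_eq_iff _ _).not.mpr hxh)
  refine ⟨B, hcyc, k, k.2, ?_, y, (smul_eq_iff y k).not.mp hyk⟩
  rintro _ ⟨b, hb, rfl⟩
  exact commutatorElement_eq_one_iff_mul_comm.mp ((smul_eq_iff b k).mp (hkB b hb))

theorem isaacs_small_orbit_general [Finite G] [Group.IsSolvable G]
    (hOp : ∀ N : Subgroup G, N.Normal → IsPGroup p N → N = ⊥)
    {V : Type*} [AddCommGroup V] [DistribMulAction G V] [FaithfulSMul G V]
    (hV : ∀ v : V, p • v = 0) {P : Subgroup G} [IsMulCommutative P] (hP : IsPGroup p P)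
    (hPne : P ≠ ⊥) : ∃ v : V, Nat.card (MulAction.orbit P v) = p := by
  obtain ⟨K, hKn, hK, hKC⟩ := exists_normal_not_dvd_card_centralizer_le hOp
  obtain ⟨x, hx, h, hh, hxh⟩ := exists_commutatorElement_ne_one_of_centralizer_le hK hKC hP hPne
  obtain ⟨B, hcyc, k, hkK, hkB, y, hyk⟩ :=
    exists_isCyclic_quotient_and_commutatorElement_ne_one hP hK hx hh hxh
  have hcommK : ⁅(y : G), k⁆ ∈ K := K.mul_mem (hKn.conj_mem k hkK y) (K.inv_mem hkK)
  have hyB : (y : G) ∈ Subgroup.centralizer (B.map P.subtype) := by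
    rintro _ ⟨b, -, rfl⟩
    exact congrArg Subtype.val (mul_comm b y)
  obtain ⟨v, hvB, hyv⟩ := exists_forall_smul_eq_and_smul_ne ((hP.to_subgroup B).map P.subtype)
    hV hyB hkB hyk fun hdvd ↦ hK (hdvd.trans (K.orderOf_dvd_natCard hcommK))
  exact exists_natCard_orbit_eq_prime hP hV
    (fun b hb ↦ hvB b (Subgroup.mem_map_of_mem P.subtype hb)) hyv

end SmallOrbit

/-- Isaacs' lemma (Theorem 3.2 of the paper). Let `G` be a finite solvable group of
order divisible by `p` with `O_p(G) = 1`, and let `V` be a faithful completely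
reducible finite-dimensional `G`-module over a finite field of characteristic `p`.
If a Sylow `p`-subgroup `P` of `G` is abelian, then some `v ∈ V` lies in a `P`-orbit
of size exactly `p`. -/
theorem isaacs_small_orbit (p : ℕ) (hp : p.Prime) (G : Type*) [Group G] [Finite G]
    (hsolv : IsSolvable G) (hdvd : p ∣ Nat.card G)
    (hOp : ∀ N : Subgroup G, N.Normal → IsPGroup p N → N = ⊥)
    (F : Type*) [Field F] [Finite F] (hchar : CharP F p)
    (V : Type*) [AddCommGroup V] [Module F V] [FiniteDimensional F V]
    (ρ : Representation F G V) (hfaithful : Function.Injective ρ)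
    (hsemisimple : ∀ W : Submodule F V, (∀ g : G, ∀ w ∈ W, ρ g w ∈ W) →
      ∃ W' : Submodule F V, (∀ g : G, ∀ w ∈ W', ρ g w ∈ W') ∧ IsCompl W W')
    (P : Sylow p G) (hPab : ∀ a b : (P : Subgroup G), a * b = b * a) :
    ∃ v : V, Nat.card ↥(Set.range fun a : (P : Subgroup G) => ρ (a : G) v) = p := by
  have := Fact.mk hp
  have : Group.IsSolvable G := hsolv
  have : IsMulCommutative (P : Subgroup G) := ⟨⟨hPab⟩⟩
  let _ : DistribMulAction G V := .compHom V ρ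
  have : FaithfulSMul G V := ⟨fun h ↦ hfaithful (LinearMap.ext h)⟩
  have hV (v : V) : p • v = 0 := by rw [← Nat.cast_smul_eq_nsmul F, CharP.cast_eq_zero, zero_smul]
  exact isaacs_small_orbit_general hOp hV P.isPGroup' (P.ne_bot_of_dvd_card hdvd)
end
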